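/- arXiv:0902.1632 — 2 statements merged into one kernel-verified Lean document; each statement's English description precedes it below -/
import Mathlib

section
/- There exists a function g : ℝ → ℝ that is real-analytic on ℝ, odd (g(-z) = -g(z) for all z, so that in particular g(0) = g''(0) = g⁽⁴⁾(0) = 0), satisfies the fifth-order blow-up similarity ODE g(z)·g⁽⁵⁾(z) = -(1/5)·z·g'(z) for every z ∈ ℝ, and has the limits g(z) → 1 as z → -∞ and g(z) → -1 as z → +∞. -/
/-!
The profile is `g z = -H (l z) / c` with `l ^ 5 = c`, where `H` is an odd solution of
`H H⁽⁵⁾ = z H' / 5` with `H' 0 = 1` and `H → c > 0` at `+∞`. The work is to find such an `H`.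

Put `w = H'`, `u = w'''`, `K z = H z / z = ∫₀¹ w (s z) ds`, so that the equation reads
`5 K u' = w` and is regular at `0` as long as `K > 0`. The only free parameter is `β = -w''(0)`.
Since `w = (z K)'`, integration gives `5 u = z + z log K - ∫₀ᶻ log K`. Cutting the logarithm off
below `ε` makes the right-hand side (`Phi`) a contraction in a weighted sup norm. Its fixed point
`regU ε β` is Lipschitz in `β` and solves the true equation as long as `K > ε`.

*Shooting.* The quantity `E = w w'' - w' ^ 2 / 2` satisfies `E' = w u`. Therefore the conditions
`w, u, E > 0` (`ACond`) and `w, u < 0 < E` (`BCond`) are both preserved to the right. The sets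
`SetA`, `SetB` of parameters for which they are ever reached are open and disjoint, `0 ∈ SetA`,
and `1/2 ∈ SetB` because the solution for `β = 1/2` reaches height zero before `17/4`
(`not_isSol_half`). By connectedness some `β ∈ [0, 1/2]` lies in neither. When `H` first comes down
to a sufficiently small height `BCond` holds (`bCond_of_hit`), so for the critical `β` the height
stays positive and the solution is global (`exists_global`).

*Limit at infinity.* Put `Y = 5 u / z`, `C = H exp (-Y)` and `J = -β + (∫₀ᶻ H - z C) / 5`. Then
`C' = C Y / z` and `J' = C (exp Y - 1 - Y) / 5 ≥ 0`, while `J ≤ E`. If `J` became positive, `w ^ 2`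
would grow quadratically, which without reaching `ACond` is incompatible with `H > 0`. So `J ≤ 0`
(`J_nonpos`) and `J` converges. The integrability of `J'` then shows that `log C` converges
(`exists_limit_C`). From `J ≤ E` one bounds `w'` (`exists_W1_bound`), so `H` cannot oscillate too
fast, and if `H` did not approach `lim C`, `J` would gain a fixed amount infinitely often
(`exists_limit_H`).

*Analyticity.* The equation `K w'''' = w / 5` with `K⁽ʲ⁾ z = ∫₀¹ sʲ w⁽ʲ⁾ (s z) ds` gives, by the
Leibniz rule, a recursion from which `|w⁽ⁿ⁾| ≤ A Cⁿ⁻⁴ (n - 4)!` on compact sets follows by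
induction (`exists_bound`). No singular point has to be treated at the origin.
-/

open Filter

namespace ShockProfile
noncomputable section

/-! ### The integral equation and its regularisation -/

/-- `w'' z = -β + ∫₀ᶻ u`, where `u` stands for `w'''`. -/
def W2 (β : ℝ) (u : ℝ → ℝ) (z : ℝ) : ℝ := -β + ∫ s in (0:ℝ)..z, u s

/-- `w' z = ∫₀ᶻ w''`. -/
def W1 (β : ℝ) (u : ℝ → ℝ) (z : ℝ) : ℝ := ∫ s in (0:ℝ)..z, W2 β u s

/-- `w z = 1 + ∫₀ᶻ w'`, the derivative of the height `H`. -/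
def W (β : ℝ) (u : ℝ → ℝ) (z : ℝ) : ℝ := 1 + ∫ s in (0:ℝ)..z, W1 β u s

/-- The height `H z = ∫₀ᶻ w`. -/
def H (β : ℝ) (u : ℝ → ℝ) (z : ℝ) : ℝ := ∫ s in (0:ℝ)..z, W β u s

/-- `K z = ∫₀¹ w (s z) ds`, which is `H z / z` for `z ≠ 0` and `1` at `z = 0`. -/
def K (β : ℝ) (u : ℝ → ℝ) (z : ℝ) : ℝ := ∫ s in (0:ℝ)..1, W β u (s * z)

/-- The logarithm cut off below `ε`. -/
def logReg (ε x : ℝ) : ℝ := Real.log (max x ε)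

/-- Right-hand side of the integrated equation `5 u = z + z log K - ∫₀ᶻ log K`, with the
logarithm cut off at `ε`. -/
def Phi (ε β : ℝ) (u : ℝ → ℝ) (z : ℝ) : ℝ :=
  (1 / 5) * (z + z * logReg ε (K β u z) - ∫ s in (0:ℝ)..z, logReg ε (K β u s))

section basic
variable {β : ℝ} {u : ℝ → ℝ} (hu : Continuous u)
include hu

lemma hasDerivAt_W2 (z : ℝ) : HasDerivAt (W2 β u) (u z) z := by
  unfold W2
  exact (intervalIntegral.integral_hasDerivAt_right (hu.intervalIntegrable _ _)
    hu.aestronglyMeasurable.stronglyMeasurableAtFilter hu.continuousAt).const_add _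

lemma continuous_W2 : Continuous (W2 β u) :=
  continuous_iff_continuousAt.2 fun z => (hasDerivAt_W2 hu z).continuousAt

lemma hasDerivAt_W1 (z : ℝ) : HasDerivAt (W1 β u) (W2 β u z) z := by
  have h := continuous_W2 (β := β) hu
  exact intervalIntegral.integral_hasDerivAt_right (h.intervalIntegrable _ _)
    h.aestronglyMeasurable.stronglyMeasurableAtFilter h.continuousAt

lemma continuous_W1 : Continuous (W1 β u) :=
  continuous_iff_continuousAt.2 fun z => (hasDerivAt_W1 hu z).continuousAt

lemma hasDerivAt_W (z : ℝ) : HasDerivAt (W β u) (W1 β u z) z := by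
  have h := continuous_W1 (β := β) hu
  exact (intervalIntegral.integral_hasDerivAt_right (h.intervalIntegrable _ _)
    h.aestronglyMeasurable.stronglyMeasurableAtFilter h.continuousAt).const_add _

lemma continuous_W : Continuous (W β u) :=
  continuous_iff_continuousAt.2 fun z => (hasDerivAt_W hu z).continuousAt

lemma hasDerivAt_H (z : ℝ) : HasDerivAt (H β u) (W β u z) z := by
  have h := continuous_W (β := β) hu
  exact intervalIntegral.integral_hasDerivAt_right (h.intervalIntegrable _ _)
    h.aestronglyMeasurable.stronglyMeasurableAtFilter h.continuousAt

lemma continuous_H : Continuous (H β u) :=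
  continuous_iff_continuousAt.2 fun z => (hasDerivAt_H hu z).continuousAt

lemma continuous_K : Continuous (K β u) := by
  have h := continuous_W (β := β) hu
  unfold K
  exact intervalIntegral.continuous_parametric_intervalIntegral_of_continuous'
    (by fun_prop) _ _

omit hu in
lemma mul_K (z : ℝ) : z * K β u z = H β u z := by
  unfold K H
  simp

end basic

lemma logReg_lip {ε : ℝ} (hε : 0 < ε) (x y : ℝ) : |logReg ε x - logReg ε y| ≤ |x - y| / ε := by
  have key : ∀ a b : ℝ, ε ≤ a → ε ≤ b → Real.log a - Real.log b ≤ |a - b| / ε := by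
    intro a b ha hb
    have hb0 : 0 < b := by linarith
    have ha0 : 0 < a := by linarith
    rw [← Real.log_div ha0.ne' hb0.ne']
    have h1 : Real.log (a / b) ≤ a / b - 1 := Real.log_le_sub_one_of_pos (by positivity)
    have h2 : a / b - 1 = (a - b) / b := by field_simp
    have h3 : (a - b) / b ≤ |a - b| / ε := by
      calc (a - b) / b ≤ |a - b| / b := by gcongr; exact le_abs_self _
        _ ≤ _ := by gcongr
    linarith
  have hm : |max x ε - max y ε| ≤ |x - y| := abs_max_sub_max_le_abs x y ε
  have h1 := key (max x ε) (max y ε) (le_max_right _ _) (le_max_right _ _)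
  have h2 := key (max y ε) (max x ε) (le_max_right _ _) (le_max_right _ _)
  rw [abs_sub_comm] at h2
  have h3 : |max x ε - max y ε| / ε ≤ |x - y| / ε := by gcongr
  unfold logReg
  rw [abs_le]
  constructor <;> linarith

lemma continuous_logReg {ε : ℝ} (hε : 0 < ε) : Continuous (logReg ε) := by
  unfold logReg
  refine Continuous.log (by fun_prop) fun x => ?_
  have := le_max_right x ε
  linarith

/-- Integration gains a factor `1 / l` in the weight `exp (l * |z|)`. -/
lemma abs_integral_le {f : ℝ → ℝ} {l D T : ℝ} (hl : 0 < l)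
    (hD : 0 ≤ D) (hb : ∀ s, |s| ≤ T → |f s| ≤ D * Real.exp (l * |s|)) {z : ℝ} (hz : |z| ≤ T) :
    |∫ s in (0:ℝ)..z, f s| ≤ D / l * Real.exp (l * |z|) := by
  have pos : ∀ (f : ℝ → ℝ), (∀ s, |s| ≤ T → |f s| ≤ D * Real.exp (l * |s|)) →
      ∀ z, 0 ≤ z → |z| ≤ T → |∫ s in (0:ℝ)..z, f s| ≤ D / l * Real.exp (l * |z|) := by
    intro f hb z hz hzT
    have h1 : ‖∫ s in (0:ℝ)..z, f s‖ ≤ ∫ s in (0:ℝ)..z, D * Real.exp (l * s) := by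
      refine intervalIntegral.norm_integral_le_of_norm_le hz ?_
        (Continuous.intervalIntegrable (by fun_prop) _ _)
      refine Filter.Eventually.of_forall fun s hs => ?_
      have := hb s (by rw [abs_of_pos hs.1]; rw [abs_of_nonneg hz] at hzT; linarith [hs.2])
      rwa [abs_of_pos hs.1] at this
    have h2 : ∫ s in (0:ℝ)..z, D * Real.exp (l * s) = D / l * (Real.exp (l * z) - 1) := by
      rw [intervalIntegral.integral_eq_sub_of_hasDerivAt
        (f := fun s => D / l * Real.exp (l * s))]
      · simp; ring
      · intro s _
        have := ((((hasDerivAt_id' s).const_mul l).exp).const_mul (D / l))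
        have e : D / l * (Real.exp (l * s) * (l * 1)) = D * Real.exp (l * s) := by field_simp
        rwa [e] at this
      · exact Continuous.intervalIntegrable (by fun_prop) _ _
    rw [Real.norm_eq_abs, h2] at h1
    rw [abs_of_nonneg hz]
    have : 0 ≤ D / l := by positivity
    nlinarith
  rcases le_total 0 z with h | h
  · exact pos f hb z h hz
  · have h3 := pos (fun s => f (-s)) (fun s hs => by simpa using hb (-s) (by simpa using hs)) (-z)
      (by linarith) (by simpa using hz)
    rw [intervalIntegral.integral_comp_neg] at h3
    simp only [neg_neg, neg_zero, abs_neg] at h3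
    rwa [intervalIntegral.integral_symm, abs_neg] at h3

section lip
variable {β₁ β₂ : ℝ} {u₁ u₂ : ℝ → ℝ} (h₁ : Continuous u₁) (h₂ : Continuous u₂)
  {l D T : ℝ} (hl : 1 ≤ l) (hD : 0 ≤ D)
  (hb : ∀ s, |s| ≤ T → |u₁ s - u₂ s| ≤ D * Real.exp (l * |s|))
include h₁ h₂ hl hD hb

lemma W2_lip {z : ℝ} (hz : |z| ≤ T) :
    |W2 β₁ u₁ z - W2 β₂ u₂ z| ≤ (|β₁ - β₂| + D / l) * Real.exp (l * |z|) := by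
  have h := abs_integral_le (by linarith) hD hb hz
  rw [intervalIntegral.integral_sub (h₁.intervalIntegrable _ _) (h₂.intervalIntegrable _ _)] at h
  have he : 1 ≤ Real.exp (l * |z|) := Real.one_le_exp (by positivity)
  have : W2 β₁ u₁ z - W2 β₂ u₂ z =
      -(β₁ - β₂) + ((∫ s in (0:ℝ)..z, u₁ s) - ∫ s in (0:ℝ)..z, u₂ s) := by unfold W2; ring
  rw [this]
  calc _ ≤ |-(β₁ - β₂)| + _ := abs_add_le _ _
    _ ≤ |β₁ - β₂| + D / l * Real.exp (l * |z|) := by rw [abs_neg]; gcongr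
    _ ≤ _ := by nlinarith [abs_nonneg (β₁ - β₂)]

lemma W1_lip {z : ℝ} (hz : |z| ≤ T) :
    |W1 β₁ u₁ z - W1 β₂ u₂ z| ≤ (|β₁ - β₂| + D / l) / l * Real.exp (l * |z|) := by
  have h := abs_integral_le (f := fun s => W2 β₁ u₁ s - W2 β₂ u₂ s) (by linarith)
    (by positivity) (fun s hs => W2_lip h₁ h₂ hl hD hb hs) hz
  rwa [intervalIntegral.integral_sub ((continuous_W2 h₁).intervalIntegrable _ _)
    ((continuous_W2 h₂).intervalIntegrable _ _)] at h

lemma W_lip {z : ℝ} (hz : |z| ≤ T) :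
    |W β₁ u₁ z - W β₂ u₂ z| ≤ (|β₁ - β₂| + D / l) / l / l * Real.exp (l * |z|) := by
  have h := abs_integral_le (f := fun s => W1 β₁ u₁ s - W1 β₂ u₂ s) (by linarith)
    (by positivity) (fun s hs => W1_lip h₁ h₂ hl hD hb hs) hz
  rw [intervalIntegral.integral_sub ((continuous_W1 h₁).intervalIntegrable _ _)
    ((continuous_W1 h₂).intervalIntegrable _ _)] at h
  unfold W
  convert h using 2
  ring

lemma H_lip {z : ℝ} (hz : |z| ≤ T) :
    |H β₁ u₁ z - H β₂ u₂ z| ≤ (|β₁ - β₂| + D / l) / l / l / l * Real.exp (l * |z|) := by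
  have h := abs_integral_le (f := fun s => W β₁ u₁ s - W β₂ u₂ s) (by linarith)
    (by positivity) (fun s hs => W_lip h₁ h₂ hl hD hb hs) hz
  rwa [intervalIntegral.integral_sub ((continuous_W h₁).intervalIntegrable _ _)
    ((continuous_W h₂).intervalIntegrable _ _)] at h

lemma K_lip {z : ℝ} (hz : |z| ≤ T) :
    |K β₁ u₁ z - K β₂ u₂ z| ≤ (|β₁ - β₂| + D / l) / l / l * Real.exp (l * |z|) := by
  have c₁ := continuous_W (β := β₁) h₁
  have c₂ := continuous_W (β := β₂) h₂
  unfold K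
  rw [← intervalIntegral.integral_sub (Continuous.intervalIntegrable (by fun_prop) _ _)
    (Continuous.intervalIntegrable (by fun_prop) _ _)]
  have := intervalIntegral.norm_integral_le_of_norm_le_const (a := 0) (b := 1)
    (f := fun s => W β₁ u₁ (s * z) - W β₂ u₂ (s * z))
    (C := (|β₁ - β₂| + D / l) / l / l * Real.exp (l * |z|)) (by
      intro s hs
      rw [Set.uIoc_of_le zero_le_one] at hs
      have hsz : |s * z| ≤ |z| := by
        rw [abs_mul, abs_of_pos hs.1]
        nlinarith [hs.2, abs_nonneg z]
      refine (W_lip h₁ h₂ hl hD hb (hsz.trans hz)).trans ?_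
      gcongr)
  simpa using this

/-- `Phi` is a contraction with factor `1/2` in the weight `exp (l |z|)` once `l` is large
compared with `ε⁻¹`, and Lipschitz in `β`. -/
lemma Phi_lip {ε : ℝ} (hε : 0 < ε) (hlε : 4 ≤ 5 * ε * l ^ 3) {z : ℝ} (hz : |z| ≤ T) :
    |Phi ε β₁ u₁ z - Phi ε β₂ u₂ z| ≤ (|β₁ - β₂| + D) / 2 * Real.exp (l * |z|) := by
  set E := (|β₁ - β₂| + D / l) with hE
  have hl0 : 0 < l := by linarith
  have hE0 : 0 ≤ E := by positivity
  have hEle : E ≤ |β₁ - β₂| + D := by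
    have : D / l ≤ D := div_le_self hD hl
    linarith
  have c₁ : Continuous fun s => logReg ε (K β₁ u₁ s) :=
    (continuous_logReg hε).comp (continuous_K (β := β₁) h₁)
  have c₂ : Continuous fun s => logReg ε (K β₂ u₂ s) :=
    (continuous_logReg hε).comp (continuous_K (β := β₂) h₂)
  have hq : ∀ s, |s| ≤ T → |logReg ε (K β₁ u₁ s) - logReg ε (K β₂ u₂ s)|
      ≤ E / l / l / ε * Real.exp (l * |s|) := by
    intro s hs
    refine (logReg_lip hε _ _).trans ?_
    have := K_lip (β₁ := β₁) (β₂ := β₂) h₁ h₂ hl hD hb hs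
    calc _ ≤ (E / l / l * Real.exp (l * |s|)) / ε := by gcongr
      _ = _ := by ring
  have hA := abs_integral_le (f := fun s => logReg ε (K β₁ u₁ s) - logReg ε (K β₂ u₂ s)) hl0
    (by positivity) hq hz
  rw [intervalIntegral.integral_sub (c₁.intervalIntegrable _ _) (c₂.intervalIntegrable _ _)] at hA
  have hB : |z * logReg ε (K β₁ u₁ z) - z * logReg ε (K β₂ u₂ z)|
      ≤ E / l / l / ε / l * Real.exp (l * |z|) := by
    rw [← mul_sub, abs_mul]
    have h3 := H_lip (β₁ := β₁) (β₂ := β₂) h₁ h₂ hl hD hb hz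
    rw [← mul_K, ← mul_K, ← mul_sub, abs_mul] at h3
    calc _ ≤ |z| * (|K β₁ u₁ z - K β₂ u₂ z| / ε) := by gcongr; exact logReg_lip hε _ _
      _ = (|z| * |K β₁ u₁ z - K β₂ u₂ z|) / ε := by ring
      _ ≤ (E / l / l / l * Real.exp (l * |z|)) / ε := by gcongr
      _ = _ := by field_simp
  have hC : E / l / l / ε / l ≤ E * (5 / 4) := by
    have : E / l / l / ε / l = E / (ε * l ^ 3) := by field_simp
    rw [this, div_le_iff₀ (by positivity)]
    nlinarith
  have : Phi ε β₁ u₁ z - Phi ε β₂ u₂ z = (1 / 5) *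
      ((z * logReg ε (K β₁ u₁ z) - z * logReg ε (K β₂ u₂ z)) -
      ((∫ s in (0:ℝ)..z, logReg ε (K β₁ u₁ s)) - ∫ s in (0:ℝ)..z, logReg ε (K β₂ u₂ s))) := by
    unfold Phi; ring
  rw [this, abs_mul, abs_of_pos (by norm_num : (0:ℝ) < 1 / 5)]
  have h4 := abs_sub (z * logReg ε (K β₁ u₁ z) - z * logReg ε (K β₂ u₂ z))
    ((∫ s in (0:ℝ)..z, logReg ε (K β₁ u₁ s)) - ∫ s in (0:ℝ)..z, logReg ε (K β₂ u₂ s))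
  have he : 0 < Real.exp (l * |z|) := Real.exp_pos _
  have h5 : E / l / l / ε / l * Real.exp (l * |z|) ≤ E * (5 / 4) * Real.exp (l * |z|) := by gcongr
  have h6 : E * Real.exp (l * |z|) ≤ (|β₁ - β₂| + D) * Real.exp (l * |z|) := by gcongr
  linarith

end lip

/-- Fixed points of `Phi` are unique already on a bounded symmetric interval. -/
lemma Phi_unique {ε β : ℝ} {u₁ u₂ : ℝ → ℝ} (h₁ : Continuous u₁) (h₂ : Continuous u₂) (hε : 0 < ε)
    {T : ℝ} (e₁ : ∀ z, |z| ≤ T → u₁ z = Phi ε β u₁ z) (e₂ : ∀ z, |z| ≤ T → u₂ z = Phi ε β u₂ z)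
    {z : ℝ} (hz : |z| ≤ T) : u₁ z = u₂ z := by
  obtain ⟨l, hl, hlε⟩ : ∃ l : ℝ, 1 ≤ l ∧ 4 ≤ 5 * ε * l ^ 3 := by
    refine ⟨1 + 1 / ε, by simp; positivity, ?_⟩
    have : 0 < 1 / ε := by positivity
    have h1 : ε * (1 / ε) = 1 := by field_simp
    nlinarith [mul_pos hε this, pow_pos this 2, pow_pos this 3]
  obtain ⟨M, hM⟩ : ∃ M, ∀ s ∈ Set.Icc (-T) T, ‖u₁ s - u₂ s‖ ≤ M :=
    isCompact_Icc.exists_bound_of_continuousOn (by fun_prop)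
  have hM0 : 0 ≤ M := (norm_nonneg _).trans (hM z (abs_le.1 hz))
  have key : ∀ n : ℕ, ∀ s, |s| ≤ T → |u₁ s - u₂ s| ≤ M * (1 / 2) ^ n * Real.exp (l * |s|) := by
    intro n
    induction n with
    | zero =>
      intro s hs
      have h3 := hM s (abs_le.1 hs)
      have : 1 ≤ Real.exp (l * |s|) := Real.one_le_exp (by positivity)
      rw [Real.norm_eq_abs] at h3
      nlinarith
    | succ n ih =>
      intro s hs
      have h3 := Phi_lip (β₁ := β) (β₂ := β) h₁ h₂ hl (by positivity) ih hε hlε hs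
      rw [e₁ s hs, e₂ s hs]
      refine h3.trans (le_of_eq ?_)
      simp; ring
  have h4 : Tendsto (fun n : ℕ => M * (1 / 2 : ℝ) ^ n * Real.exp (l * |z|)) atTop (nhds 0) := by
    have := (tendsto_pow_atTop_nhds_zero_of_lt_one (r := (1 / 2 : ℝ)) (by norm_num)
      (by norm_num)).const_mul M |>.mul_const (Real.exp (l * |z|))
    simpa using this
  have h5 : |u₁ z - u₂ z| ≤ 0 := ge_of_tendsto' h4 fun n => key n z hz
  exact sub_eq_zero.1 (abs_eq_zero.1 (le_antisymm h5 (abs_nonneg _)))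

lemma continuous_Phi {ε β : ℝ} {u : ℝ → ℝ} (hu : Continuous u) (hε : 0 < ε) :
    Continuous (Phi ε β u) := by
  have c := (continuous_logReg hε).comp (continuous_K (β := β) hu)
  have : Continuous fun z => ∫ s in (0:ℝ)..z, logReg ε (K β u s) :=
    intervalIntegral.continuous_primitive (fun a b => c.intervalIntegrable _ _) _
  unfold Phi
  exact continuous_const.mul ((continuous_id.add (continuous_id.mul c)).sub this)

lemma Phi_zero {ε : ℝ} (hε1 : ε ≤ 1) (z : ℝ) : Phi ε 0 (fun _ => 0) z = z / 5 := by
  have h2 : W2 0 (fun _ => 0) = fun _ => 0 := by funext z; simp [W2]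
  have h1 : W1 0 (fun _ => 0) = fun _ => 0 := by funext z; simp [W1, h2]
  have h0 : W 0 (fun _ => 0) = fun _ => 1 := by funext z; simp [W, h1]
  have hk : K 0 (fun _ => 0) = fun _ => 1 := by funext z; simp [K, h0]
  simp [Phi, hk, logReg, max_eq_left hε1]; ring

open BoundedContinuousFunction in
/-- Existence of a global fixed point of `Phi`, by the contraction principle in the space of
functions `exp (l |z|) v` with `v` bounded and continuous, where `l = 1 / ε`. -/
lemma exists_reg {ε : ℝ} (hε : 0 < ε) (hε1 : ε ≤ 1) (β : ℝ) : ∃ u : ℝ → ℝ, Continuous u ∧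
    (∀ z, u z = Phi ε β u z) ∧ ∃ C, ∀ z, |u z| ≤ C * Real.exp (1 / ε * |z|) := by
  set l := 1 / ε with hl_def
  have hl : 1 ≤ l := by rw [hl_def, le_div_iff₀ hε]; linarith
  have hl0 : 0 < l := by linarith
  have hle : ε * l = 1 := by rw [hl_def]; field_simp
  have hlε : 4 ≤ 5 * ε * l ^ 3 := by
    have : 5 * ε * l ^ 3 = 5 * (ε * l) * l ^ 2 := by ring
    rw [this, hle]
    nlinarith
  -- the unweighted function attached to a bounded continuous one
  let U : (ℝ →ᵇ ℝ) → ℝ → ℝ := fun v z => Real.exp (l * |z|) * v z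
  have hU : ∀ v, Continuous (U v) := fun v => by
    have := v.continuous
    fun_prop
  have hexp : ∀ z : ℝ, Real.exp (-(l * |z|)) * Real.exp (l * |z|) = 1 := fun z => by
    rw [← Real.exp_add]; simp
  have hUb : ∀ v z, |U v z| ≤ ‖v‖ * Real.exp (l * |z|) := fun v z => by
    simp only [U]
    rw [abs_mul, abs_of_pos (Real.exp_pos _), mul_comm]
    gcongr
    exact v.norm_coe_le_norm z
  have hbd : ∀ v : ℝ →ᵇ ℝ, ∀ z, |Real.exp (-(l * |z|)) * Phi ε β (U v) z|
      ≤ (|β| + ‖v‖) / 2 + 1 := by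
    intro v z
    have h1 := Phi_lip (β₁ := β) (β₂ := 0) (u₂ := fun _ => 0) (hU v) continuous_const hl
      (norm_nonneg v) (T := |z|) (fun s _ => by simpa using hUb v s) hε hlε le_rfl
    rw [Phi_zero hε1, sub_zero] at h1
    have h2 : |z| ≤ Real.exp (l * |z|) := by
      have := Real.add_one_le_exp (l * |z|)
      nlinarith [abs_nonneg z]
    have h3 : |Phi ε β (U v) z| ≤ ((|β| + ‖v‖) / 2 + 1) * Real.exp (l * |z|) := by
      have h4 := abs_add_le (Phi ε β (U v) z - z / 5) (z / 5)
      have h5 : |z / 5| ≤ |z| := by rw [abs_div]; norm_num; linarith [abs_nonneg z]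
      rw [sub_add_cancel] at h4
      linarith
    rw [abs_mul, abs_of_pos (Real.exp_pos _)]
    calc _ ≤ Real.exp (-(l * |z|)) * (((|β| + ‖v‖) / 2 + 1) * Real.exp (l * |z|)) := by gcongr
      _ = ((|β| + ‖v‖) / 2 + 1) * (Real.exp (-(l * |z|)) * Real.exp (l * |z|)) := by ring
      _ = _ := by rw [hexp, mul_one]
  let F : (ℝ →ᵇ ℝ) → (ℝ →ᵇ ℝ) := fun v => BoundedContinuousFunction.ofNormedAddCommGroup
    (fun z => Real.exp (-(l * |z|)) * Phi ε β (U v) z)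
    (by have := continuous_Phi (β := β) (hU v) hε; fun_prop) _ (hbd v)
  have hF : ContractingWith (1 / 2) F := by
    refine ⟨by rw [← NNReal.coe_lt_coe]; norm_num, LipschitzWith.of_dist_le_mul fun v w => ?_⟩
    rw [BoundedContinuousFunction.dist_le (by positivity)]
    intro z
    have h1 := Phi_lip (β₁ := β) (β₂ := β) (hU v) (hU w) hl (D := dist v w) dist_nonneg (T := |z|)
      (fun s _ => by
        simp only [U]
        rw [← mul_sub, abs_mul, abs_of_pos (Real.exp_pos _), mul_comm]
        gcongr
        have := BoundedContinuousFunction.dist_coe_le_dist (f := v) (g := w) s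
        rwa [Real.dist_eq] at this) hε hlε le_rfl
    rw [sub_self, abs_zero, zero_add] at h1
    change |Real.exp (-(l * |z|)) * Phi ε β (U v) z - Real.exp (-(l * |z|)) * Phi ε β (U w) z| ≤ _
    rw [← mul_sub, abs_mul, abs_of_pos (Real.exp_pos _)]
    calc _ ≤ Real.exp (-(l * |z|)) * (dist v w / 2 * Real.exp (l * |z|)) := by gcongr
      _ = dist v w / 2 * (Real.exp (-(l * |z|)) * Real.exp (l * |z|)) := by ring
      _ = _ := by rw [hexp]; simp; ring
  have hfix : F (hF.fixedPoint F) = hF.fixedPoint F := hF.fixedPoint_isFixedPt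
  refine ⟨U (hF.fixedPoint F), hU _, fun z => ?_, ‖hF.fixedPoint F‖, hUb _⟩
  have h1 : Real.exp (-(l * |z|)) * Phi ε β (U (hF.fixedPoint F)) z = hF.fixedPoint F z := by
    conv_rhs => rw [← hfix]
    rfl
  change Real.exp (l * |z|) * hF.fixedPoint F z = _
  rw [← h1, ← mul_assoc, mul_comm (Real.exp (l * |z|)), hexp, one_mul]

/-- The solution `u` of the equation regularised at `ε`, for the parameter `β`. It is meaningful
for `0 < ε ≤ 1` and set to zero otherwise. -/
def regU (ε β : ℝ) : ℝ → ℝ :=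
  open Classical in
  if h : 0 < ε ∧ ε ≤ 1 then Classical.choose (exists_reg h.1 h.2 β) else fun _ => 0

section reg
variable {ε : ℝ} (hε : 0 < ε) (hε1 : ε ≤ 1)
include hε hε1

lemma regU_spec (β : ℝ) : Continuous (regU ε β) ∧
    (∀ z, regU ε β z = Phi ε β (regU ε β) z) ∧
    ∃ C, ∀ z, |regU ε β z| ≤ C * Real.exp (1 / ε * |z|) := by
  unfold regU
  rw [dif_pos ⟨hε, hε1⟩]
  exact Classical.choose_spec (exists_reg hε hε1 β)

lemma regU_lip (β₁ β₂ z : ℝ) :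
    |regU ε β₁ z - regU ε β₂ z| ≤ |β₁ - β₂| * Real.exp (1 / ε * |z|) := by
  obtain ⟨c₁, e₁, C₁, b₁⟩ := regU_spec hε hε1 β₁
  obtain ⟨c₂, e₂, C₂, b₂⟩ := regU_spec hε hε1 β₂
  set l := 1 / ε with hl_def
  have hl : 1 ≤ l := by rw [hl_def, le_div_iff₀ hε]; linarith
  have hle : ε * l = 1 := by rw [hl_def]; field_simp
  have hlε : 4 ≤ 5 * ε * l ^ 3 := by
    have : 5 * ε * l ^ 3 = 5 * (ε * l) * l ^ 2 := by ring
    rw [this, hle]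
    nlinarith
  have hC : 0 ≤ C₁ + C₂ := by
    have h1 := (abs_nonneg _).trans (b₁ 0)
    have h2 := (abs_nonneg _).trans (b₂ 0)
    simp at h1 h2
    linarith
  set d := |β₁ - β₂| with hd
  have hd0 : 0 ≤ d := abs_nonneg _
  have key : ∀ n : ℕ, ∀ s, |regU ε β₁ s - regU ε β₂ s|
      ≤ (d + (C₁ + C₂) * (1 / 2) ^ n) * Real.exp (l * |s|) := by
    intro n
    induction n with
    | zero =>
      intro s
      have h3 := abs_sub (regU ε β₁ s) (regU ε β₂ s)
      have := b₁ s
      have := b₂ s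
      have : 0 ≤ d * Real.exp (l * |s|) := by positivity
      simp only [pow_zero, mul_one]
      nlinarith
    | succ n ih =>
      intro s
      have h3 := Phi_lip (β₁ := β₁) (β₂ := β₂) c₁ c₂ hl (by positivity) (T := |s|)
        (fun t _ => ih t) hε hlε le_rfl
      rw [e₁ s, e₂ s]
      refine h3.trans (le_of_eq ?_)
      rw [← hd]; ring
  have h4 : Tendsto (fun n : ℕ => (d + (C₁ + C₂) * (1 / 2 : ℝ) ^ n) * Real.exp (l * |z|)) atTop
      (nhds (d * Real.exp (l * |z|))) := by
    have := (((tendsto_pow_atTop_nhds_zero_of_lt_one (r := (1 / 2 : ℝ)) (by norm_num)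
      (by norm_num)).const_mul (C₁ + C₂)).const_add d).mul_const (Real.exp (l * |z|))
    simpa using this
  exact ge_of_tendsto' h4 fun n => key n z

end reg

/-! ### Solutions of the profile equation -/

@[simp] lemma W2_zero (β : ℝ) (u : ℝ → ℝ) : W2 β u 0 = -β := by simp [W2]
@[simp] lemma W1_zero (β : ℝ) (u : ℝ → ℝ) : W1 β u 0 = 0 := by simp [W1]
@[simp] lemma W_zero (β : ℝ) (u : ℝ → ℝ) : W β u 0 = 1 := by simp [W]
@[simp] lemma H_zero (β : ℝ) (u : ℝ → ℝ) : H β u 0 = 0 := by simp [H]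
@[simp] lemma K_zero (β : ℝ) (u : ℝ → ℝ) : K β u 0 = 1 := by simp [K]

lemma hasDerivAt_K {β : ℝ} {u : ℝ → ℝ} (hu : Continuous u) {z : ℝ} (hz : z ≠ 0) :
    HasDerivAt (K β u) ((W β u z - K β u z) / z) z := by
  have h1 : HasDerivAt (fun x => H β u x / x) ((W β u z * z - H β u z * 1) / z ^ 2) z :=
    (hasDerivAt_H hu z).div (hasDerivAt_id' z) hz
  have h2 : K β u =ᶠ[nhds z] fun x => H β u x / x := by
    filter_upwards [isOpen_ne.mem_nhds hz] with x hx
    rw [← mul_K]; field_simp [show x ≠ 0 from hx]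
  have h3 := h1.congr_of_eventuallyEq h2
  refine h3.congr_deriv ?_
  rw [← mul_K]; field_simp

/-- `u` solves the profile equation on `[0, T]`: `u` is the third derivative of `W β u`, and
the fourth one is `W / (5 K)`. -/
structure IsSol (β : ℝ) (u : ℝ → ℝ) (T : ℝ) : Prop where
  cont : Continuous u
  zero : u 0 = 0
  Kpos : ∀ z, 0 ≤ z → z ≤ T → 0 < K β u z
  der : ∀ z, 0 ≤ z → z ≤ T → HasDerivAt u (W β u z / (5 * K β u z)) z

/-- Where the cut-off is inactive, the derivative of `Phi` is `w / (5 K)`, so a fixed point of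
`Phi` satisfies `5 K u' = w`. At `z = 0` the derivative of `log K` is not available
directly, so that case is treated separately. -/
lemma hasDerivAt_Phi {ε β : ℝ} {u : ℝ → ℝ} (hu : Continuous u) (hε : 0 < ε) {z : ℝ}
    (hz : ε < K β u z) : HasDerivAt (Phi ε β u) (W β u z / (5 * K β u z)) z := by
  have c : Continuous fun s => logReg ε (K β u s) :=
    (continuous_logReg hε).comp (continuous_K (β := β) hu)
  have hI : HasDerivAt (fun x => ∫ s in (0:ℝ)..x, logReg ε (K β u s)) (logReg ε (K β u z)) z :=
    intervalIntegral.integral_hasDerivAt_right (c.intervalIntegrable _ _)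
      c.aestronglyMeasurable.stronglyMeasurableAtFilter c.continuousAt
  have hk0 : 0 < K β u z := hε.trans hz
  have hM : HasDerivAt (fun x => x * logReg ε (K β u x))
      (logReg ε (K β u z) + (W β u z / K β u z - 1)) z := by
    by_cases h0 : z = 0
    · subst h0
      have : HasDerivAt (fun x => x * logReg ε (K β u x)) (logReg ε (K β u 0)) 0 := by
        rw [hasDerivAt_iff_tendsto_slope]
        have h1 : Tendsto (fun x => logReg ε (K β u x)) (nhdsWithin 0 {0}ᶜ)
            (nhds (logReg ε (K β u 0))) := c.continuousAt.tendsto.mono_left nhdsWithin_le_nhds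
        refine h1.congr' ?_
        filter_upwards [self_mem_nhdsWithin] with x hx
        have hx' : x ≠ 0 := hx
        simp [slope, hx']
      simpa using this
    · have hlog : HasDerivAt (fun x => logReg ε (K β u x))
          ((W β u z - K β u z) / z / K β u z) z := by
        refine ((hasDerivAt_K hu h0).log hk0.ne').congr_of_eventuallyEq ?_
        filter_upwards [(continuous_K hu).continuousAt.eventually (lt_mem_nhds hz)] with x hx
        simp [logReg, max_eq_left hx.le]
      have := (hasDerivAt_id' z).mul hlog
      refine this.congr_deriv ?_
      field_simp
  have := (((hasDerivAt_id' z).add hM).sub hI).const_mul (1 / 5)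
  refine this.congr_deriv ?_
  field_simp; ring

section reg
variable {ε : ℝ} (hε : 0 < ε) (hε1 : ε ≤ 1)
include hε hε1

lemma regU_cont (β : ℝ) : Continuous (regU ε β) := (regU_spec hε hε1 β).1

lemma regU_eq (β : ℝ) : Phi ε β (regU ε β) = regU ε β :=
  funext fun z => ((regU_spec hε hε1 β).2.1 z).symm

lemma regU_odd (β z : ℝ) : regU ε β (-z) = - regU ε β z := by
  obtain ⟨c, e, -⟩ := regU_spec hε hε1 β
  set u := regU ε β
  set v : ℝ → ℝ := fun z => - u (-z) with hv
  have hvc : Continuous v := by fun_prop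
  have hsymm : ∀ f : ℝ → ℝ, ∀ z, ∫ s in (0:ℝ)..z, f (-s) = - ∫ s in (0:ℝ)..(-z), f s := by
    intro f z
    rw [intervalIntegral.integral_comp_neg, neg_zero, intervalIntegral.integral_symm]
  have a2 : ∀ z, W2 β v z = W2 β u (-z) := fun z => by
    simp only [W2, hv]
    rw [intervalIntegral.integral_neg, hsymm u]; ring
  have a1 : ∀ z, W1 β v z = - W1 β u (-z) := fun z => by
    simp only [W1, a2]
    rw [hsymm]
  have a0 : ∀ z, W β v z = W β u (-z) := fun z => by
    simp only [W, a1]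
    rw [intervalIntegral.integral_neg, hsymm]; ring
  have ak : ∀ z, K β v z = K β u (-z) := fun z => by
    simp [K, a0]
  have ap : ∀ z, Phi ε β v z = - Phi ε β u (-z) := fun z => by
    simp only [Phi, ak]
    rw [hsymm (fun s => logReg ε (K β u s))]; ring
  have := Phi_unique hvc c hε (T := |z|) (fun x _ => by rw [ap, ← e]) (fun x _ => e x)
    (z := z) le_rfl
  simp only [hv] at this
  linarith

end reg

section odd
variable {β : ℝ} {u : ℝ → ℝ} (ho : ∀ z, u (-z) = - u z)
include ho

lemma W2_even (z : ℝ) : W2 β u (-z) = W2 β u z := by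
  have h : ∫ s in (0:ℝ)..(-z), u s = ∫ s in (0:ℝ)..z, u s := by
    rw [← neg_zero, ← intervalIntegral.integral_comp_neg, intervalIntegral.integral_symm]
    simp [ho]
  simp [W2, h]

lemma W1_odd (z : ℝ) : W1 β u (-z) = - W1 β u z := by
  unfold W1
  rw [← neg_zero, ← intervalIntegral.integral_comp_neg, intervalIntegral.integral_symm]
  simp [W2_even ho]

lemma W_even (z : ℝ) : W β u (-z) = W β u z := by
  have h : ∫ s in (0:ℝ)..(-z), W1 β u s = ∫ s in (0:ℝ)..z, W1 β u s := by
    rw [← neg_zero, ← intervalIntegral.integral_comp_neg, intervalIntegral.integral_symm]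
    simp [W1_odd ho]
  simp [W, h]

lemma H_odd (z : ℝ) : H β u (-z) = - H β u z := by
  unfold H
  rw [← neg_zero, ← intervalIntegral.integral_comp_neg, intervalIntegral.integral_symm]
  simp [W_even ho]

lemma K_even (z : ℝ) : K β u (-z) = K β u z := by
  simp [K, W_even ho]

lemma K_abs (z : ℝ) : K β u |z| = K β u z := by
  rcases abs_choice z with h | h <;> rw [h]
  exact K_even ho z

end odd

section congr
variable {β : ℝ} {u₁ u₂ : ℝ → ℝ} (h₁ : Continuous u₁) (h₂ : Continuous u₂) {T : ℝ}
  (hb : ∀ s, |s| ≤ T → u₁ s = u₂ s)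
include h₁ h₂ hb

lemma congr_all {z : ℝ} (hz : |z| ≤ T) : W2 β u₁ z = W2 β u₂ z ∧ W1 β u₁ z = W1 β u₂ z ∧
    W β u₁ z = W β u₂ z ∧ H β u₁ z = H β u₂ z ∧ K β u₁ z = K β u₂ z := by
  have hb' : ∀ s, |s| ≤ T → |u₁ s - u₂ s| ≤ 0 * Real.exp (1 * |s|) := fun s hs => by
    simp [hb s hs]
  have a2 := W2_lip (β₁ := β) (β₂ := β) h₁ h₂ le_rfl le_rfl hb' hz
  have a1 := W1_lip (β₁ := β) (β₂ := β) h₁ h₂ le_rfl le_rfl hb' hz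
  have a0 := W_lip (β₁ := β) (β₂ := β) h₁ h₂ le_rfl le_rfl hb' hz
  have ah := H_lip (β₁ := β) (β₂ := β) h₁ h₂ le_rfl le_rfl hb' hz
  have ak := K_lip (β₁ := β) (β₂ := β) h₁ h₂ le_rfl le_rfl hb' hz
  simp [sub_eq_zero] at a2 a1 a0 ah ak
  exact ⟨a2, a1, a0, ah, ak⟩

end congr

/-- As long as the cut-off `ε₁` is inactive, lowering it does not change the solution. -/
lemma regU_agree {ε₁ ε₂ β T : ℝ} (hε : 0 < ε₂) (h12 : ε₂ ≤ ε₁) (hε1 : ε₁ ≤ 1)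
    (hk : ∀ z, 0 ≤ z → z ≤ T → ε₁ < K β (regU ε₁ β) z) {z : ℝ} (hz : |z| ≤ T) :
    regU ε₂ β z = regU ε₁ β z := by
  obtain ⟨c₁, e₁, -⟩ := regU_spec (hε.trans_le h12) hε1 β
  obtain ⟨c₂, e₂, -⟩ := regU_spec hε (h12.trans hε1) β
  have ho := regU_odd (hε.trans_le h12) hε1 β
  refine Phi_unique c₂ c₁ hε (T := T) (fun x _ => e₂ x) (fun x hx => ?_) hz
  have hk' : ∀ s, |s| ≤ T → ε₁ < K β (regU ε₁ β) s := fun s hs => by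
    rw [← K_abs ho]; exact hk _ (abs_nonneg _) hs
  have hl : ∀ s, |s| ≤ T → logReg ε₁ (K β (regU ε₁ β) s) = logReg ε₂ (K β (regU ε₁ β) s) :=
    fun s hs => by
      have := hk' s hs
      simp [logReg, max_eq_left this.le, max_eq_left (h12.trans this.le)]
  nth_rewrite 1 [e₁ x]
  unfold Phi
  rw [hl x hx, intervalIntegral.integral_congr fun s hs => hl s ?_]
  refine le_trans ?_ hx
  rcases le_total 0 x with h | h
  · rw [Set.uIcc_of_le h] at hs
    rw [abs_of_nonneg hs.1, abs_of_nonneg h]; exact hs.2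
  · rw [Set.uIcc_of_ge h] at hs
    rw [abs_of_nonpos hs.2, abs_of_nonpos h]; linarith [hs.1]

lemma isSol_regU {ε β T : ℝ} (hε : 0 < ε) (hε1 : ε ≤ 1)
    (hk : ∀ z, 0 ≤ z → z ≤ T → ε < K β (regU ε β) z) : IsSol β (regU ε β) T where
  cont := regU_cont hε hε1 β
  zero := by
    have := regU_odd hε hε1 β 0
    simp at this; linarith
  Kpos := fun z h0 hT => hε.trans (hk z h0 hT)
  der := fun z h0 hT => by
    have := hasDerivAt_Phi (regU_cont hε hε1 β) hε (hk z h0 hT)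
    rwa [regU_eq hε hε1] at this

lemma IsSol.mono {β : ℝ} {u : ℝ → ℝ} {T S : ℝ} (h : IsSol β u T) (hS : S ≤ T) : IsSol β u S :=
  ⟨h.cont, h.zero, fun z a b => h.Kpos z a (b.trans hS), fun z a b => h.der z a (b.trans hS)⟩

/-! ### Monotonicity tools -/

lemma le_of_deriv_Ioo {f f' : ℝ → ℝ} {a b : ℝ} (hab : a ≤ b) (hc : ContinuousOn f (Set.Icc a b))
    (hd : ∀ x, a < x → x < b → HasDerivAt f (f' x) x)
    (hn : ∀ x, a < x → x < b → 0 ≤ f' x) : f a ≤ f b := by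
  have := monotoneOn_of_deriv_nonneg (convex_Icc a b) hc
    (fun x hx => by
      rw [interior_Icc] at hx
      exact (hd x hx.1 hx.2).differentiableAt.differentiableWithinAt)
    (fun x hx => by
      rw [interior_Icc] at hx
      rw [(hd x hx.1 hx.2).deriv]; exact hn x hx.1 hx.2)
  exact this (Set.left_mem_Icc.2 hab) (Set.right_mem_Icc.2 hab) hab

lemma le_of_deriv {f f' : ℝ → ℝ} {a b : ℝ} (hab : a ≤ b)
    (hd : ∀ x, a ≤ x → x ≤ b → HasDerivAt f (f' x) x)
    (hn : ∀ x, a ≤ x → x ≤ b → 0 ≤ f' x) : f a ≤ f b :=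
  le_of_deriv_Ioo hab (fun x hx => (hd x hx.1 hx.2).continuousAt.continuousWithinAt)
    (fun x h1 h2 => hd x h1.le h2.le) (fun x h1 h2 => hn x h1.le h2.le)

lemma lt_of_deriv {f f' : ℝ → ℝ} {a b : ℝ} (hab : a < b)
    (hd : ∀ x, a ≤ x → x ≤ b → HasDerivAt f (f' x) x)
    (hn : ∀ x, a < x → x < b → 0 < f' x) : f a < f b := by
  have := strictMonoOn_of_deriv_pos (convex_Icc a b)
    (fun x hx => (hd x hx.1 hx.2).continuousAt.continuousWithinAt)
    (fun x hx => by
      rw [interior_Icc] at hx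
      rw [(hd x hx.1.le hx.2.le).deriv]; exact hn x hx.1 hx.2)
  exact this (Set.left_mem_Icc.2 hab.le) (Set.right_mem_Icc.2 hab.le) hab

/-- First zero to the right of a point where a continuous function is positive. -/
lemma first_hit {f : ℝ → ℝ} (hf : Continuous f) {a b : ℝ} (hab : a ≤ b) (ha : 0 < f a)
    (hb : f b ≤ 0) : ∃ t, a < t ∧ t ≤ b ∧ f t = 0 ∧ ∀ s, a ≤ s → s < t → 0 < f s := by
  set S := {x | a ≤ x ∧ x ≤ b ∧ f x ≤ 0} with hS
  have hcl : IsClosed S :=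
    (isClosed_le continuous_const continuous_id).inter
      ((isClosed_le continuous_id continuous_const).inter (isClosed_le hf continuous_const))
  have hne : S.Nonempty := ⟨b, hab, le_rfl, hb⟩
  have hbdd : BddBelow S := ⟨a, fun x hx => hx.1⟩
  have hm : sInf S ∈ S := hcl.csInf_mem hne hbdd
  set t := sInf S
  have hlt : ∀ s, a ≤ s → s < t → 0 < f s := by
    intro s h1 h2
    by_contra h3
    exact absurd (csInf_le hbdd (show s ∈ S from ⟨h1, h2.le.trans hm.2.1, not_lt.1 h3⟩))
      (not_le.2 h2)
  have hat : a < t := by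
    rcases hm.1.lt_or_eq with h | h
    · exact h
    · have := hm.2.2
      rw [← h] at this; linarith
  refine ⟨t, hat, hm.2.1, le_antisymm hm.2.2 ?_, hlt⟩
  have h4 : Tendsto f (nhdsWithin t (Set.Iio t)) (nhds (f t)) :=
    hf.continuousAt.tendsto.mono_left nhdsWithin_le_nhds
  refine ge_of_tendsto h4 ?_
  filter_upwards [Ioo_mem_nhdsLT hat] with s hs
  exact (hlt s hs.1.le hs.2).le

/-- A function which is at least `f t` to the left of `t` has nonpositive derivative at `t`. -/
lemma deriv_nonpos_of_left {f : ℝ → ℝ} {f' a t : ℝ} (hat : a < t) (hd : HasDerivAt f f' t)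
    (h : ∀ s, a ≤ s → s < t → f t ≤ f s) : f' ≤ 0 := by
  have h1 := (hasDerivAt_iff_tendsto_slope.1 hd).mono_left
    (nhdsWithin_mono t (fun x (hx : x ∈ Set.Iio t) => (ne_of_lt hx : x ≠ t)))
  refine le_of_tendsto h1 ?_
  filter_upwards [Ioo_mem_nhdsLT hat] with s hs
  rw [slope_def_field]
  exact div_nonpos_of_nonneg_of_nonpos (by linarith [h s hs.1.le hs.2]) (by linarith [hs.2])

/-! ### The first integral and the early stage -/

/-- `∫₀ᶻ H`. -/
def IH (β : ℝ) (u : ℝ → ℝ) (z : ℝ) : ℝ := ∫ s in (0:ℝ)..z, H β u s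

/-- The quantity `E = w w'' - w' ^ 2 / 2`, whose derivative is `w u`. -/
def En (β : ℝ) (u : ℝ → ℝ) (z : ℝ) : ℝ := W β u z * W2 β u z - W1 β u z ^ 2 / 2

@[simp] lemma IH_zero (β : ℝ) (u : ℝ → ℝ) : IH β u 0 = 0 := by simp [IH]

section sol
variable {β : ℝ} {u : ℝ → ℝ} {T : ℝ}

lemma hasDerivAt_IH (hu : Continuous u) (z : ℝ) : HasDerivAt (IH β u) (H β u z) z := by
  have h := continuous_H (β := β) hu
  exact intervalIntegral.integral_hasDerivAt_right (h.intervalIntegrable _ _)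
    h.aestronglyMeasurable.stronglyMeasurableAtFilter h.continuousAt

lemma hasDerivAt_En (hu : Continuous u) (z : ℝ) : HasDerivAt (En β u) (W β u z * u z) z := by
  have := ((hasDerivAt_W (β := β) hu z).mul (hasDerivAt_W2 (β := β) hu z)).sub
    (((hasDerivAt_W1 (β := β) hu z).pow 2).div_const 2)
  refine this.congr_deriv ?_
  simp; ring

/-- The integrated form of `E' = w u`: since `H u' = z w / 5`, one has `w u = (H u)' - z H' /
5`. -/
lemma IsSol.En_eq (h : IsSol β u T) {z : ℝ} (h0 : 0 ≤ z) (hT : z ≤ T) :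
    En β u z = -β + IH β u z / 5 + H β u z * u z - z * H β u z / 5 := by
  have key : ∀ x, 0 ≤ x → x ≤ z → HasDerivAt (fun x => En β u x -
      (IH β u x / 5 + H β u x * u x - x * H β u x / 5)) 0 x := by
    intro x hx0 hx
    have hk := h.Kpos x hx0 (hx.trans hT)
    have := (hasDerivAt_En (β := β) h.cont x).sub
      ((((hasDerivAt_IH (β := β) h.cont x).div_const 5).add
      ((hasDerivAt_H (β := β) h.cont x).mul (h.der x hx0 (hx.trans hT)))).sub
      (((hasDerivAt_id' x).mul (hasDerivAt_H (β := β) h.cont x)).div_const 5))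
    refine this.congr_deriv ?_
    rw [← mul_K x]
    field_simp
    ring
  have h1 := le_of_deriv h0 key (fun _ _ _ => le_rfl)
  have h2 := le_of_deriv (f := fun x => -(En β u x -
      (IH β u x / 5 + H β u x * u x - x * H β u x / 5))) h0
      (fun x a b => (key x a b).neg) (fun _ _ _ => by simp)
  simp [En, h.zero] at h1 h2 ⊢
  linarith

lemma IsSol.H_nonneg (h : IsSol β u T) {z : ℝ} (h0 : 0 ≤ z) (hT : z ≤ T) : 0 ≤ H β u z := by
  rw [← mul_K]; exact mul_nonneg h0 (h.Kpos z h0 hT).le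

lemma IsSol.H_pos (h : IsSol β u T) {z : ℝ} (h0 : 0 < z) (hT : z ≤ T) : 0 < H β u z := by
  rw [← mul_K]; exact mul_pos h0 (h.Kpos z h0.le hT)

lemma IsSol.IH_mono (h : IsSol β u T) {y z : ℝ} (h0 : 0 ≤ y) (hyz : y ≤ z) (hT : z ≤ T) :
    IH β u y ≤ IH β u z :=
  le_of_deriv hyz (fun x _ _ => hasDerivAt_IH h.cont x)
    (fun _ a b => h.H_nonneg (h0.trans a) (b.trans hT))

section early
variable (hu : Continuous u) {z : ℝ} (hp : ∀ s, 0 ≤ s → s ≤ z → 0 ≤ u s)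
include hu hp

lemma W2_ge {s : ℝ} (h0 : 0 ≤ s) (hs : s ≤ z) : -β ≤ W2 β u s := by
  have := le_of_deriv h0 (fun x _ _ => hasDerivAt_W2 (β := β) hu x)
    (fun x a b => hp x a (b.trans hs))
  simpa using this

lemma W1_ge {s : ℝ} (h0 : 0 ≤ s) (hs : s ≤ z) : -β * s ≤ W1 β u s := by
  have := le_of_deriv (f := fun x => W1 β u x - (-β) * x) h0
    (fun x _ _ => (hasDerivAt_W1 (β := β) hu x).sub ((hasDerivAt_id' x).const_mul (-β)))
    (fun x a b => by have := W2_ge (β := β) hu hp a (b.trans hs); simp; linarith)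
  simp at this ⊢
  linarith

lemma W_ge {s : ℝ} (h0 : 0 ≤ s) (hs : s ≤ z) : 1 - β * s ^ 2 / 2 ≤ W β u s := by
  have := le_of_deriv (f := fun x => W β u x - (-β / 2) * x ^ 2)
    (f' := fun x => W1 β u x - (-β) * x) h0
    (fun x _ _ => ((hasDerivAt_W (β := β) hu x).sub (((hasDerivAt_id' x).pow 2).const_mul
      (-β / 2))).congr_deriv (by simp; ring))
    (fun x a b => by have := W1_ge (β := β) hu hp a (b.trans hs); linarith)
  simp at this ⊢
  linarith

lemma H_ge {s : ℝ} (h0 : 0 ≤ s) (hs : s ≤ z) : s - β * s ^ 3 / 6 ≤ H β u s := by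
  have := le_of_deriv (f := fun x => H β u x - (x + (-β / 6) * x ^ 3))
    (f' := fun x => W β u x - (1 - β * x ^ 2 / 2)) h0
    (fun x _ _ => ((hasDerivAt_H (β := β) hu x).sub ((hasDerivAt_id' x).add
      (((hasDerivAt_id' x).pow 3).const_mul (-β / 6)))).congr_deriv (by simp; ring))
    (fun x a b => by have := W_ge (β := β) hu hp a (b.trans hs); linarith)
  simp at this ⊢
  linarith

lemma IH_ge {s : ℝ} (h0 : 0 ≤ s) (hs : s ≤ z) : s ^ 2 / 2 - β * s ^ 4 / 24 ≤ IH β u s := by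
  have := le_of_deriv (f := fun x => IH β u x - ((1 / 2) * x ^ 2 + (-β / 24) * x ^ 4))
    (f' := fun x => H β u x - (x - β * x ^ 3 / 6)) h0
    (fun x _ _ => ((hasDerivAt_IH (β := β) hu x).sub ((((hasDerivAt_id' x).pow 2).const_mul
      (1 / 2)).add (((hasDerivAt_id' x).pow 4).const_mul (-β / 24)))).congr_deriv
      (by simp; ring))
    (fun x a b => by have := H_ge (β := β) hu hp a (b.trans hs); linarith)
  simp at this ⊢
  linarith

lemma K_ge {s : ℝ} (h0 : 0 ≤ s) (hs : s ≤ z) : 1 - β * s ^ 2 / 6 ≤ K β u s := by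
  rcases h0.eq_or_lt with rfl | h
  · simp
  · have h1 := H_ge (β := β) hu hp h0 hs
    rw [← mul_K] at h1
    have : s * (1 - β * s ^ 2 / 6) ≤ s * K β u s := by linarith
    exact le_of_mul_le_mul_left this h

/-- While `u ≥ 0`, `w'` is convex with `w' 0 = 0`, so once `w` has exceeded `1` it keeps
increasing and cannot come back to `w z ≤ 0`. -/
lemma W_le_one (hw : W β u z ≤ 0) {s : ℝ} (h0 : 0 ≤ s) (hs : s ≤ z) : W β u s ≤ 1 := by
  by_contra! hcon
  obtain ⟨s1, hs10, hs1, h1⟩ : ∃ x, 0 ≤ x ∧ x ≤ s ∧ 0 < W1 β u x := by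
    by_contra! hc
    have := le_of_deriv (f := fun x => - W β u x) h0
      (fun x _ _ => (hasDerivAt_W (β := β) hu x).neg) (fun x a b => by have := hc x a b; linarith)
    simp at this; linarith
  obtain ⟨s2, hs20, hs2, h2⟩ : ∃ x, 0 ≤ x ∧ x ≤ s1 ∧ 0 < W2 β u x := by
    by_contra! hc
    have := le_of_deriv (f := fun x => - W1 β u x) hs10
      (fun x _ _ => (hasDerivAt_W1 (β := β) hu x).neg) (fun x a b => by have := hc x a b; linarith)
    simp at this; linarith
  have m2 : ∀ x, s2 ≤ x → x ≤ z → 0 < W2 β u x := fun x a b => h2.trans_le <|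
    le_of_deriv a (fun x _ _ => hasDerivAt_W2 (β := β) hu x)
      (fun y c d => hp y (hs20.trans c) (d.trans b))
  have m1 : ∀ x, s1 ≤ x → x ≤ z → 0 < W1 β u x := fun x a b => h1.trans_le <|
    le_of_deriv a (fun x _ _ => hasDerivAt_W1 (β := β) hu x)
      (fun y c d => (m2 y (hs2.trans c) (d.trans b)).le)
  have := le_of_deriv hs (fun x _ _ => hasDerivAt_W (β := β) hu x)
      (fun y c d => (m1 y (hs1.trans c) d).le)
  linarith

end early

lemma H_le_of_W_le (hu : Continuous u) {z : ℝ} (h0 : 0 ≤ z)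
    (hw : ∀ s, 0 ≤ s → s ≤ z → W β u s ≤ 1) : H β u z ≤ z := by
  have := le_of_deriv (f := fun x => x - H β u x) h0
    (fun x _ _ => (hasDerivAt_id' x).sub (hasDerivAt_H (β := β) hu x))
    (fun x a b => by have := hw x a b; linarith)
  simp at this; exact this

lemma K_le_of_W_le (hu : Continuous u) {z : ℝ} (h0 : 0 ≤ z)
    (hw : ∀ s, 0 ≤ s → s ≤ z → W β u s ≤ 1) : K β u z ≤ 1 := by
  rcases h0.eq_or_lt with rfl | h
  · simp
  · have h1 := H_le_of_W_le hu h0 hw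
    rw [← mul_K] at h1
    exact le_of_mul_le_mul_left (by linarith) h

/-- Immediately to the right of `0` both `w` and `u` are positive, because `u 0 = 0` and `u' 0 =
1/5`. -/
lemma IsSol.exists_start (h : IsSol β u T) (hT : 0 < T) : ∃ δ, 0 < δ ∧ δ ≤ T ∧
    (∀ s, 0 ≤ s → s ≤ δ → 0 < W β u s) ∧ (∀ s, 0 < s → s ≤ δ → 0 < u s) := by
  have h1 : ∀ᶠ x in nhds (0:ℝ), 0 < W β u x :=
    (continuous_W h.cont).continuousAt.eventually (lt_mem_nhds (by simp))
  obtain ⟨r, hr, hb⟩ := Metric.eventually_nhds_iff.1 h1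
  have hW : ∀ s, 0 ≤ s → s ≤ min (r / 2) T → 0 < W β u s := fun s a b => by
    refine hb ?_
    rw [Real.dist_eq, sub_zero, abs_of_nonneg a]
    have := b.trans (min_le_left _ _); linarith
  refine ⟨min (r / 2) T, by positivity, min_le_right _ _, hW, fun s a b => ?_⟩
  have hsT := b.trans (min_le_right _ _)
  have := lt_of_deriv a (fun x c d => h.der x c (d.trans hsT)) (fun x c d => by
    have := hW x c.le (d.le.trans b)
    have := h.Kpos x c.le (d.le.trans hsT)
    positivity)
  rwa [h.zero] at this

/-- If `u` becomes negative, it has a first positive zero `t`. There `u' t ≤ 0`, that is `w t ≤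
0`. -/
lemma IsSol.exists_z4 (h : IsSol β u T) {b : ℝ} (hb0 : 0 < b) (hbT : b ≤ T) (hb : u b < 0) :
    ∃ t, 0 < t ∧ t ≤ b ∧ u t = 0 ∧ W β u t ≤ 0 ∧ ∀ s, 0 ≤ s → s ≤ t → 0 ≤ u s := by
  obtain ⟨δ, hδ, hδb, -, hu⟩ := (h.mono hbT).exists_start hb0
  obtain ⟨t, h1, h2, h3, h4⟩ := first_hit h.cont hδb (hu δ hδ le_rfl) hb.le
  refine ⟨t, hδ.trans h1, h2, h3, ?_, fun s a b => ?_⟩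
  · have := deriv_nonpos_of_left h1 (h.der t (hδ.trans h1).le (h2.trans hbT))
      (fun s a b => by rw [h3]; exact (h4 s a b).le)
    have hk := h.Kpos t (hδ.trans h1).le (h2.trans hbT)
    by_contra! hc
    have : 0 < W β u t / (5 * K β u t) := by positivity
    linarith
  · rcases a.eq_or_lt with rfl | a
    · rw [h.zero]
    rcases le_total s δ with hs | hs
    · exact (hu s a hs).le
    · rcases b.eq_or_lt with rfl | b
      · rw [h3]
      · exact (h4 s hs b).le

section beta
variable (hβ : β ≤ 1 / 2)
include hβ

/-- For `β ≤ 1/2` one has `w ≥ 1 - s ^ 2 / 4` as long as `u ≥ 0`, so `w` is positive on `[0,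
2)`. -/
lemma two_le_of_W_nonpos (hu : Continuous u) {t : ℝ} (ht : 0 < t)
    (hp : ∀ s, 0 ≤ s → s ≤ t → 0 ≤ u s) (hw : W β u t ≤ 0) : 2 ≤ t := by
  have := W_ge (β := β) hu hp ht.le le_rfl
  nlinarith [sq_nonneg t]

lemma IsSol.u_nonneg_early (h : IsSol β u T) {s : ℝ} (h0 : 0 ≤ s) (hT : s ≤ T) (h2 : s ≤ 2) :
    0 ≤ u s := by
  by_contra! hc
  rcases h0.eq_or_lt with rfl | h0
  · rw [h.zero] at hc; exact lt_irrefl _ hc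
  obtain ⟨t, a, b, c, d, e⟩ := h.exists_z4 h0 hT hc
  have := two_le_of_W_nonpos hβ h.cont a e d
  have : t = s := by linarith
  subst this
  linarith

/-- At the first zero `t` of `u` the integrated equation and `K ≤ 1` give `log (K t) ≤ -1`,
hence `K t ≤ 0.375`. Together with `K ≥ 1 - t ^ 2 / 12` this forces `t ≥ 2.738`, and the
lower bound for `H` integrates to `2.57`. What matters is that this exceeds `5 β`. -/
lemma IsSol.IH_z4 (h : IsSol β u T) {t : ℝ} (ht : 0 < t) (htT : t ≤ T)
    (hp : ∀ s, 0 ≤ s → s ≤ t → 0 ≤ u s) (hut : u t = 0) (hw : W β u t ≤ 0) :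
    257 / 100 ≤ IH β u t := by
  have hk1 : ∀ s, 0 ≤ s → s ≤ t → K β u s ≤ 1 := fun s a b =>
    K_le_of_W_le h.cont a fun x c d => W_le_one h.cont hp hw c (d.trans b)
  have hK := continuous_K (β := β) h.cont
  have hcu := h.cont
  have hmono := le_of_deriv_Ioo (f := fun x => 5 * u x - x * (1 + Real.log (K β u x)))
    (f' := fun x => - Real.log (K β u x)) ht.le
    (by
      refine ContinuousOn.sub (by fun_prop) (continuousOn_id.mul (continuousOn_const.add ?_))
      exact ContinuousOn.log hK.continuousOn fun x hx => (h.Kpos x hx.1 (hx.2.trans htT)).ne')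
    (fun x a b => by
      have hk := h.Kpos x a.le (b.le.trans htT)
      have := ((h.der x a.le (b.le.trans htT)).const_mul 5).sub ((hasDerivAt_id' x).mul
        (((hasDerivAt_K (β := β) h.cont a.ne').log hk.ne').const_add 1))
      refine this.congr_deriv ?_
      field_simp
      ring)
    (fun x a b => by
      have := Real.log_nonpos (h.Kpos x a.le (b.le.trans htT)).le (hk1 x a.le b.le)
      linarith)
  simp [hut, h.zero] at hmono
  have hl : Real.log (K β u t) ≤ -1 := by nlinarith
  have hkt := h.Kpos t ht.le htT
  have h3 : K β u t ≤ 0.375 := by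
    have := (Real.log_le_iff_le_exp hkt).1 hl
    have := Real.exp_neg_one_lt_d9
    linarith
  have h4 := K_ge (β := β) h.cont hp ht.le le_rfl
  have h5 : 7.5 ≤ t ^ 2 := by nlinarith [sq_nonneg t]
  have h6 : 2.738 ≤ t := by nlinarith
  have h7 := IH_ge (β := β) h.cont hp (s := 2.738) (by norm_num) h6
  have h8 := h.IH_mono (by norm_num) h6 htT
  norm_num at h7 ⊢
  linarith

end beta
end sol

/-! ### Approaching height zero -/

/-- A height so small that a solution coming down to it at some `t ≤ T` satisfies `BCond` there. -/
def eta (T : ℝ) : ℝ := (1 / (100 * (T + 1))) ^ 2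

/-- A state leading down to height zero: `w` and `u` stay negative from here on. -/
structure BCond (β : ℝ) (u : ℝ → ℝ) (t : ℝ) : Prop where
  W_neg : W β u t < 0
  u_neg : u t < 0
  En_pos : 0 < En β u t

/-- A state leading to growth: `w` and `u` stay positive from here on. -/
structure ACond (β : ℝ) (u : ℝ → ℝ) (t : ℝ) : Prop where
  W_pos : 0 < W β u t
  u_pos : 0 < u t
  En_pos : 0 < En β u t

section sol
variable {β : ℝ} {u : ℝ → ℝ} {T : ℝ}

lemma eta_pos (hT : 2 ≤ T) : 0 < eta T := by unfold eta; positivity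

lemma eta_le (hT : 2 ≤ T) : eta T ≤ 1 / 10 := by
  unfold eta
  have : 1 / (100 * (T + 1)) ≤ 1 / 100 := by
    apply one_div_le_one_div_of_le <;> linarith
  have h0 : 0 < 1 / (100 * (T + 1)) := by positivity
  nlinarith

/-- The integrated equation expressed through `log H` instead of `log K`. -/
lemma IsSol.hasDerivAt_log (h : IsSol β u T) {x : ℝ} (h0 : 0 < x) (hT : x ≤ T) :
    HasDerivAt (fun x => 5 * u x - x * Real.log (H β u x)) (- Real.log (H β u x)) x := by
  have hk := h.Kpos x h0.le hT
  have := ((h.der x h0.le hT).const_mul 5).sub ((hasDerivAt_id' x).mul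
    ((hasDerivAt_H (β := β) h.cont x).log (h.H_pos h0 hT).ne'))
  refine this.congr_deriv ?_
  rw [← mul_K x]
  field_simp
  ring

variable (hβ : β ≤ 1 / 2)
include hβ

lemma IsSol.H_two (h : IsSol β u T) (hT : 2 ≤ T) : 4 / 3 ≤ H β u 2 := by
  have := H_ge (β := β) h.cont (z := 2)
    (fun s a b => h.u_nonneg_early hβ a (b.trans hT) b) (by norm_num) le_rfl
  norm_num at this
  linarith

lemma IsSol.K_early (h : IsSol β u T) {s : ℝ} (h0 : 0 ≤ s) (hs : s ≤ 2) (hT : s ≤ T) :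
    2 / 3 ≤ K β u s := by
  have := K_ge (β := β) h.cont (z := s)
    (fun x a b => h.u_nonneg_early hβ a (b.trans hT) (b.trans hs)) h0 le_rfl
  have : s ^ 2 ≤ 4 := by nlinarith
  nlinarith [sq_nonneg s]

/-- When the height first comes down to `eta T`, at a point `t ≤ T`, the condition `BCond`
holds. The integrated equation makes `u t` negative, with `5 u ≥ t log (eta T) - 2 - ∫H`.
Thus in `E = -β + ∫H / 5 + H u - t H / 5` the small factor `H = eta T` makes the last two
terms negligible, and `E > 0` because `∫H` is at least `2.57`. As `H' ≤ 0` at `t` and `E >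
0` excludes `w t = 0`, also `w t < 0`. -/
lemma IsSol.bCond_of_hit {t : ℝ} (h : IsSol β u t) (ht : 2 ≤ t) (htT : t ≤ T)
    (hη : ∀ s, 2 ≤ s → s ≤ t → eta T ≤ H β u s) (hηt : H β u t = eta T) : BCond β u t := by
  have hT : 2 ≤ T := ht.trans htT
  have hη0 := eta_pos hT
  have hη1 := eta_le hT
  have hH2 := h.H_two hβ ht
  have ht2 : 2 < t := by
    rcases ht.eq_or_lt with rfl | h'
    · linarith
    · exact h'
  have ht0 : 0 < t := by linarith
  have hcu := h.cont
  have hWt : W β u t ≤ 0 := deriv_nonpos_of_left ht2 (hasDerivAt_H h.cont t)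
    (fun s a b => by rw [hηt]; exact hη s a b.le)
  have hW1 : ∀ s, 0 ≤ s → s ≤ 2 → W β u s ≤ 1 := by
    intro s a b
    by_cases hc : ∃ b, 0 < b ∧ b ≤ t ∧ u b < 0
    · obtain ⟨b', hb0, hbt, hb⟩ := hc
      obtain ⟨z4, h1, -, -, h4, h5⟩ := h.exists_z4 hb0 hbt hb
      have := two_le_of_W_nonpos hβ h.cont h1 h5 h4
      exact W_le_one h.cont h5 h4 a (by linarith)
    · push Not at hc
      refine W_le_one h.cont (z := t) (fun x c d => ?_) hWt a (by linarith)
      rcases c.eq_or_lt with rfl | c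
      · rw [h.zero]
      · exact hc x c d
  have hu2 : 5 * u 2 ≤ 3 := by
    have := le_of_deriv (f := fun x => (3 / 2) * x - 5 * u x) (a := 0) (b := 2) (by norm_num)
      (fun x a b => ((hasDerivAt_id' x).const_mul (3 / 2)).sub
        ((h.der x a (b.trans ht)).const_mul 5))
      (fun x a b => by
        have hk := h.K_early hβ a b (b.trans ht)
        have hw := hW1 x a b
        have : 5 * (W β u x / (5 * K β u x)) = W β u x / K β u x := by field_simp
        have h3 : W β u x / K β u x ≤ 3 / 2 := by
          rw [div_le_iff₀ (by linarith)]; linarith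
        linarith)
    simp [h.zero] at this
    linarith
  have hHs : H β u 2 ≤ 2 := H_le_of_W_le h.cont (by norm_num) hW1
  have hu2' : 0 ≤ u 2 := h.u_nonneg_early hβ (by norm_num) ht le_rfl
  -- `5 u - x log H + x log (eta T)` is nonincreasing on `[2, t]`, because `H ≥ eta T` there
  have hut : u t < 0 := by
    have := le_of_deriv (f := fun x => -((5 * u x - x * Real.log (H β u x))
        + x * Real.log (eta T))) ht
      (fun x a b => ((h.hasDerivAt_log (by linarith) b).add
        ((hasDerivAt_id' x).mul_const (Real.log (eta T)))).neg)
      (fun x a b => by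
        have := Real.log_le_log hη0 (hη x a b)
        linarith)
    rw [hηt] at this
    have hl : Real.log (H β u 2) - Real.log (eta T) ≥ 2 := by
      rw [← Real.log_div (by linarith) hη0.ne']
      rw [ge_iff_le, Real.le_log_iff_exp_le (by positivity), le_div_iff₀ hη0]
      have h3 : Real.exp 2 = Real.exp 1 * Real.exp 1 := by rw [← Real.exp_add]; norm_num
      have := Real.exp_one_lt_d9
      have := Real.exp_pos 1
      rw [h3]
      nlinarith
    nlinarith
  obtain ⟨z4, h1, h2, h3, h4, h5⟩ := h.exists_z4 ht0 le_rfl hut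
  have hI : 257 / 100 ≤ IH β u t :=
    (h.IH_z4 hβ h1 h2 h5 h3 h4).trans (h.IH_mono h1.le h2 le_rfl)
  have hlow : t * Real.log (eta T) - 2 - IH β u t ≤ 5 * u t := by
    have := le_of_deriv (f := fun x => (5 * u x - x * Real.log (H β u x)) + IH β u x) ht
      (fun x a b => (h.hasDerivAt_log (by linarith) b).add (hasDerivAt_IH h.cont x))
      (fun x a b => by
        have := Real.log_le_sub_one_of_pos (h.H_pos (by linarith) b)
        linarith)
    rw [hηt] at this
    have h6 : Real.log (H β u 2) ≤ 1 := by
      have := Real.log_le_sub_one_of_pos (h.H_pos (by norm_num) ht)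
      linarith
    have h7 := h.IH_mono le_rfl (z := 2) (by norm_num) ht
    simp at h7
    linarith
  have hE := h.En_eq ht0.le le_rfl
  rw [hηt] at hE
  have hEpos : 0 < En β u t := by
    set ρ := 1 / (100 * (T + 1)) with hρ
    have hρ0 : 0 < ρ := by positivity
    have hρT : ρ * T + ρ = 1 / 100 := by rw [hρ]; field_simp
    have hρ1 : ρ ≤ 1 / 300 := by nlinarith
    have heta : eta T = ρ ^ 2 := rfl
    have hll : 2 * (1 - 1 / ρ) ≤ Real.log (eta T) := by
      rw [heta, Real.log_pow]
      have := Real.one_sub_inv_le_log_of_pos hρ0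
      push_cast
      rw [one_div]; linarith
    have hel : -2 * ρ ≤ eta T * Real.log (eta T) := by
      have h8 : eta T * (2 * (1 - 1 / ρ)) ≤ eta T * Real.log (eta T) := by gcongr
      have h9 : eta T * (2 * (1 - 1 / ρ)) = 2 * ρ ^ 2 - 2 * ρ := by rw [heta]; field_simp
      nlinarith
    have h10 : eta T * (t * Real.log (eta T) - 2 - IH β u t) ≤ eta T * (5 * u t) := by gcongr
    have h11 : t * (-2 * ρ) ≤ t * (eta T * Real.log (eta T)) := by gcongr
    have h12 : t * ρ ≤ T * ρ := by gcongr
    have h13 : eta T ≤ ρ / 300 := by rw [heta]; nlinarith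
    have h14 : eta T * t ≤ 1 / 100 := by nlinarith
    have h15 : eta T ≤ 1 / 1000 := by nlinarith
    have h16 : 0 ≤ (IH β u t - 257 / 100) * (1 - eta T) := by
      apply mul_nonneg <;> linarith
    nlinarith
  refine ⟨?_, hut, hEpos⟩
  rcases hWt.lt_or_eq with h' | h'
  · exact h'
  · unfold En at hEpos
    rw [h'] at hEpos
    nlinarith [sq_nonneg (W1 β u t)]

end sol

/-! ### The parameter value 1/2 -/

lemma hasDerivAt_oddPoly (a b c d e x : ℝ) :
    HasDerivAt (fun x : ℝ => a * x + b * x ^ 3 + c * x ^ 5 + d * x ^ 7 + e * x ^ 9)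
      (a + 3 * b * x ^ 2 + 5 * c * x ^ 4 + 7 * d * x ^ 6 + 9 * e * x ^ 8) x := by
  have i := hasDerivAt_id' x
  refine (((((i.const_mul a).add ((i.pow 3).const_mul b)).add ((i.pow 5).const_mul c)).add
    ((i.pow 7).const_mul d)).add ((i.pow 9).const_mul e)).congr_deriv ?_
  simp; ring

lemma hasDerivAt_evenPoly (a b c d e x : ℝ) :
    HasDerivAt (fun x : ℝ => a + b * x ^ 2 + c * x ^ 4 + d * x ^ 6 + e * x ^ 8)
      (2 * b * x + 4 * c * x ^ 3 + 6 * d * x ^ 5 + 8 * e * x ^ 7) x := by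
  have i := hasDerivAt_id' x
  refine (((((i.pow 2).const_mul b).const_add a).add ((i.pow 4).const_mul c)).add
    ((i.pow 6).const_mul d)).add ((i.pow 8).const_mul e) |>.congr_deriv ?_
  simp; ring

section half
variable {u : ℝ → ℝ} {T : ℝ}

/-- Polynomial upper bounds for `w'` and `H` when `β = 1/2`, valid as long as `w' ≤ 0`. They
come from integrating a bound for `u'` four and five times from `0`: the first sweep uses `w
≤ K`, and the second uses the resulting bound for `w` together with `K ≥ 1 - x ^ 2 / 12`. -/
lemma IsSol.half_bounds (h : IsSol (1 / 2) u T) {s : ℝ} (hsT : s ≤ T)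
    (hw1 : ∀ x, 0 ≤ x → x ≤ s → W1 (1 / 2) u x ≤ 0) : ∀ x, 0 ≤ x → x ≤ s →
    W1 (1 / 2) u x ≤ (-1 / 2) * x + 1 / 30 * x ^ 3 + (-1 / 1800) * x ^ 5 + 1 / 126000 * x ^ 7
      + 0 * x ^ 9 ∧
    H (1 / 2) u x ≤ 1 * x + (-1 / 12) * x ^ 3 + 1 / 600 * x ^ 5 + (-1 / 75600) * x ^ 7
      + 1 / 9072000 * x ^ 9 := by
  have hu := h.cont
  have anti : ∀ x y, 0 ≤ x → x ≤ y → y ≤ s → W (1 / 2) u y ≤ W (1 / 2) u x := by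
    intro x y hx hxy hy
    have := le_of_deriv (f := fun x => - W (1 / 2) u x) hxy
      (fun x _ _ => (hasDerivAt_W hu x).neg)
      (fun t a b => by have := hw1 t (hx.trans a) (b.trans hy); linarith)
    linarith
  have wle1 : ∀ x, 0 ≤ x → x ≤ s → W (1 / 2) u x ≤ 1 := fun x hx hxs => by
    simpa using anti 0 x le_rfl hx hxs
  have wlek : ∀ x, 0 ≤ x → x ≤ s → W (1 / 2) u x ≤ K (1 / 2) u x := by
    intro x hx hxs
    rcases hx.eq_or_lt with rfl | hx0
    · simp
    have := le_of_deriv (f := fun x => H (1 / 2) u x - x * W (1 / 2) u x) hx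
      (fun x _ _ => (hasDerivAt_H hu x).sub ((hasDerivAt_id' x).mul (hasDerivAt_W hu x)))
      (fun t a b => by
        have := hw1 t a (b.trans hxs)
        nlinarith)
    rw [← mul_K x] at this
    refine le_of_mul_le_mul_left (a := x) ?_ hx0
    simp only [H_zero, zero_mul, sub_zero] at this
    linarith
  have kle1 : ∀ x, 0 ≤ x → x ≤ s → K (1 / 2) u x ≤ 1 := fun x hx hxs =>
    K_le_of_W_le hu hx fun y a b => wle1 y a (b.trans hxs)
  -- first sweep, from `u' ≤ 1 / 5`
  have u1 : ∀ x, 0 ≤ x → x ≤ s → u x ≤ x / 5 := by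
    intro x hx hxs
    have := le_of_deriv (f := fun x => x / 5 - u x) hx
      (fun t a b => ((hasDerivAt_id' t).div_const 5).sub (h.der t a ((b.trans hxs).trans hsT)))
      (fun t a b => by
        have hk := h.Kpos t a ((b.trans hxs).trans hsT)
        have := wlek t a (b.trans hxs)
        rw [sub_nonneg, div_le_div_iff₀ (by positivity) (by norm_num)]
        linarith)
    simp [h.zero] at this; exact this
  have w21 : ∀ x, 0 ≤ x → x ≤ s → W2 (1 / 2) u x ≤ -1 / 2 + x ^ 2 / 10 := by
    intro x hx hxs
    have := le_of_deriv (f := fun x => (-1 / 2 + 1 / 10 * x ^ 2 + 0 * x ^ 4 + 0 * x ^ 6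
        + 0 * x ^ 8) - W2 (1 / 2) u x) hx
      (fun t a b => (hasDerivAt_evenPoly _ _ _ _ _ t).sub (hasDerivAt_W2 hu t))
      (fun t a b => by have := u1 t a (b.trans hxs); linarith)
    simp at this; linarith
  have w11 : ∀ x, 0 ≤ x → x ≤ s → W1 (1 / 2) u x ≤ - x / 2 + x ^ 3 / 30 := by
    intro x hx hxs
    have := le_of_deriv (f := fun x => ((-1 / 2) * x + 1 / 30 * x ^ 3 + 0 * x ^ 5 + 0 * x ^ 7
        + 0 * x ^ 9) - W1 (1 / 2) u x) hx
      (fun t a b => (hasDerivAt_oddPoly _ _ _ _ _ t).sub (hasDerivAt_W1 hu t))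
      (fun t a b => by have := w21 t a (b.trans hxs); linarith)
    simp at this; linarith
  have w01 : ∀ x, 0 ≤ x → x ≤ s → W (1 / 2) u x ≤ 1 - x ^ 2 / 4 + x ^ 4 / 120 := by
    intro x hx hxs
    have := le_of_deriv (f := fun x => (1 + (-1 / 4) * x ^ 2 + 1 / 120 * x ^ 4 + 0 * x ^ 6
        + 0 * x ^ 8) - W (1 / 2) u x) hx
      (fun t a b => (hasDerivAt_evenPoly _ _ _ _ _ t).sub (hasDerivAt_W hu t))
      (fun t a b => by have := w11 t a (b.trans hxs); linarith)
    simp at this; linarith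
  -- second sweep: `w / K ≤ 1 + w - K` because `w ≤ K ≤ 1`
  have key : ∀ x, 0 ≤ x → x ≤ s → W (1 / 2) u x / (5 * K (1 / 2) u x)
      ≤ (1 - x ^ 2 / 6 + x ^ 4 / 120) / 5 := by
    intro x hx hxs
    have hk := h.Kpos x hx (hxs.trans hsT)
    by_cases hc : ∃ b, 0 < b ∧ b ≤ x ∧ u b < 0
    · obtain ⟨b, hb0, hbx, hb⟩ := hc
      obtain ⟨z4, h1, h2, -, h4, -⟩ := h.exists_z4 hb0 ((hbx.trans hxs).trans hsT) hb
      have hw : W (1 / 2) u x ≤ 0 := (anti z4 x h1.le (h2.trans hbx) hxs).trans h4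
      have : W (1 / 2) u x / (5 * K (1 / 2) u x) ≤ 0 :=
        div_nonpos_of_nonpos_of_nonneg hw (by positivity)
      nlinarith [sq_nonneg (x ^ 2 - 10)]
    · push Not at hc
      have hk2 := K_ge (β := 1 / 2) hu (z := x) (fun y c d => by
        rcases c.eq_or_lt with rfl | c
        · rw [h.zero]
        · exact hc y c d) hx le_rfl
      have hw := w01 x hx hxs
      have a1 := wlek x hx hxs
      have a2 := kle1 x hx hxs
      rw [div_le_iff₀ (by positivity)]
      have : W (1 / 2) u x ≤ (1 + W (1 / 2) u x - K (1 / 2) u x) * K (1 / 2) u x := by nlinarith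
      have h3 : 1 + W (1 / 2) u x - K (1 / 2) u x ≤ 1 - x ^ 2 / 6 + x ^ 4 / 120 := by linarith
      nlinarith
  have u2 : ∀ x, 0 ≤ x → x ≤ s → u x ≤ 1 / 5 * x + (-1 / 90) * x ^ 3 + 1 / 3000 * x ^ 5
      + 0 * x ^ 7 + 0 * x ^ 9 := by
    intro x hx hxs
    have := le_of_deriv (f := fun x => (1 / 5 * x + (-1 / 90) * x ^ 3 + 1 / 3000 * x ^ 5
      + 0 * x ^ 7 + 0 * x ^ 9) - u x) hx
      (fun t a b => (hasDerivAt_oddPoly _ _ _ _ _ t).sub (h.der t a ((b.trans hxs).trans hsT)))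
      (fun t a b => by have := key t a (b.trans hxs); linarith)
    simp [h.zero] at this ⊢; linarith
  have w22 : ∀ x, 0 ≤ x → x ≤ s → W2 (1 / 2) u x ≤ -1 / 2 + 1 / 10 * x ^ 2 + (-1 / 360) * x ^ 4
      + 1 / 18000 * x ^ 6 + 0 * x ^ 8 := by
    intro x hx hxs
    have := le_of_deriv (f := fun x => (-1 / 2 + 1 / 10 * x ^ 2 + (-1 / 360) * x ^ 4
        + 1 / 18000 * x ^ 6 + 0 * x ^ 8) - W2 (1 / 2) u x) hx
      (fun t a b => (hasDerivAt_evenPoly _ _ _ _ _ t).sub (hasDerivAt_W2 hu t))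
      (fun t a b => by have := u2 t a (b.trans hxs); linarith)
    simp at this ⊢; linarith
  have w12 : ∀ x, 0 ≤ x → x ≤ s → W1 (1 / 2) u x ≤ (-1 / 2) * x + 1 / 30 * x ^ 3
      + (-1 / 1800) * x ^ 5 + 1 / 126000 * x ^ 7 + 0 * x ^ 9 := by
    intro x hx hxs
    have := le_of_deriv (f := fun x => ((-1 / 2) * x + 1 / 30 * x ^ 3
        + (-1 / 1800) * x ^ 5 + 1 / 126000 * x ^ 7 + 0 * x ^ 9) - W1 (1 / 2) u x) hx
      (fun t a b => (hasDerivAt_oddPoly _ _ _ _ _ t).sub (hasDerivAt_W1 hu t))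
      (fun t a b => by have := w22 t a (b.trans hxs); linarith)
    simp at this ⊢; linarith
  have w02 : ∀ x, 0 ≤ x → x ≤ s → W (1 / 2) u x ≤ 1 + (-1 / 4) * x ^ 2 + 1 / 120 * x ^ 4
      + (-1 / 10800) * x ^ 6 + 1 / 1008000 * x ^ 8 := by
    intro x hx hxs
    have := le_of_deriv (f := fun x => (1 + (-1 / 4) * x ^ 2 + 1 / 120 * x ^ 4
        + (-1 / 10800) * x ^ 6 + 1 / 1008000 * x ^ 8) - W (1 / 2) u x) hx
      (fun t a b => (hasDerivAt_evenPoly _ _ _ _ _ t).sub (hasDerivAt_W hu t))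
      (fun t a b => by have := w12 t a (b.trans hxs); linarith)
    simp at this ⊢; linarith
  intro x hx hxs
  refine ⟨w12 x hx hxs, ?_⟩
  have := le_of_deriv (f := fun x => (1 * x + (-1 / 12) * x ^ 3 + 1 / 600 * x ^ 5
      + (-1 / 75600) * x ^ 7 + 1 / 9072000 * x ^ 9) - H (1 / 2) u x) hx
    (fun t a b => (hasDerivAt_oddPoly _ _ _ _ _ t).sub (hasDerivAt_H hu t))
    (fun t a b => by have := w02 t a (b.trans hxs); linarith)
  simp at this ⊢; linarith

/-- For `β = 1/2` the polynomial bound of `half_bounds` for `w'` is negative on `(0, 17/4]`, so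
`w' ≤ 0` there. The bound for `H` is then negative at `17/4`, while solutions have `H > 0`. -/
lemma not_isSol_half (h : IsSol (1 / 2) u (17 / 4)) : False := by
  have hu := h.cont
  have h1 : ∀ᶠ x in nhds (0:ℝ), W2 (1 / 2) u x < 0 :=
    (continuous_W2 hu).continuousAt.eventually (gt_mem_nhds (by simp))
  obtain ⟨r, hr, hb⟩ := Metric.eventually_nhds_iff.1 h1
  have hneg : ∀ x, 0 < x → x < r → W1 (1 / 2) u x < 0 := by
    intro x hx hxr
    have := lt_of_deriv (f := fun x => - W1 (1 / 2) u x) hx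
      (fun x _ _ => (hasDerivAt_W1 hu x).neg)
      (fun t a b => by
        have := hb (y := t) (by rw [Real.dist_eq, sub_zero, abs_of_pos a]; linarith)
        linarith)
    simp only [W1_zero, neg_zero] at this; linarith
  have hpoly : ∀ x : ℝ, 0 < x → x ≤ 17 / 4 → (-1 / 2) * x + 1 / 30 * x ^ 3
      + (-1 / 1800) * x ^ 5 + 1 / 126000 * x ^ 7 + 0 * x ^ 9 < 0 := by
    intro x hx hx2
    have hy : x ^ 2 ≤ 289 / 16 := by nlinarith
    have hy0 : 0 < x ^ 2 := by positivity
    have e : (-1 / 2) * x + 1 / 30 * x ^ 3 + (-1 / 1800) * x ^ 5 + 1 / 126000 * x ^ 7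
        + 0 * x ^ 9 = x * (-1 / 2 + 1 / 30 * x ^ 2 - 1 / 1800 * (x ^ 2) ^ 2
          + 1 / 126000 * (x ^ 2) ^ 3) := by ring
    rw [e]
    generalize x ^ 2 = y at hy hy0
    apply mul_neg_of_pos_of_neg hx
    nlinarith [mul_nonneg (sub_nonneg.2 hy) (sq_nonneg (y - 47 / 4)),
      mul_nonneg (sub_nonneg.2 hy) (sq_nonneg y), mul_nonneg (sub_nonneg.2 hy) hy0.le,
      mul_nonneg (sub_nonneg.2 hy) (sq_nonneg (y - 20))]
  have hall : ∀ x, 0 ≤ x → x ≤ 17 / 4 → W1 (1 / 2) u x ≤ 0 := by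
    by_contra! hc
    obtain ⟨b, hb0, hb2, hbp⟩ := hc
    have hb0 : 0 < b := by
      rcases hb0.eq_or_lt with rfl | h'
      · simp at hbp
      · exact h'
    set δ := min (r / 2) b with hδ
    have hδ0 : 0 < δ := by positivity
    have hδr : δ < r := (min_le_left _ _).trans_lt (by linarith)
    obtain ⟨t, a1, a2, a3, a4⟩ := first_hit (f := fun x => - W1 (1 / 2) u x)
      (continuous_W1 hu).neg (min_le_right (r / 2) b) (by have := hneg δ hδ0 hδr; linarith)
      (by linarith)
    have hs := (h.half_bounds (s := t) (a2.trans hb2) (fun x c d => by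
      rcases c.eq_or_lt with rfl | c
      · simp
      rcases le_total x δ with e | e
      · exact (hneg x c (e.trans_lt hδr)).le
      · rcases d.eq_or_lt with rfl | d
        · linarith
        · have := a4 x e d; linarith) t (hδ0.trans a1).le le_rfl).1
    have := hpoly t (hδ0.trans a1) (a2.trans hb2)
    linarith
  have := (h.half_bounds le_rfl hall (17 / 4) (by norm_num) le_rfl).2
  have hp := h.H_pos (z := 17 / 4) (by norm_num) le_rfl
  norm_num at this
  linarith

end half

/-! ### The shooting sets -/

/-- The cut-off `ε` is inactive on `[0, T]`, so that `regU ε β` solves the true equation there. -/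
def RegOn (ε β T : ℝ) : Prop := ∀ z, 0 ≤ z → z ≤ T → ε < K β (regU ε β) z

/-- Parameters whose solution reaches `ACond` at some positive point of its existence interval. -/
def SetA : Set ℝ := {β | ∃ ε T, 0 < ε ∧ ε ≤ 1 ∧ 0 < T ∧ RegOn ε β T ∧ ACond β (regU ε β) T}

/-- Parameters whose solution reaches `BCond` at some positive point of its existence interval. -/
def SetB : Set ℝ := {β | ∃ ε T, 0 < ε ∧ ε ≤ 1 ∧ 0 < T ∧ RegOn ε β T ∧ BCond β (regU ε β) T}

section inv
variable {β : ℝ} {u : ℝ → ℝ} {T : ℝ}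

/-- `ACond` persists: while `w, u > 0`, `E` increases, `E > 0` prevents `w` from vanishing, and
`u' = w / (5 K) > 0` prevents `u` from vanishing. -/
lemma ACond.forward {t : ℝ} (ha : ACond β u t) (ht : 0 ≤ t) (htT : t ≤ T) (h : IsSol β u T) :
    ACond β u T := by
  have key : ∀ s, t ≤ s → s ≤ T → (∀ x, t ≤ x → x ≤ s → 0 ≤ W β u x) →
      0 < u s ∧ 0 < En β u s := by
    intro s h1 h2 h3
    have hus : ∀ x, t ≤ x → x ≤ s → 0 < u x := fun x a b => ha.u_pos.trans_le <|
      le_of_deriv a (fun y c d => h.der y (ht.trans c) ((d.trans b).trans h2))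
        (fun y c d => div_nonneg (h3 y c (d.trans b))
          (by have := h.Kpos y (ht.trans c) ((d.trans b).trans h2); positivity))
    exact ⟨hus s h1 le_rfl, ha.En_pos.trans_le <| le_of_deriv h1
      (fun y _ _ => hasDerivAt_En h.cont y)
      (fun y c d => mul_nonneg (h3 y c d) (hus y c d).le)⟩
  have hW : ∀ s, t ≤ s → s ≤ T → 0 < W β u s := by
    by_contra! hc
    obtain ⟨b, hb1, hb2, hb⟩ := hc
    obtain ⟨s, a1, a2, a3, a4⟩ := first_hit (continuous_W h.cont) hb1 ha.W_pos hb
    have := (key s a1.le (a2.trans hb2) (fun x c d => by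
      rcases d.eq_or_lt with rfl | d
      · exact a3.ge
      · exact (a4 x c d).le)).2
    unfold En at this
    rw [a3] at this
    nlinarith [sq_nonneg (W1 β u s)]
  have := key T htT le_rfl fun x a b => (hW x a b).le
  exact ⟨hW T htT le_rfl, this.1, this.2⟩

/-- `BCond` persists: while `w, u < 0`, `E` increases, `E > 0` prevents `w` from vanishing, and
`u' = w / (5 K) < 0` prevents `u` from vanishing. -/
lemma BCond.forward {t : ℝ} (ha : BCond β u t) (ht : 0 ≤ t) (htT : t ≤ T) (h : IsSol β u T) :
    BCond β u T := by
  have key : ∀ s, t ≤ s → s ≤ T → (∀ x, t ≤ x → x ≤ s → W β u x ≤ 0) →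
      u s < 0 ∧ 0 < En β u s := by
    intro s h1 h2 h3
    have hus : ∀ x, t ≤ x → x ≤ s → u x < 0 := fun x a b => by
      have := le_of_deriv (f := fun x => - u x) a
        (fun y c d => (h.der y (ht.trans c) ((d.trans b).trans h2)).neg)
        (fun y c d => neg_nonneg.2 (div_nonpos_of_nonpos_of_nonneg (h3 y c (d.trans b))
          (by have := h.Kpos y (ht.trans c) ((d.trans b).trans h2); positivity)))
      have := ha.u_neg
      linarith
    exact ⟨hus s h1 le_rfl, ha.En_pos.trans_le <| le_of_deriv h1
      (fun y _ _ => hasDerivAt_En h.cont y)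
      (fun y c d => mul_nonneg_of_nonpos_of_nonpos (h3 y c d) (hus y c d).le)⟩
  have hW : ∀ s, t ≤ s → s ≤ T → W β u s < 0 := by
    by_contra! hc
    obtain ⟨b, hb1, hb2, hb⟩ := hc
    obtain ⟨s, a1, a2, a3, a4⟩ := first_hit (f := fun x => - W β u x)
      (continuous_W h.cont).neg hb1 (by have := ha.W_neg; linarith) (by linarith)
    have := (key s a1.le (a2.trans hb2) (fun x c d => by
      rcases d.eq_or_lt with rfl | d
      · linarith
      · have := a4 x c d; linarith)).2
    unfold En at this
    rw [neg_eq_zero.1 a3] at this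
    nlinarith [sq_nonneg (W1 β u s)]
  have := key T htT le_rfl fun x a b => (hW x a b).le
  exact ⟨hW T htT le_rfl, this.1, this.2⟩

end inv

section transfer
variable {β ε₁ ε₂ T : ℝ} (hε : 0 < ε₂) (h12 : ε₂ ≤ ε₁) (hε1 : ε₁ ≤ 1) (hr : RegOn ε₁ β T)
include hε h12 hε1 hr

lemma RegOn.congr {z : ℝ} (hz : |z| ≤ T) : regU ε₂ β z = regU ε₁ β z ∧
    W2 β (regU ε₂ β) z = W2 β (regU ε₁ β) z ∧ W1 β (regU ε₂ β) z = W1 β (regU ε₁ β) z ∧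
    W β (regU ε₂ β) z = W β (regU ε₁ β) z ∧ H β (regU ε₂ β) z = H β (regU ε₁ β) z ∧
    K β (regU ε₂ β) z = K β (regU ε₁ β) z :=
  ⟨regU_agree hε h12 hε1 hr hz, congr_all (regU_cont hε (h12.trans hε1) β)
    (regU_cont (hε.trans_le h12) hε1 β) (fun _ hs => regU_agree hε h12 hε1 hr hs) hz⟩

lemma RegOn.transfer : RegOn ε₂ β T := fun z h0 hT => by
  rw [(RegOn.congr hε h12 hε1 hr (by rwa [abs_of_nonneg h0])).2.2.2.2.2]
  exact h12.trans_lt (hr z h0 hT)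

lemma RegOn.aCond (hT : 0 ≤ T) (h : ACond β (regU ε₁ β) T) : ACond β (regU ε₂ β) T := by
  obtain ⟨e3, e2, e1, e0, -⟩ := RegOn.congr hε h12 hε1 hr (abs_of_nonneg hT).le
  obtain ⟨a, b, c⟩ := h
  exact ⟨e0 ▸ a, e3 ▸ b, by unfold En at *; rwa [e2, e1, e0]⟩

lemma RegOn.bCond (hT : 0 ≤ T) (h : BCond β (regU ε₁ β) T) : BCond β (regU ε₂ β) T := by
  obtain ⟨e3, e2, e1, e0, -⟩ := RegOn.congr hε h12 hε1 hr (abs_of_nonneg hT).le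
  obtain ⟨a, b, c⟩ := h
  exact ⟨e0 ▸ a, e3 ▸ b, by unfold En at *; rwa [e2, e1, e0]⟩

end transfer

/-- After lowering the two cut-offs to a common value, both conditions would persist to the
larger of the two points. -/
lemma disjoint_AB : Disjoint SetA SetB := by
  rw [Set.disjoint_left]
  rintro β ⟨ε₁, T₁, a1, a2, a3, a4, a5⟩ ⟨ε₂, T₂, b1, b2, b3, b4, b5⟩
  have hm : 0 < min ε₁ ε₂ := lt_min a1 b1
  have r1 := a4.transfer hm (min_le_left _ _) a2
  have r2 := b4.transfer hm (min_le_right _ _) b2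
  have c1 := RegOn.aCond hm (min_le_left _ _) a2 a4 a3.le a5
  have c2 := RegOn.bCond hm (min_le_right _ _) b2 b4 b3.le b5
  have hm1 : min ε₁ ε₂ ≤ 1 := (min_le_left _ _).trans a2
  rcases le_total T₁ T₂ with h | h
  · have := (c1.forward a3.le h (isSol_regU hm hm1 r2)).W_pos
    have := c2.W_neg
    linarith
  · have := (c2.forward b3.le h (isSol_regU hm hm1 r1)).W_neg
    have := c1.W_pos
    linarith

section cont
variable {ε : ℝ} (hε : 0 < ε) (hε1 : ε ≤ 1)
include hε hε1

lemma reg_lip_all (β₁ β₂ : ℝ) {z T : ℝ} (hz : |z| ≤ T) :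
    |regU ε β₁ z - regU ε β₂ z| ≤ 2 * Real.exp (1 / ε * T) * |β₁ - β₂| ∧
    |W2 β₁ (regU ε β₁) z - W2 β₂ (regU ε β₂) z| ≤ 2 * Real.exp (1 / ε * T) * |β₁ - β₂| ∧
    |W1 β₁ (regU ε β₁) z - W1 β₂ (regU ε β₂) z| ≤ 2 * Real.exp (1 / ε * T) * |β₁ - β₂| ∧
    |W β₁ (regU ε β₁) z - W β₂ (regU ε β₂) z| ≤ 2 * Real.exp (1 / ε * T) * |β₁ - β₂| ∧
    |K β₁ (regU ε β₁) z - K β₂ (regU ε β₂) z| ≤ 2 * Real.exp (1 / ε * T) * |β₁ - β₂| := by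
  have c₁ := regU_cont hε hε1 β₁
  have c₂ := regU_cont hε hε1 β₂
  have hl : 1 ≤ 1 / ε := by rw [le_div_iff₀ hε]; linarith
  have hb : ∀ s, |s| ≤ T → |regU ε β₁ s - regU ε β₂ s| ≤ |β₁ - β₂| * Real.exp (1 / ε * |s|) :=
    fun s _ => regU_lip hε hε1 β₁ β₂ s
  have b3 := regU_lip hε hε1 β₁ β₂ z
  have b2 := W2_lip (β₁ := β₁) (β₂ := β₂) c₁ c₂ hl (abs_nonneg _) hb hz
  have b1 := W1_lip (β₁ := β₁) (β₂ := β₂) c₁ c₂ hl (abs_nonneg _) hb hz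
  have b0 := W_lip (β₁ := β₁) (β₂ := β₂) c₁ c₂ hl (abs_nonneg _) hb hz
  have bk := K_lip (β₁ := β₁) (β₂ := β₂) c₁ c₂ hl (abs_nonneg _) hb hz
  set d := |β₁ - β₂|
  have hd : 0 ≤ d := abs_nonneg _
  have he : Real.exp (1 / ε * |z|) ≤ Real.exp (1 / ε * T) := by gcongr
  have q2 : d + d / (1 / ε) ≤ 2 * d := by
    have := div_le_self hd hl; linarith
  have q0 : 0 ≤ d + d / (1 / ε) := by positivity
  have q1 : (d + d / (1 / ε)) / (1 / ε) ≤ 2 * d := (div_le_self q0 hl).trans q2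
  have q00 : (d + d / (1 / ε)) / (1 / ε) / (1 / ε) ≤ 2 * d :=
    (div_le_self (by positivity) hl).trans q1
  have hE : 0 < Real.exp (1 / ε * |z|) := Real.exp_pos _
  have fin : ∀ x y : ℝ, 0 ≤ y → x ≤ y * Real.exp (1 / ε * |z|) → y ≤ 2 * d →
      x ≤ 2 * Real.exp (1 / ε * T) * d := by
    intro x y hy h1 h2
    calc x ≤ y * Real.exp (1 / ε * |z|) := h1
      _ ≤ 2 * d * Real.exp (1 / ε * T) := by gcongr
      _ = _ := by ring
  exact ⟨fin _ _ hd b3 (by linarith), fin _ _ q0 b2 q2, fin _ _ (by positivity) b1 q1,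
    fin _ _ (by positivity) b0 q00, fin _ _ (by positivity) bk q00⟩

omit hε hε1 in
lemma cont_of_lip {f : ℝ → ℝ} {C : ℝ} (hC : 0 ≤ C)
    (h : ∀ x y, |f x - f y| ≤ C * |x - y|) : Continuous f :=
  (LipschitzWith.of_dist_le_mul (K := ⟨C, hC⟩) fun x y => by
    simp only [Real.dist_eq]; exact h x y).continuous

lemma regOn_eventually {β T : ℝ} (hr : RegOn ε β T) : ∀ᶠ b in nhds β, RegOn ε b T := by
  by_cases hT : 0 ≤ T
  swap
  · exact Eventually.of_forall fun b z h0 h1 => absurd (h0.trans h1) hT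
  obtain ⟨x, hx, hmin⟩ := isCompact_Icc.exists_isMinOn (Set.nonempty_Icc.2 hT)
    (continuous_K (β := β) (regU_cont hε hε1 β)).continuousOn
  have hm : 0 < K β (regU ε β) x - ε := by have := hr x hx.1 hx.2; linarith
  set C := 2 * Real.exp (1 / ε * T) with hC
  have hC0 : 0 < C := by positivity
  have : ∀ᶠ b in nhds β, |b - β| < (K β (regU ε β) x - ε) / C := by
    have := Metric.ball_mem_nhds β (ε := (K β (regU ε β) x - ε) / C) (by positivity)
    filter_upwards [this] with b hb
    rwa [Metric.mem_ball, Real.dist_eq] at hb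
  filter_upwards [this] with b hb z h0 hz
  have h1 := (reg_lip_all hε hε1 b β (T := T) (by rwa [abs_of_nonneg h0])).2.2.2.2
  have h2 : K β (regU ε β) x ≤ K β (regU ε β) z := hmin ⟨h0, hz⟩
  rw [lt_div_iff₀ hC0] at hb
  have := abs_le.1 h1
  linarith

lemma cont_all (T : ℝ) : Continuous (fun β => regU ε β T) ∧
    Continuous (fun β => W β (regU ε β) T) ∧ Continuous (fun β => En β (regU ε β) T) := by
  have L := fun b₁ b₂ => reg_lip_all hε hε1 b₁ b₂ (z := T) (T := |T|) le_rfl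
  have hC : 0 ≤ 2 * Real.exp (1 / ε * |T|) := by positivity
  have c2 := cont_of_lip hC fun x y => (L x y).2.1
  have c1 := cont_of_lip hC fun x y => (L x y).2.2.1
  have c0 := cont_of_lip hC fun x y => (L x y).2.2.2.1
  refine ⟨cont_of_lip hC fun x y => (L x y).1, c0, ?_⟩
  unfold En
  exact (c0.mul c2).sub ((c1.pow 2).div_const 2)

end cont

lemma isOpen_A : IsOpen SetA := by
  rw [isOpen_iff_mem_nhds]
  rintro β ⟨ε, T, h1, h2, h3, h4, h5⟩
  obtain ⟨c3, c0, cE⟩ := cont_all h1 h2 T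
  filter_upwards [regOn_eventually h1 h2 h4, c0.continuousAt.eventually (lt_mem_nhds h5.W_pos),
    c3.continuousAt.eventually (lt_mem_nhds h5.u_pos),
    cE.continuousAt.eventually (lt_mem_nhds h5.En_pos)] with b a1 a2 a3 a4
  exact ⟨ε, T, h1, h2, h3, a1, a2, a3, a4⟩

lemma isOpen_B : IsOpen SetB := by
  rw [isOpen_iff_mem_nhds]
  rintro β ⟨ε, T, h1, h2, h3, h4, h5⟩
  obtain ⟨c3, c0, cE⟩ := cont_all h1 h2 T
  filter_upwards [regOn_eventually h1 h2 h4, c0.continuousAt.eventually (gt_mem_nhds h5.W_neg),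
    c3.continuousAt.eventually (gt_mem_nhds h5.u_neg),
    cE.continuousAt.eventually (lt_mem_nhds h5.En_pos)] with b a1 a2 a3 a4
  exact ⟨ε, T, h1, h2, h3, a1, a2, a3, a4⟩

lemma zero_mem_A : (0:ℝ) ∈ SetA := by
  have hc := regU_cont (ε := 1 / 2) (by norm_num) (by norm_num) 0
  have h1 : ∀ᶠ x in nhds (0:ℝ), 1 / 2 < K 0 (regU (1 / 2) 0) x :=
    (continuous_K hc).continuousAt.eventually (lt_mem_nhds (by simp; norm_num))
  obtain ⟨r, hr, hb⟩ := Metric.eventually_nhds_iff.1 h1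
  have hreg : RegOn (1 / 2) 0 (r / 2) := fun z h0 hz =>
    hb (by rw [Real.dist_eq, sub_zero, abs_of_nonneg h0]; linarith)
  have hs := isSol_regU (by norm_num) (by norm_num) hreg
  obtain ⟨δ, d0, d1, d2, d3⟩ := hs.exists_start (by positivity)
  refine ⟨1 / 2, δ, by norm_num, by norm_num, d0, fun z a b => hreg z a (b.trans d1),
    d2 δ d0.le le_rfl, d3 δ d0 le_rfl, ?_⟩
  have := lt_of_deriv d0 (fun x _ _ => hasDerivAt_En (β := 0) hc x)
    (fun x a b => mul_pos (d2 x a.le b.le) (d3 x a b.le))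
  simpa [En] using this

/-- A cut-off chosen such that `K t = eps T` with `0 < t ≤ T` implies `H t < eta T`. -/
def eps (T : ℝ) : ℝ := eta T / (2 * T)

section ext
variable {β T : ℝ} (hT : 2 ≤ T)
include hT

lemma eps_pos : 0 < eps T := by have := eta_pos hT; unfold eps; positivity

lemma eps_le : eps T ≤ 1 / 2 := by
  have := eta_le hT
  unfold eps
  rw [div_le_iff₀ (by positivity)]
  linarith

lemma eps_mul : T * eps T = eta T / 2 := by unfold eps; field_simp

variable (hβ : β ≤ 1 / 2)
include hβ

/-- Outside `SetB` the solution exists on every interval `[0, T]`: if `K` came down to `eps T`,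
then `H` would have passed through the height `eta T` before, where `BCond` holds. -/
lemma regOn_of_notMem_B (hB : β ∉ SetB) : RegOn (eps T) β T := by
  by_contra hr
  unfold RegOn at hr
  push Not at hr
  obtain ⟨b, hb0, hbT, hb⟩ := hr
  have he0 := eps_pos hT
  have he1 := eps_le hT
  have hη := eta_pos hT
  have hη1 := eta_le hT
  have hc := regU_cont he0 (by linarith) β
  obtain ⟨t, t0, tb, ht, hlt⟩ := first_hit (f := fun x => K β (regU (eps T) β) x - eps T)
    ((continuous_K hc).sub continuous_const) hb0 (by simp; linarith) (by linarith)
  have hreg : ∀ s, s < t → RegOn (eps T) β s := fun s hs z h0 hz => by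
    have := hlt z h0 (by linarith); linarith
  have hsol : ∀ s, s < t → IsSol β (regU (eps T) β) s := fun s hs =>
    isSol_regU he0 (by linarith) (hreg s hs)
  have ht2 : 2 < t := by
    by_contra! hcon
    have h4 : Tendsto (K β (regU (eps T) β)) (nhdsWithin t (Set.Iio t))
        (nhds (K β (regU (eps T) β) t)) :=
      (continuous_K hc).continuousAt.tendsto.mono_left nhdsWithin_le_nhds
    have : 2 / 3 ≤ K β (regU (eps T) β) t := by
      refine ge_of_tendsto h4 ?_
      filter_upwards [Ioo_mem_nhdsLT t0] with s hs
      exact (hsol s hs.2).K_early hβ hs.1.le (by linarith [hs.2]) le_rfl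
    linarith
  have h2 := (hsol 2 ht2).H_two hβ le_rfl
  have hHt : H β (regU (eps T) β) t < eta T := by
    rw [← mul_K]
    have : K β (regU (eps T) β) t = eps T := by linarith
    rw [this]
    have h5 := eps_mul hT
    nlinarith
  obtain ⟨t', a1, a2, a3, a4⟩ := first_hit (f := fun x => H β (regU (eps T) β) x - eta T)
    ((continuous_H hc).sub continuous_const) ht2.le (by linarith) (by linarith)
  have htt : t' < t := by
    rcases a2.eq_or_lt with rfl | h
    · linarith
    · exact h
  refine hB ⟨eps T, t', he0, by linarith, by linarith, hreg t' htt,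
    (hsol t' htt).bCond_of_hit hβ a1.le (by linarith) (T := T) (fun s c d => ?_) (by linarith)⟩
  rcases d.eq_or_lt with rfl | d
  · linarith
  · have := a4 s c d; linarith

end ext

lemma half_mem_B : (1 / 2 : ℝ) ∈ SetB := by
  by_contra hB
  have h := regOn_of_notMem_B (T := 17 / 4) (by norm_num) le_rfl hB
  exact not_isSol_half (isSol_regU (eps_pos (by norm_num))
    ((eps_le (by norm_num)).trans (by norm_num)) h)

lemma exists_critical : ∃ β, 0 ≤ β ∧ β ≤ 1 / 2 ∧ β ∉ SetA ∧ β ∉ SetB := by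
  by_contra! hc
  obtain ⟨x, -, hx⟩ := (isPreconnected_Icc (a := (0:ℝ)) (b := 1 / 2)) SetA SetB isOpen_A isOpen_B
    (fun x hx => by
      by_cases h : x ∈ SetA
      · exact Or.inl h
      · exact Or.inr (hc x hx.1 hx.2 h))
    ⟨0, by norm_num, zero_mem_A⟩ ⟨1 / 2, by norm_num, half_mem_B⟩
  exact Set.disjoint_left.1 disjoint_AB hx.1 hx.2

/-! ### The global critical solution -/

lemma eps_anti {S T : ℝ} (hS : 2 ≤ S) (hST : S ≤ T) : eps T ≤ eps S := by
  unfold eps eta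
  have : 0 < S := by linarith
  have : 0 < T := by linarith
  gcongr

/-- The critical solution: global, odd, and never satisfying `ACond`. It is glued from the
functions `regU (eps T) β`, which agree on their common domains. -/
lemma exists_global : ∃ β u, 0 ≤ β ∧ β ≤ 1 / 2 ∧ (∀ T, IsSol β u T) ∧
    (∀ z, u (-z) = - u z) ∧ ∀ t, 0 < t → ¬ ACond β u t := by
  obtain ⟨β, h0, hβ, hA, hB⟩ := exists_critical
  let u : ℝ → ℝ := fun z => regU (eps (|z| + 2)) β z
  have hreg : ∀ T, 2 ≤ T → RegOn (eps T) β T := fun T hT => regOn_of_notMem_B hT hβ hB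
  have hle1 : ∀ T, 2 ≤ T → eps T ≤ 1 := fun T hT => (eps_le hT).trans (by norm_num)
  have hag : ∀ T, 2 ≤ T → ∀ z, |z| ≤ T → u z = regU (eps T) β z := by
    intro T hT z hz
    have h2 : 2 ≤ |z| + 2 := by linarith [abs_nonneg z]
    rcases le_total T (|z| + 2) with h | h
    · exact regU_agree (eps_pos h2) (eps_anti hT h) (hle1 T hT) (hreg T hT) hz
    · exact (regU_agree (eps_pos hT) (eps_anti h2 h) (hle1 _ h2) (hreg _ h2) (by linarith)).symm
  have hev : ∀ z, ∃ T, 2 ≤ T ∧ |z| ≤ T ∧ u =ᶠ[nhds z] regU (eps T) β := by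
    intro z
    refine ⟨|z| + 2, by linarith [abs_nonneg z], by linarith, ?_⟩
    filter_upwards [Metric.ball_mem_nhds z one_pos] with x hx
    rw [Metric.mem_ball, Real.dist_eq] at hx
    refine hag _ (by linarith [abs_nonneg z]) x ?_
    have := abs_sub_abs_le_abs_sub x z
    linarith
  have hc : Continuous u := by
    rw [continuous_iff_continuousAt]
    intro z
    obtain ⟨T, hT, -, he⟩ := hev z
    exact ((regU_cont (eps_pos hT) (hle1 T hT) β).continuousAt).congr he.symm
  have hcg := fun T (hT : 2 ≤ T) z (hz : |z| ≤ T) => congr_all (β := β) hc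
    (regU_cont (eps_pos hT) (hle1 T hT) β) (hag T hT) hz
  refine ⟨β, u, h0, hβ, fun T => ⟨hc, ?_, fun z h0 _ => ?_, fun z h0 _ => ?_⟩, fun z => ?_, ?_⟩
  · exact (isSol_regU (eps_pos (by simp)) (hle1 _ (by simp)) (hreg _ (by simp))).zero
  · obtain ⟨T, hT, hz, -⟩ := hev z
    rw [(hcg T hT z hz).2.2.2.2]
    exact (eps_pos hT).trans (hreg T hT z h0 (by rwa [abs_of_nonneg h0] at hz))
  · obtain ⟨T, hT, hz, he⟩ := hev z
    rw [(hcg T hT z hz).2.2.2.2, (hcg T hT z hz).2.2.1]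
    exact ((isSol_regU (eps_pos hT) (hle1 T hT) (hreg T hT)).der z h0
      (by rwa [abs_of_nonneg h0] at hz)).congr_of_eventuallyEq he
  · simp only [u, abs_neg]
    exact regU_odd (eps_pos (by simp)) (hle1 _ (by simp)) β z
  · intro t ht hcon
    have hT : 2 ≤ t + 2 := by linarith
    have htT : |t| ≤ t + 2 := by rw [abs_of_pos ht]; linarith
    obtain ⟨e2, e1, e0, -⟩ := hcg (t + 2) hT t htT
    have e3 := hag (t + 2) hT t htT
    obtain ⟨a, b, c⟩ := hcon
    refine hA ⟨eps (t + 2), t, eps_pos hT, hle1 _ hT, ht,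
      fun z c d => hreg (t + 2) hT z c (by linarith), e0 ▸ a, e3 ▸ b, ?_⟩
    unfold En at *
    rwa [← e2, ← e1, ← e0]

/-! ### The Lyapunov function and convergence of `C` -/

/-- `Y = 5 u / z`. -/
def Yf (u : ℝ → ℝ) (z : ℝ) : ℝ := 5 * u z / z

/-- `C = H exp (-Y)`, constant exactly when `Y = 0`. -/
def Cf (β : ℝ) (u : ℝ → ℝ) (z : ℝ) : ℝ := H β u z * Real.exp (-(Yf u z))

/-- The Lyapunov function `J = -β + (∫₀ᶻ H - z C) / 5`. -/
def Jf (β : ℝ) (u : ℝ → ℝ) (z : ℝ) : ℝ := -β + (IH β u z - z * Cf β u z) / 5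

/-- `exp y - 1 - y`, which is nonnegative and vanishes only at `0`. The derivative of `J` is `C
ψ(Y) / 5`. -/
def psi (y : ℝ) : ℝ := Real.exp y - 1 - y

lemma psi_nonneg (y : ℝ) : 0 ≤ psi y := by
  have := Real.add_one_le_exp y
  unfold psi; linarith

/-- Since `ψ` is quadratic near `0` and at least linear at infinity, it controls `|y|` up to an
arbitrarily small constant. -/
lemma abs_le_psi {τ : ℝ} (h0 : 0 < τ) (h1 : τ ≤ 1) (y : ℝ) : |y| ≤ τ + 4 / τ * psi y := by
  have hp := psi_nonneg y
  rcases le_total |y| τ with h | h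
  · have : 0 ≤ 4 / τ * psi y := by positivity
    linarith
  have key : |y| * τ ≤ 4 * psi y := by
    rcases le_total (-2) y with h2 | h2
    · have h3 := Real.add_one_le_exp (y / 2)
      have h4 : Real.exp y = Real.exp (y / 2) ^ 2 := by rw [← Real.exp_nat_mul]; congr 1; norm_num; ring
      have h5 : y ^ 2 ≤ 4 * psi y := by unfold psi; rw [h4]; nlinarith
      have h6 : |y| ^ 2 = y ^ 2 := sq_abs y
      nlinarith [abs_nonneg y]
    · have h3 : -y ≤ 2 * psi y := by unfold psi; have := Real.exp_pos y; linarith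
      have h4 : |y| = -y := abs_of_neg (by linarith)
      rw [h4]; nlinarith
  have : 4 / τ * psi y = 4 * psi y / τ := by ring
  rw [this]
  have : |y| ≤ 4 * psi y / τ := by rwa [le_div_iff₀ h0]
  linarith

section glob
variable {β : ℝ} {u : ℝ → ℝ} (hs : ∀ T, IsSol β u T)
include hs

lemma Hpos {z : ℝ} (hz : 0 < z) : 0 < H β u z := (hs z).H_pos hz le_rfl

lemma Cpos {z : ℝ} (hz : 0 < z) : 0 < Cf β u z := mul_pos (Hpos hs hz) (Real.exp_pos _)

omit hs in
lemma C_mul_exp (z : ℝ) : Cf β u z * Real.exp (Yf u z) = H β u z := by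
  unfold Cf; rw [mul_assoc, ← Real.exp_add]; simp

lemma hasDerivAt_C {z : ℝ} (hz : 0 < z) :
    HasDerivAt (Cf β u) (Cf β u z * Yf u z / z) z := by
  have hu := (hs z).cont
  have hk := (hs z).Kpos z hz.le le_rfl
  have hY : HasDerivAt (Yf u) (W β u z / H β u z - Yf u z / z) z := by
    have := (((hs z).der z hz.le le_rfl).const_mul 5).div (hasDerivAt_id' z) hz.ne'
    refine this.congr_deriv ?_
    rw [← mul_K z]
    unfold Yf
    field_simp
  have := (hasDerivAt_H (β := β) hu z).mul hY.neg.exp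
  refine this.congr_deriv ?_
  have hH := Hpos hs hz
  unfold Cf
  field_simp
  simp
  ring

lemma hasDerivAt_J {z : ℝ} (hz : 0 < z) :
    HasDerivAt (Jf β u) (Cf β u z * psi (Yf u z) / 5) z := by
  have hu := (hs z).cont
  have := (((hasDerivAt_IH (β := β) hu z).sub ((hasDerivAt_id' z).mul
    (hasDerivAt_C hs hz))).div_const 5).const_add (-β)
  refine this.congr_deriv ?_
  rw [← C_mul_exp z]
  unfold psi
  field_simp
  ring

lemma J_mono {y z : ℝ} (hy : 0 < y) (hyz : y ≤ z) : Jf β u y ≤ Jf β u z :=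
  le_of_deriv hyz (fun x a _ => hasDerivAt_J hs (hy.trans_le a)) (fun x a _ => by
    have := Cpos hs (hy.trans_le a)
    have := psi_nonneg (Yf u x)
    positivity)

/-- By the formula `En_eq`, `E - J = z H (Y - 1 + exp (-Y)) / 5`. -/
lemma J_le_En {z : ℝ} (hz : 0 < z) : Jf β u z ≤ En β u z := by
  rw [(hs z).En_eq hz.le le_rfl]
  have hC := Cpos hs hz
  have h1 : 0 ≤ Cf β u z * (Yf u z * Real.exp (Yf u z) - Real.exp (Yf u z) + 1) := by
    refine mul_nonneg hC.le ?_
    have h2 := Real.add_one_le_exp (-(Yf u z))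
    have h3 : Real.exp (-(Yf u z)) * Real.exp (Yf u z) = 1 := by rw [← Real.exp_add]; simp
    have h4 := Real.exp_pos (Yf u z)
    nlinarith
  have h5 : Cf β u z * (Yf u z * Real.exp (Yf u z) - Real.exp (Yf u z) + 1)
      = H β u z * Yf u z - H β u z + Cf β u z := by
    rw [← C_mul_exp z]; ring
  have h6 : z * (H β u z * Yf u z) = 5 * (H β u z * u z) := by
    unfold Yf; field_simp
  have h7 := mul_nonneg hz.le h1
  rw [h5] at h7
  unfold Jf
  nlinarith

lemma H_ge_linear {Z : ℝ} (h : ∀ z, Z ≤ z → 1 ≤ W β u z) {z : ℝ} (hz : Z ≤ z) :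
    H β u Z + (z - Z) ≤ H β u z := by
  have := le_of_deriv (f := fun x => H β u x - x) hz
    (fun x _ _ => (hasDerivAt_H (hs 0).cont x).sub (hasDerivAt_id' x))
    (fun x a _ => by have := h x a; linarith)
  linarith

lemma H_le_linear {Z : ℝ} (h : ∀ z, Z ≤ z → W β u z ≤ -1) {z : ℝ} (hz : Z ≤ z) :
    H β u z ≤ H β u Z - (z - Z) := by
  have := le_of_deriv (f := fun x => - H β u x - x) hz
    (fun x _ _ => (hasDerivAt_H (hs 0).cont x).neg.sub (hasDerivAt_id' x))
    (fun x a _ => by have := h x a; linarith)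
  linarith

variable (hA : ∀ t, 0 < t → ¬ ACond β u t)
include hA

/-- If `J` were positive at some `z`, then `E ≥ J z > 0` from there on, so `(w ^ 2)'' ≥ 2 E` is
bounded below and eventually `|w| ≥ 1` with a constant sign. The negative sign contradicts
`H > 0`. With the positive sign, the failure of `ACond` gives `u ≤ 0`, so `Y ≤ 0`, `C`
decreases and `H ≤ C` is bounded, a contradiction too. -/
lemma J_nonpos {z : ℝ} (hz : 0 < z) : Jf β u z ≤ 0 := by
  by_contra! hJ
  set j := Jf β u z with hj
  have hu := (hs z).cont
  have hE : ∀ x, z ≤ x → j ≤ En β u x := fun x hx =>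
    (J_mono hs hz hx).trans (J_le_En hs (hz.trans_le hx))
  have hW0 : ∀ x, z ≤ x → W β u x ≠ 0 := fun x hx h0 => by
    have := hE x hx
    unfold En at this
    rw [h0] at this
    nlinarith [sq_nonneg (W1 β u x)]
  set p := W β u z * W1 β u z with hp
  have hd : ∀ x, z ≤ x → p + j * (x - z) ≤ W β u x * W1 β u x := by
    intro x hx
    have := le_of_deriv (f := fun x => W β u x * W1 β u x - j * x) hx
      (fun x _ _ => ((hasDerivAt_W (β := β) hu x).mul (hasDerivAt_W1 (β := β) hu x)).sub
        ((hasDerivAt_id' x).const_mul j))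
      (fun x a _ => by
        have := hE x a
        unfold En at this
        nlinarith [sq_nonneg (W1 β u x)])
    linarith
  have hq : ∀ x, z ≤ x → 2 * p * (x - z) + j * (x - z) ^ 2 ≤ W β u x ^ 2 := by
    intro x hx
    have := le_of_deriv (f := fun x => W β u x ^ 2 - (2 * p * (x - z) + j * (x - z) ^ 2))
      (f' := fun x => 2 * (W β u x * W1 β u x) - (2 * p + 2 * j * (x - z))) hx
      (fun x _ _ => (((hasDerivAt_W (β := β) hu x).pow 2).sub
        ((((hasDerivAt_id' x).sub_const z).const_mul (2 * p)).add
        ((((hasDerivAt_id' x).sub_const z).pow 2).const_mul j))).congr_deriv (by simp; ring))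
      (fun x a _ => by have := hd x a; linarith)
    simp at this
    nlinarith [sq_nonneg (W β u z)]
  set Z := z + (1 + (1 + 2 * |p|) / j) with hZ
  have hZz : z + 1 ≤ Z := by
    have : 0 ≤ (1 + 2 * |p|) / j := by positivity
    linarith
  have hsq : ∀ x, Z ≤ x → 1 ≤ W β u x ^ 2 := by
    intro x hx
    have h1 : 1 + (1 + 2 * |p|) / j ≤ x - z := by linarith
    have h2 : j * (1 + (1 + 2 * |p|) / j) ≤ j * (x - z) := by gcongr
    have h3 : j * (1 + (1 + 2 * |p|) / j) = j + 1 + 2 * |p| := by field_simp; ring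
    have h4 := neg_abs_le p
    have h5 := hq x (by linarith)
    have h6 : 1 ≤ x - z := by linarith
    nlinarith
  have hcW := continuous_W (β := β) hu
  rcases lt_or_gt_of_ne (hW0 z le_rfl) with hneg | hpos
  · have hW : ∀ x, z ≤ x → W β u x < 0 := by
      by_contra! hc
      obtain ⟨x, hx, hx2⟩ := hc
      obtain ⟨t, a, -, c, -⟩ := first_hit (f := fun x => - W β u x) hcW.neg hx (by linarith)
        (by linarith)
      exact hW0 t a.le (by linarith)
    have hlin := H_le_linear hs (Z := Z) (fun x hx => by
      have := hW x (by linarith)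
      have := hsq x hx
      nlinarith) (z := Z + H β u Z) (by
        have := Hpos hs (z := Z) (by linarith); linarith)
    have hp1 := Hpos hs (z := Z) (by linarith)
    have := Hpos hs (z := Z + H β u Z) (by linarith)
    linarith
  · have hW : ∀ x, z ≤ x → 0 < W β u x := by
      by_contra! hc
      obtain ⟨x, hx, hx2⟩ := hc
      obtain ⟨t, a, -, c, -⟩ := first_hit hcW hx hpos hx2
      exact hW0 t a.le c
    have hun : ∀ x, z ≤ x → u x ≤ 0 := by
      intro x hx
      by_contra! hc
      exact hA x (by linarith) ⟨hW x hx, hc, hJ.trans_le (hE x hx)⟩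
    have hCd : ∀ x, z ≤ x → Cf β u x ≤ Cf β u z := by
      intro x hx
      have := le_of_deriv (f := fun x => - Cf β u x) hx
        (fun x a _ => (hasDerivAt_C hs (hz.trans_le a)).neg)
        (fun x a _ => by
          have hC := Cpos hs (hz.trans_le a)
          have hx0 := hz.trans_le a
          have hY : Yf u x ≤ 0 := div_nonpos_of_nonpos_of_nonneg (by linarith [hun x a]) hx0.le
          rw [neg_nonneg]
          exact div_nonpos_of_nonpos_of_nonneg (mul_nonpos_of_nonneg_of_nonpos hC.le hY) hx0.le)
      linarith
    have hHC : ∀ x, z ≤ x → H β u x ≤ Cf β u z := by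
      intro x hx
      refine le_trans ?_ (hCd x hx)
      rw [← C_mul_exp x]
      have hx0 := hz.trans_le hx
      have hY : Yf u x ≤ 0 := div_nonpos_of_nonpos_of_nonneg (by linarith [hun x hx]) hx0.le
      have := Real.exp_le_one_iff.2 hY
      have := Cpos hs hx0
      nlinarith
    have hCp := Cpos hs hz
    have hlin := H_ge_linear hs (Z := Z) (fun x hx => by
      have := hW x (by linarith)
      have := hsq x hx
      nlinarith) (z := Z + Cf β u z) (by linarith)
    have hp1 := Hpos hs (z := Z) (by linarith)
    have := hHC (Z + Cf β u z) (by linarith)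
    linarith

lemma J_tendsto : ∃ j, Tendsto (Jf β u) atTop (nhds j) ∧ ∀ z, 0 < z → Jf β u z ≤ j := by
  set f : ℝ → ℝ := fun z => Jf β u (max z 1)
  have hm : Monotone f := fun x y hxy => J_mono hs (by positivity) (max_le_max_right 1 hxy)
  have hb : BddAbove (Set.range f) := ⟨0, by
    rintro _ ⟨x, rfl⟩
    exact J_nonpos hs hA (by positivity)⟩
  have ht := tendsto_atTop_ciSup hm hb
  refine ⟨⨆ i, f i, ht.congr' ?_, fun z hz => ?_⟩
  · filter_upwards [eventually_ge_atTop 1] with z hz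
    simp [f, max_eq_left hz]
  · exact (J_mono hs hz (le_max_left z 1)).trans (le_ciSup hb z)

lemma IH_le {z : ℝ} (hz : 0 < z) : IH β u z ≤ 5 * β + z * Cf β u z := by
  have := J_nonpos hs hA hz
  unfold Jf at this
  linarith

variable (hβ : β ≤ 1 / 2)
include hβ

/-- A first lower bound `z C ≥ δ`. If `u` stays nonnegative, `C` is increasing. Otherwise `∫H ≥
2.57` from the first zero of `u` on, and `J ≤ 0` gives `z C ≥ ∫H - 5 β`. -/
lemma exists_delta : ∃ δ Z, 0 < δ ∧ 1 ≤ Z ∧ ∀ z, Z ≤ z → δ ≤ z * Cf β u z := by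
  by_cases hc : ∃ b, 0 < b ∧ u b < 0
  · obtain ⟨b, hb0, hb⟩ := hc
    obtain ⟨t, h1, h2, h3, h4, h5⟩ := (hs b).exists_z4 hb0 le_rfl hb
    have hI := (hs b).IH_z4 hβ h1 h2 h5 h3 h4
    refine ⟨7 / 100, max t 1, by norm_num, le_max_right _ _, fun z hz => ?_⟩
    have htz := (le_max_left t 1).trans hz
    have := (hs z).IH_mono h1.le htz le_rfl
    have := IH_le hs hA (h1.trans_le htz)
    linarith
  · push Not at hc
    refine ⟨Cf β u 1, 1, Cpos hs one_pos, le_rfl, fun z hz => ?_⟩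
    have h1 : Cf β u 1 ≤ Cf β u z := le_of_deriv hz
      (fun x a _ => hasDerivAt_C hs (by linarith))
      (fun x a _ => by
        have hx0 : 0 < x := by linarith
        have hC := Cpos hs hx0
        have hY : 0 ≤ Yf u x := div_nonneg (by linarith [hc x hx0]) hx0.le
        positivity)
    have := Cpos hs (one_pos.trans_le hz)
    nlinarith

/-- The lower bound for `C` improves to `C √z ≥ δ`, because `(log C)' = Y / z` is bounded below
by `-1 / (2 z)` minus a multiple of `J'`, and `J` is bounded. -/
lemma exists_sqrt_bound : ∃ δ Z, 0 < δ ∧ 1 ≤ Z ∧ ∀ z, Z ≤ z → δ ≤ Cf β u z * Real.sqrt z := by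
  obtain ⟨δ, Z, hδ, hZ, h⟩ := exists_delta hs hA hβ
  have hC := Cpos hs (one_pos.trans_le hZ)
  set c := Real.log (Cf β u Z) + 40 / δ * Jf β u Z with hc
  refine ⟨Real.exp c, Z, Real.exp_pos _, hZ, fun z hz => ?_⟩
  have hz0 : 0 < z := by linarith
  have hCz := Cpos hs hz0
  have hmono := le_of_deriv
    (f := fun x => Real.log (Cf β u x) + 1 / 2 * Real.log x + 40 / δ * Jf β u x) hz
    (fun x a _ => by
      have hx0 : 0 < x := by linarith
      exact (((hasDerivAt_C hs hx0).log (Cpos hs hx0).ne').add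
        ((Real.hasDerivAt_log hx0.ne').const_mul (1 / 2))).add
        ((hasDerivAt_J hs hx0).const_mul (40 / δ)))
    (fun x a _ => by
      have hx0 : 0 < x := by linarith
      have hCx := Cpos hs hx0
      have h1 := abs_le_psi (τ := 1 / 2) (by norm_num) (by norm_num) (Yf u x)
      have h2 := neg_abs_le (Yf u x)
      have h3 := psi_nonneg (Yf u x)
      have h4 := h x a
      have e : Cf β u x * Yf u x / x / Cf β u x + 1 / 2 * x⁻¹
          + 40 / δ * (Cf β u x * psi (Yf u x) / 5)
          = (Yf u x + 1 / 2 + 8 * psi (Yf u x) * (x * Cf β u x / δ)) / x := by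
        field_simp; ring
      rw [e]
      apply div_nonneg _ hx0.le
      have h5 : 1 ≤ x * Cf β u x / δ := by rwa [le_div_iff₀ hδ, one_mul]
      have h6 : 8 * psi (Yf u x) * 1 ≤ 8 * psi (Yf u x) * (x * Cf β u x / δ) := by gcongr
      norm_num at h1
      linarith)
  have hJ := J_nonpos hs hA hz0
  have hlZ : 0 ≤ Real.log Z := Real.log_nonneg hZ
  have h7 : c ≤ Real.log (Cf β u z * Real.sqrt z) := by
    rw [Real.log_mul hCz.ne' (Real.sqrt_pos.2 hz0).ne', Real.log_sqrt hz0.le]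
    have : 40 / δ * Jf β u z ≤ 0 := mul_nonpos_of_nonneg_of_nonpos (by positivity) hJ
    linarith
  exact (Real.le_log_iff_exp_le (mul_pos hCz (Real.sqrt_pos.2 hz0))).1 h7

/-- Using `|y| ≤ τ + 4 ψ(y) / τ` with `τ = 1 / √z` and `C √z ≥ δ`, the derivative `Y / z` of
`log C` is dominated by `z ^ (-3/2)` plus a multiple of `J'`, which is the derivative of a
convergent function `M`. -/
lemma exists_limit_C : ∃ c, 0 < c ∧ Tendsto (Cf β u) atTop (nhds c) := by
  obtain ⟨δ, Z, hδ, hZ, h⟩ := exists_sqrt_bound hs hA hβ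
  obtain ⟨j, hj, hjle⟩ := J_tendsto hs hA
  let M : ℝ → ℝ := fun x => -2 * (Real.sqrt x)⁻¹ + 20 / δ * Jf β u x
  let M' : ℝ → ℝ := fun x => (x * Real.sqrt x)⁻¹ + 20 / δ * (Cf β u x * psi (Yf u x) / 5)
  have hM : ∀ x, Z ≤ x → HasDerivAt M (M' x) x := by
    intro x hx
    have hx0 : 0 < x := by linarith
    have hsx := Real.sqrt_pos.2 hx0
    refine ((((Real.hasDerivAt_sqrt hx0.ne').inv hsx.ne').const_mul (-2)).add
      ((hasDerivAt_J hs hx0).const_mul (20 / δ))).congr_deriv ?_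
    simp only [M']
    congr 1
    have := Real.sq_sqrt hx0.le
    rw [← sub_eq_zero]
    field_simp
    rw [this]; ring
  have hL : ∀ x, Z ≤ x → HasDerivAt (fun x => Real.log (Cf β u x)) (Yf u x / x) x := by
    intro x hx
    have hx0 : 0 < x := by linarith
    have hC := Cpos hs hx0
    refine ((hasDerivAt_C hs hx0).log hC.ne').congr_deriv ?_
    field_simp
  have hbd : ∀ x, Z ≤ x → |Yf u x / x| ≤ M' x := by
    intro x hx
    have hx0 : 0 < x := by linarith
    have hC := Cpos hs hx0
    have hsx := Real.sqrt_pos.2 hx0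
    have hs1 : 1 ≤ Real.sqrt x := by rw [Real.one_le_sqrt]; linarith
    have h1 := abs_le_psi (τ := (Real.sqrt x)⁻¹) (by positivity) (inv_le_one_of_one_le₀ hs1)
      (Yf u x)
    have hp := psi_nonneg (Yf u x)
    rw [abs_div, abs_of_pos hx0, div_le_iff₀ hx0]
    refine h1.trans ?_
    have h2 := h x hx
    have hss := Real.mul_self_sqrt hx0.le
    simp only [M']
    have e1 : ((x * Real.sqrt x)⁻¹ + 20 / δ * (Cf β u x * psi (Yf u x) / 5)) * x
        = (Real.sqrt x)⁻¹ + 4 * psi (Yf u x) * Real.sqrt x *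
          ((Cf β u x * Real.sqrt x) / δ) := by
      rw [← sub_eq_zero]
      field_simp
      have h3 : Real.sqrt x ^ 3 = x * Real.sqrt x := by rw [pow_succ, Real.sq_sqrt hx0.le]
      rw [h3]
      ring
    rw [e1, div_inv_eq_mul]
    have h3 : 1 ≤ Cf β u x * Real.sqrt x / δ := by rwa [le_div_iff₀ hδ, one_mul]
    have : 4 * psi (Yf u x) * Real.sqrt x * 1 ≤ 4 * psi (Yf u x) * Real.sqrt x *
          ((Cf β u x * Real.sqrt x) / δ) := by gcongr
    linarith
  have hMt : Tendsto M atTop (nhds (-2 * 0 + 20 / δ * j)) :=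
    ((tendsto_inv_atTop_zero.comp Real.tendsto_sqrt_atTop).const_mul (-2)).add
      (hj.const_mul (20 / δ))
  -- `log C + M` is increasing and `log C - M` is decreasing, which bounds `log C + M`
  have hup : ∀ x y, Z ≤ x → x ≤ y → Real.log (Cf β u x) + M x ≤ Real.log (Cf β u y) + M y := by
    intro x y hx hxy
    exact le_of_deriv (f := fun x => Real.log (Cf β u x) + M x) hxy
      (fun t a _ => (hL t (hx.trans a)).add (hM t (hx.trans a)))
      (fun t a _ => by
        have := hbd t (hx.trans a)
        have := neg_abs_le (Yf u t / t)
        linarith)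
  have hdown : ∀ x, Z ≤ x → Real.log (Cf β u x) - M x ≤ Real.log (Cf β u Z) - M Z := by
    intro x hx
    have := le_of_deriv (f := fun x => M x - Real.log (Cf β u x)) hx
      (fun t a _ => (hM t a).sub (hL t a))
      (fun t a _ => by
        have := hbd t a
        have := le_abs_self (Yf u t / t)
        linarith)
    linarith
  have hMle : ∀ x, Z ≤ x → M x ≤ 20 / δ * j := by
    intro x hx
    have h1 : 0 ≤ (Real.sqrt x)⁻¹ := by positivity
    have h2 : 20 / δ * Jf β u x ≤ 20 / δ * j := by
      have := hjle x (by linarith)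
      gcongr
    simp only [M]; linarith
  set f : ℝ → ℝ := fun z => Real.log (Cf β u (max z Z)) + M (max z Z)
  have hm : Monotone f := fun x y hxy => hup _ _ (le_max_right _ _) (max_le_max_right Z hxy)
  have hb : BddAbove (Set.range f) := ⟨Real.log (Cf β u Z) - M Z + 2 * (20 / δ * j), by
    rintro _ ⟨x, rfl⟩
    have h1 := hdown (max x Z) (le_max_right _ _)
    have h2 := hMle (max x Z) (le_max_right _ _)
    simp only [f]; linarith⟩
  have ht := tendsto_atTop_ciSup hm hb
  have ht2 : Tendsto (fun z => Real.log (Cf β u z)) atTop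
      (nhds ((⨆ i, f i) - (-2 * 0 + 20 / δ * j))) := by
    refine (ht.sub hMt).congr' ?_
    filter_upwards [eventually_ge_atTop Z] with z hz
    simp [f, max_eq_left hz]
  refine ⟨_, Real.exp_pos _, ((Real.continuous_exp.tendsto _).comp ht2).congr' ?_⟩
  filter_upwards [eventually_gt_atTop 0] with z hz
  simp [Real.exp_log (Cpos hs hz)]

end glob

/-! ### Boundedness of `w'` and convergence of `H` -/

/-- The bound on `w' ^ 2 - 2 w w''` makes `w'' > 0` as long as `w > 0` and `w' > M`, so `w' > M`
persists. -/
lemma escape_forward {w w1 w2 : ℝ → ℝ} {M a b : ℝ} (hM : 0 < M)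
    (h0 : ∀ x, HasDerivAt w (w1 x) x) (h1 : ∀ x, HasDerivAt w1 (w2 x) x)
    (hq : ∀ x, a ≤ x → x ≤ b → w1 x ^ 2 - 2 * (w x * w2 x) ≤ M ^ 2)
    (hw : 0 < w a) (hw1 : M < w1 a) {x : ℝ} (hax : a ≤ x) (hxb : x ≤ b) :
    M * (x - a) ≤ w x := by
  have hgt : ∀ x, a ≤ x → x ≤ b → M < w1 x := by
    intro x hax hxb
    by_contra! hcon
    have hc : Continuous w1 := continuous_iff_continuousAt.2 fun z => (h1 z).continuousAt
    obtain ⟨t, h2, h3, h4, h5⟩ := first_hit (f := fun x => w1 x - M) (by fun_prop) hax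
      (by linarith) (by linarith)
    have hw1M : ∀ s, a ≤ s → s ≤ t → M ≤ w1 s := by
      intro s hs hst
      rcases hst.eq_or_lt with rfl | hlt
      · linarith
      · linarith [h5 s hs hlt]
    have hwp : ∀ s, a ≤ s → s ≤ t → 0 < w s := by
      intro s hs hst
      have := le_of_deriv hs (fun x _ _ => h0 x)
        (fun x h h' => hM.le.trans (hw1M x h (h'.trans hst)))
      linarith
    have := le_of_deriv h2.le (fun x _ _ => h1 x) (fun s h h' => by
      have e1 := hq s h (by linarith)
      have e2 := hw1M s h h'
      have e3 : M ^ 2 ≤ w1 s ^ 2 := by gcongr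
      have e4 : 0 ≤ w s * w2 s := by linarith
      exact nonneg_of_mul_nonneg_right e4 (hwp s h h'))
    linarith
  have := le_of_deriv (f := fun x => w x - M * x) hax
    (fun x _ _ => (h0 x).sub ((hasDerivAt_id' x).const_mul M))
    (fun s h h' => by have := hgt s h (h'.trans hxb); simp; linarith)
  linarith

lemma stays_above_right {F F1 F2 : ℝ → ℝ} {M a r : ℝ}
    (h0 : ∀ x, HasDerivAt F (F1 x) x) (h1 : ∀ x, HasDerivAt F1 (F2 x) x)
    (hq : ∀ x, a ≤ x → x ≤ a + r → -M ≤ F2 x) (hF1 : 0 ≤ F1 a) {x : ℝ} (hax : a ≤ x)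
    (hxb : x ≤ a + r) : F a - M * (x - a) ^ 2 / 2 ≤ F x := by
  have e1 : ∀ y, a ≤ y → y ≤ a + r → -M * (y - a) ≤ F1 y := by
    intro y hy hyb
    have := le_of_deriv (f := fun x => F1 x + M * x) hy
      (fun x _ _ => (h1 x).add ((hasDerivAt_id' x).const_mul M))
      (fun s h h' => by have := hq s h (h'.trans hyb); simp; linarith)
    linarith
  have := le_of_deriv (f := fun x => F x + M / 2 * (x - a) ^ 2)
      (f' := fun x => F1 x + M * (x - a)) hax
    (fun x _ _ => ((h0 x).add ((((hasDerivAt_id' x).sub_const a).pow 2).const_mul (M / 2))).congr_deriv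
      (by simp; ring))
    (fun s h h' => by have := e1 s h (h'.trans hxb); simp; linarith)
  simp only [sub_self] at this
  nlinarith

/-- If `F'' ≥ -M` near `a`, then `F` stays close to or above `F a` on one of the two sides of
`a`, depending on the sign of `F' a`. -/
lemma stays_above {F F1 F2 : ℝ → ℝ} {M a r : ℝ} (hr : 0 ≤ r) (hM : 0 ≤ M)
    (h0 : ∀ x, HasDerivAt F (F1 x) x) (h1 : ∀ x, HasDerivAt F1 (F2 x) x)
    (hq : ∀ x, a - r ≤ x → x ≤ a + r → -M ≤ F2 x) :
    ∃ p, a - r ≤ p ∧ p ≤ a ∧ ∀ x, p ≤ x → x ≤ p + r → F a - M * r ^ 2 / 2 ≤ F x := by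
  rcases le_total 0 (F1 a) with h | h
  · refine ⟨a, by linarith, le_rfl, fun x h2 h3 => ?_⟩
    have := stays_above_right h0 h1 (fun x h4 h5 => hq x (by linarith) h5) h h2 h3
    have : (x - a) ^ 2 ≤ r ^ 2 := by
      apply pow_le_pow_left₀ <;> linarith
    nlinarith
  · refine ⟨a - r, le_rfl, by linarith, fun x h2 h3 => ?_⟩
    have := stays_above_right (F := fun x => F (-x)) (F1 := fun x => -F1 (-x))
      (F2 := fun x => F2 (-x)) (M := M) (a := -a) (r := r) (x := -x)
      (fun x => ((h0 (-x)).comp x (hasDerivAt_neg x)).congr_deriv (by ring))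
      (fun x => ((h1 (-x)).comp x (hasDerivAt_neg x)).neg.congr_deriv (by ring))
      (fun x h4 h5 => hq _ (by linarith) (by linarith)) (by simpa using h) (by linarith)
      (by linarith)
    simp only [neg_neg] at this
    have : (-x - -a) ^ 2 ≤ r ^ 2 := by
      apply pow_le_pow_left₀ <;> linarith
    nlinarith

lemma psi_ge {e y : ℝ} (he : 0 ≤ e) (he1 : e ≤ 1) (h : e ≤ |Real.exp y - 1|) :
    e ^ 2 / 16 ≤ psi y := by
  set p := Real.exp (y / 2) with hp
  have hp0 : 0 < p := Real.exp_pos _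
  have h1 : Real.exp y = p ^ 2 := by rw [hp, ← Real.exp_nat_mul]; congr 1; push_cast; ring
  have h2 : y / 2 + 1 ≤ p := Real.add_one_le_exp _
  have h3 : (p - 1) ^ 2 ≤ psi y := by unfold psi; rw [h1]; nlinarith
  refine le_trans ?_ h3
  rw [h1] at h
  have h4 : |p ^ 2 - 1| ≤ |p - 1| * (|p - 1| + 2) := by
    rw [show p ^ 2 - 1 = (p - 1) * (p + 1) by ring, abs_mul]
    gcongr
    rw [abs_of_pos (by linarith : (0:ℝ) < p + 1)]
    linarith [le_abs_self (p - 1)]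
  have h5 : e / 4 ≤ |p - 1| := by
    by_contra! hc
    nlinarith [abs_nonneg (p - 1)]
  have h6 : (e / 4) ^ 2 ≤ |p - 1| ^ 2 := by gcongr
  rw [sq_abs] at h6
  linarith

section glob
variable {β : ℝ} {u : ℝ → ℝ} (hs : ∀ T, IsSol β u T)
  (hA : ∀ t, 0 < t → ¬ ACond β u t) (hβ : β ≤ 1 / 2)
include hs hA hβ

/-- From `J 1 ≤ J ≤ E`, the quantity `w' ^ 2 - 2 w w''` is bounded above by some `M ^ 2`. If
`|w'| > M` at a large `z`, `escape_forward` applies to one of `±w`, to the right when `w`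
and `w'` have the same sign and to the left otherwise. To the left it makes `|w 1|` too
large. To the right it contradicts `H > 0` or the linear bound on `∫H` coming from `J ≤ 0`
and the convergence of `C`. -/
lemma exists_W1_bound : ∃ M Z, 0 < M ∧ ∀ z, Z ≤ z → |W1 β u z| ≤ M := by
  obtain ⟨c, hc, hC⟩ := exists_limit_C hs hA hβ
  have hu := (hs 0).cont
  set M := 1 + |2 * Jf β u 1| with hMd
  have hM : 0 < M := by positivity
  have hM1 : 1 ≤ M := by have := abs_nonneg (2 * Jf β u 1); linarith
  have hQ : ∀ z, 1 ≤ z → W1 β u z ^ 2 - 2 * (W β u z * W2 β u z) ≤ M ^ 2 := by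
    intro z hz
    have h1 := J_le_En hs (by linarith : 0 < z)
    have h2 := J_mono hs zero_lt_one hz
    have h3 := neg_abs_le (2 * Jf β u 1)
    unfold En at h1
    nlinarith
  have hW := hasDerivAt_W (β := β) hu
  have hW1 := hasDerivAt_W1 (β := β) hu
  have hH := hasDerivAt_H (β := β) hu
  have hIH := hasDerivAt_IH (β := β) hu
  refine ⟨M, 2 + |W β u 1| / M, hM, fun z hz => ?_⟩
  have hz2 : |W β u 1| < M * (z - 1) := by
    have : |W β u 1| / M < z - 1 := by linarith
    rwa [div_lt_iff₀' hM] at this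
  have hz1 : 1 ≤ z := by have : 0 ≤ |W β u 1| / M := by positivity
                         linarith
  have hz0 : 0 < z := by linarith
  by_contra! hcon
  have hp : 0 < W β u z * W2 β u z := by
    have h1 := hQ z hz1
    have : M ^ 2 < |W1 β u z| ^ 2 := by gcongr
    rw [sq_abs] at this
    linarith
  have hWne : W β u z ≠ 0 := by intro h; simp [h] at hp
  rcases lt_abs.1 hcon with h1 | h1 <;> rcases lt_or_gt_of_ne hWne with h2 | h2
  · have := escape_forward (w := fun x => -W β u (-x)) (w1 := fun x => W1 β u (-x))
      (w2 := fun x => -W2 β u (-x)) (a := -z) (b := -1) (x := -1) hM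
      (fun x => ((hW (-x)).comp x (hasDerivAt_neg x)).neg.congr_deriv (by ring))
      (fun x => ((hW1 (-x)).comp x (hasDerivAt_neg x)).congr_deriv (by ring))
      (fun x _ h => by have := hQ (-x) (by linarith); linarith)
      (by simpa using h2) (by simpa using h1) (by linarith) le_rfl
    simp only [neg_neg] at this
    linarith [neg_abs_le (W β u 1)]
  · -- `w` would grow linearly, so `∫H` would be cubic
    have e1 : ∀ x, z ≤ x → M * (x - z) ≤ W β u x := fun x hx =>
      escape_forward (b := x) hM hW hW1 (fun y hy _ => hQ y (hz1.trans hy)) h2 h1 hx le_rfl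
    have e2 : ∀ x, z ≤ x → M / 2 * (x - z) ^ 2 ≤ H β u x := by
      intro x hx
      have := le_of_deriv (f := fun x => H β u x - M / 2 * (x - z) ^ 2)
        (f' := fun x => W β u x - M * (x - z)) hx
        (fun y _ _ => ((hH y).sub ((((hasDerivAt_id' y).sub_const z).pow 2).const_mul
          (M / 2))).congr_deriv (by simp; ring))
        (fun y h _ => by linarith [e1 y h])
      have h3 := Hpos hs hz0
      simp only [sub_self] at this
      nlinarith
    have e3 : ∀ x, z ≤ x → M / 6 * (x - z) ^ 3 ≤ IH β u x := by
      intro x hx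
      have := le_of_deriv (f := fun x => IH β u x - M / 6 * (x - z) ^ 3)
        (f' := fun x => H β u x - M / 2 * (x - z) ^ 2) hx
        (fun y _ _ => ((hIH y).sub ((((hasDerivAt_id' y).sub_const z).pow 3).const_mul
          (M / 6))).congr_deriv (by simp; ring))
        (fun y h _ => by linarith [e2 y h])
      have h3 : 0 ≤ IH β u z := by
        have := (hs z).IH_mono le_rfl hz0.le le_rfl
        simpa using this
      simp only [sub_self] at this
      nlinarith
    have hev : ∀ᶠ x in atTop, Cf β u x < c + 1 := hC.eventually (gt_mem_nhds (by linarith))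
    set A := |5 * β| + (z + 1) * (c + 1) with hAd
    have hA0 : c + 1 ≤ A := by nlinarith [abs_nonneg (5 * β)]
    obtain ⟨x, hx, hx2⟩ := (hev.and (eventually_ge_atTop (z + (12 * A + 12)))).exists
    have e4 := e3 x (by linarith)
    have e5 := IH_le hs hA (by linarith : 0 < x)
    obtain ⟨y, rfl⟩ : ∃ y, x = z + y := ⟨x - z, by ring⟩
    rw [show z + y - z = y by ring] at e4
    have hy : 12 * A + 12 ≤ y := by linarith
    have hy0 : 12 ≤ y := by linarith
    have e6 : y ^ 3 ≤ M * y ^ 3 := le_mul_of_one_le_left (by positivity) hM1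
    have e7 : (z + y) * Cf β u (z + y) ≤ (z + y) * (c + 1) := by gcongr
    have e8 : (z + y) * (c + 1) ≤ A - |5 * β| + y * A := by nlinarith
    have e9 : y ^ 3 / 6 ≤ A + y * A := by linarith [le_abs_self (5 * β)]
    have e10 : A * 12 ≤ y ^ 2 := by nlinarith
    nlinarith [mul_le_mul_of_nonneg_left hy (by positivity : 0 ≤ y ^ 2)]
  · have e1 : ∀ x, z ≤ x → M * (x - z) ≤ -W β u x := fun x hx =>
      escape_forward (b := x) (w := fun y => -W β u y) hM (fun y => (hW y).neg)
        (fun y => (hW1 y).neg) (w2 := fun y => - W2 β u y)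
        (fun y hy _ => by have := hQ y (hz1.trans hy); linarith) (by linarith) h1 hx le_rfl
    have := le_of_deriv (f := fun x => - H β u x - M / 2 * (x - z) ^ 2)
        (f' := fun x => - W β u x - M * (x - z)) (a := z) (b := z + 1 + H β u z * 2)
        (by have := Hpos hs hz0; linarith)
        (fun y _ _ => ((hH y).neg.sub ((((hasDerivAt_id' y).sub_const z).pow 2).const_mul
          (M / 2))).congr_deriv (by simp; ring))
        (fun y h _ => by linarith [e1 y h])
    have h3 := Hpos hs hz0
    have h4 := Hpos hs (z := z + 1 + H β u z * 2) (by linarith)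
    simp only [sub_self, show z + 1 + H β u z * 2 - z = 1 + 2 * H β u z by ring] at this
    nlinarith
  · have := escape_forward (w := fun x => W β u (-x)) (w1 := fun x => -W1 β u (-x))
      (w2 := fun x => W2 β u (-x)) (a := -z) (b := -1) (x := -1) hM
      (fun x => ((hW (-x)).comp x (hasDerivAt_neg x)).congr_deriv (by ring))
      (fun x => ((hW1 (-x)).comp x (hasDerivAt_neg x)).neg.congr_deriv (by ring))
      (fun x _ h => by have := hQ (-x) (by linarith); linarith)
      (by simpa using h2) (by simpa using h1) (by linarith) le_rfl
    simp only [neg_neg] at this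
    linarith [le_abs_self (W β u 1)]

/-- `H` has the same limit `c` as `C`. If `|H - c| ≥ d` at a late point, the bound on `H'' = w'`
keeps `|H - c| ≥ d / 2` on an interval of fixed length `r`. There `H = C exp Y` keeps `Y`
away from `0`, so `J` gains a fixed amount, exceeding its limit. -/
theorem exists_limit_H : ∃ c, 0 < c ∧ Tendsto (H β u) atTop (nhds c) := by
  obtain ⟨c, hc, hC⟩ := exists_limit_C hs hA hβ
  obtain ⟨j, hj, hJ⟩ := J_tendsto hs hA
  obtain ⟨M, Z, hM, hW1⟩ := exists_W1_bound hs hA hβ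
  have hu := (hs 0).cont
  refine ⟨c, hc, ?_⟩
  rw [Metric.tendsto_atTop']
  intro d hd
  set r := min 1 (d / M) with hr
  have hr0 : 0 < r := by positivity
  have hr1 : r ≤ 1 := min_le_left _ _
  have hMr : M * r ^ 2 ≤ d := by
    have : r ≤ d / M := min_le_right _ _
    rw [le_div_iff₀ hM] at this
    nlinarith
  set e := min 1 (d / (4 * (c + 1))) with he
  have he0 : 0 < e := by positivity
  have he1 : e ≤ 1 := min_le_left _ _
  have hed : e * (c + 1) ≤ d / 4 := by
    have : e ≤ d / (4 * (c + 1)) := min_le_right _ _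
    rw [le_div_iff₀ (by positivity)] at this
    linarith
  set m := (c / 2) * (e ^ 2 / 16) / 5 with hm
  have hm0 : 0 < m := by positivity
  have hCd : ∀ᶠ x in atTop, |Cf β u x - c| < min (d / 4) (min 1 (c / 2)) := by
    have := (Metric.tendsto_nhds.1 hC) (min (d / 4) (min 1 (c / 2))) (by positivity)
    simpa [Real.dist_eq] using this
  have hJd : ∀ᶠ x in atTop, j - m * r < Jf β u x :=
    hj.eventually (lt_mem_nhds (by have := mul_pos hm0 hr0; linarith))
  obtain ⟨Z1, hZ1⟩ := eventually_atTop.1 (hCd.and hJd)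
  set Z2 := max (max Z Z1) 1 with hZ2
  have hZa : Z ≤ Z2 := (le_max_left _ _).trans (le_max_left _ _)
  have hZb : Z1 ≤ Z2 := (le_max_right _ _).trans (le_max_left _ _)
  have hZc : 1 ≤ Z2 := le_max_right _ _
  refine ⟨Z2 + 1, fun z hz => ?_⟩
  rw [Real.dist_eq]
  by_contra! hcon
  -- `|H - c|` stays at least `d / 2` on an interval of length `r`
  obtain ⟨p, hp1, hp⟩ : ∃ p, Z2 ≤ p ∧ ∀ x, p ≤ x → x ≤ p + r → d / 2 ≤ |H β u x - c| := by
    rcases le_abs.1 hcon with h | h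
    · obtain ⟨p, h1, h2, h3⟩ := stays_above (a := z) hr0.le hM.le
        (fun x => (hasDerivAt_H (β := β) hu x).sub_const c) (hasDerivAt_W hu)
        (fun x h1 h2 => by have := hW1 x (by linarith); exact (abs_le.1 this).1)
      exact ⟨p, by linarith, fun x h4 h5 => (by linarith [h3 x h4 h5] : d / 2 ≤ _).trans
        (le_abs_self _)⟩
    · obtain ⟨p, h1, h2, h3⟩ := stays_above (a := z) hr0.le hM.le
        (fun x => ((hasDerivAt_H (β := β) hu x).sub_const c).neg)
        (fun x => (hasDerivAt_W (β := β) hu x).neg)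
        (fun x h1 h2 => by have := hW1 x (by linarith); linarith [(abs_le.1 this).2])
      exact ⟨p, by linarith, fun x h4 h5 => (by
        have := h3 x h4 h5
        simp only [Pi.neg_apply] at this
        linarith : d / 2 ≤ _).trans (neg_le_abs _)⟩
  have hp0 : 0 < p := by linarith
  have key := le_of_deriv (f := fun x => Jf β u x - m * x) (a := p) (b := p + r) (by linarith)
    (fun x h _ => (hasDerivAt_J hs (hp0.trans_le h)).sub ((hasDerivAt_id' x).const_mul m))
    (fun x h1 h2 => by
      have hx := (hZ1 x (by linarith)).1
      have hx1 : |Cf β u x - c| < d / 4 := hx.trans_le (min_le_left _ _)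
      have hx2 : |Cf β u x - c| < 1 := hx.trans_le ((min_le_right _ _).trans (min_le_left _ _))
      have hx3 : |Cf β u x - c| < c / 2 :=
        hx.trans_le ((min_le_right _ _).trans (min_le_right _ _))
      have hCx := Cpos hs (hp0.trans_le h1)
      have h3 : d / 4 ≤ |H β u x - Cf β u x| := by
        have := abs_sub_le (H β u x) (Cf β u x) c
        linarith [hp x h1 h2]
      have h4 : e ≤ |Real.exp (Yf u x) - 1| := by
        rw [← C_mul_exp, show Cf β u x * Real.exp (Yf u x) - Cf β u x =
          Cf β u x * (Real.exp (Yf u x) - 1) by ring, abs_mul, abs_of_pos hCx] at h3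
        have h5 : Cf β u x ≤ c + 1 := by linarith [(abs_lt.1 hx2).2]
        have h6 : Cf β u x * |Real.exp (Yf u x) - 1| ≤ (c + 1) * |Real.exp (Yf u x) - 1| := by
          gcongr
        by_contra! hlt
        nlinarith
      have h5 := psi_ge he0.le he1 h4
      have h6 : c / 2 ≤ Cf β u x := by linarith [(abs_lt.1 hx3).1]
      have : (c / 2) * (e ^ 2 / 16) ≤ Cf β u x * psi (Yf u x) := by gcongr
      simp only [hm, mul_one]
      linarith)
  have h1 := hJ (p + r) (by linarith)
  have h2 := (hZ1 p (by linarith)).2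
  linarith

end glob

/-! ### Analyticity -/

/-- Factorial bounds on the derivatives near `x` make the Taylor remainder tend to zero on a
small interval. -/
lemma analyticAt_of_bound {f : ℝ → ℝ} (hf : ∀ n : ℕ, ContDiff ℝ n f) {x A C δ : ℝ} (hδ : 0 < δ)
    (hC : 0 < C) (hb : ∀ (n : ℕ) (y : ℝ), |y - x| ≤ δ →
      |iteratedDeriv n f y| ≤ A * C ^ n * n.factorial) : AnalyticAt ℝ f x := by
  set p : FormalMultilinearSeries ℝ ℝ ℝ :=
    FormalMultilinearSeries.ofScalars ℝ (fun n ↦ iteratedDeriv n f x / n.factorial) with hp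
  have hA : 0 ≤ A := by
    have := (abs_nonneg _).trans (hb 0 x (by simpa using hδ.le))
    simpa using this
  set r : ℝ := min δ (1 / (2 * C)) with hr
  have hr0 : 0 < r := by positivity
  have hrδ : r ≤ δ := min_le_left _ _
  have hrC : C * r ≤ 1 / 2 := by
    have : r ≤ 1 / (2 * C) := min_le_right _ _
    rw [le_div_iff₀ (by positivity)] at this
    linarith
  have hterm : ∀ (n : ℕ) (t y : ℝ), |t - x| ≤ r → |y| ≤ r →
      |iteratedDeriv n f t * y ^ n / n.factorial| ≤ A * (1 / 2) ^ n := by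
    intro n t y ht hy
    rw [abs_div, abs_mul, abs_pow, Nat.abs_cast, div_le_iff₀ (by positivity)]
    calc |iteratedDeriv n f t| * |y| ^ n ≤ (A * C ^ n * n.factorial) * r ^ n := by
          gcongr
          exact hb n t (ht.trans hrδ)
      _ = A * (C * r) ^ n * n.factorial := by rw [mul_pow]; ring
      _ ≤ _ := by gcongr
  refine ⟨p, ⟨r.toNNReal, ?_, by simpa using hr0, ?_⟩⟩
  · refine FormalMultilinearSeries.le_radius_of_bound _ A fun n => ?_
    have := hterm n x r (by simpa using hr0.le) (abs_of_pos hr0).le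
    rw [Real.coe_toNNReal _ hr0.le, hp, FormalMultilinearSeries.ofScalars_norm, Real.norm_eq_abs]
    rw [show iteratedDeriv n f x * r ^ n / n.factorial
      = (iteratedDeriv n f x / n.factorial) * r ^ n by ring, abs_mul,
      abs_of_pos (pow_pos hr0 n)] at this
    refine this.trans (mul_le_of_le_one_right hA (pow_le_one₀ (by norm_num) (by norm_num)))
  · intro y hy
    have hyr : |y| < r := by
      simpa [edist_dist, ENNReal.ofReal_lt_ofReal_iff hr0, ← ENNReal.ofReal_coe_nnreal,
        max_eq_left hr0.le] using hy
    have hpn : ∀ n, p n (fun _ => y) = iteratedDeriv n f x * y ^ n / n.factorial := by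
      intro n
      simp [hp, FormalMultilinearSeries.ofScalars]
      ring
    simp_rw [hpn]
    have hsum : Summable fun n : ℕ => A * (1 / 2 : ℝ) ^ n :=
      summable_geometric_two.mul_left A
    have hS : Summable fun n : ℕ => iteratedDeriv n f x * y ^ n / n.factorial :=
      Summable.of_norm_bounded hsum fun n => hterm n x y (by simpa using hr0.le) hyr.le
    rw [hS.hasSum_iff_tendsto_nat]
    rw [← tendsto_add_atTop_iff_nat 1, tendsto_iff_norm_sub_tendsto_zero]
    have hz : Tendsto (fun n : ℕ => A * (1 / 2 : ℝ) ^ (n + 1)) atTop (nhds 0) :=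
      (tendsto_add_atTop_iff_nat 1).2 hsum.tendsto_atTop_zero
    refine squeeze_zero (fun _ => norm_nonneg _) (fun n => ?_) hz
    rcases eq_or_ne y 0 with rfl | hy0
    · rw [Finset.sum_range_succ']
      simp
      positivity
    · have hne : x ≠ x + y := by simpa using hy0
      obtain ⟨t, ht, hT⟩ := taylor_mean_remainder_lagrange_iteratedDeriv (f := f) (n := n) hne
        (by exact_mod_cast (hf (n + 1)).contDiffOn)
      rw [taylor_within_apply] at hT
      have hu : UniqueDiffOn ℝ (Set.uIcc x (x + y)) := uniqueDiffOn_uIcc hne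
      have hsm : ∑ k ∈ Finset.range (n + 1), (((k.factorial : ℝ))⁻¹ * (x + y - x) ^ k) •
          iteratedDerivWithin k f (Set.uIcc x (x + y)) x
          = ∑ k ∈ Finset.range (n + 1), iteratedDeriv k f x * y ^ k / k.factorial := by
        refine Finset.sum_congr rfl fun k _ => ?_
        rw [iteratedDerivWithin_eq_iteratedDeriv hu (hf k).contDiffAt Set.left_mem_uIcc]
        simp
        ring
      rw [hsm] at hT
      rw [norm_sub_rev, hT, add_sub_cancel_left]
      refine hterm _ _ _ ?_ hyr.le
      have := Set.abs_sub_left_of_mem_uIcc (Set.uIoo_subset_uIcc_self ht)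
      simp at this
      linarith

/-- `∫₀¹ sʲ f (s z) ds`. For `j = 0` and `f = w` this is `K`. -/
def G (j : ℕ) (f : ℝ → ℝ) (z : ℝ) : ℝ := ∫ s in (0:ℝ)..1, s ^ j * f (s * z)

lemma hasDerivAt_G {f f' : ℝ → ℝ} (hf : ∀ x, HasDerivAt f (f' x) x) (hf' : Continuous f')
    (j : ℕ) (z : ℝ) : HasDerivAt (G j f) (G (j + 1) f' z) z := by
  have hc : Continuous f := continuous_iff_continuousAt.2 fun z => (hf z).continuousAt
  obtain ⟨B, hB⟩ := (isCompact_Icc (a := -(|z| + 1)) (b := |z| + 1)).exists_bound_of_continuousOn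
    hf'.continuousOn
  refine (intervalIntegral.hasDerivAt_integral_of_dominated_loc_of_deriv_le
    (μ := MeasureTheory.volume) (bound := fun _ => B)
    (F := fun z s => s ^ j * f (s * z)) (F' := fun z s => s ^ (j + 1) * f' (s * z))
    (Metric.ball_mem_nhds z one_pos) ?_ ?_ ?_ ?_ ?_ ?_).2
  · exact Eventually.of_forall fun x => Continuous.aestronglyMeasurable (by fun_prop)
  · exact Continuous.intervalIntegrable (by fun_prop) _ _
  · exact Continuous.aestronglyMeasurable (by fun_prop)
  · refine Eventually.of_forall fun s hs x hx => ?_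
    rw [Set.uIoc_of_le zero_le_one] at hs
    rw [Metric.mem_ball, Real.dist_eq] at hx
    have h1 : |s * x| ≤ |z| + 1 := by
      rw [abs_mul, abs_of_pos hs.1]
      have := abs_sub_abs_le_abs_sub x z
      nlinarith [hs.2, abs_nonneg x]
    have h2 := hB (s * x) (abs_le.1 h1)
    rw [norm_mul, norm_pow, Real.norm_eq_abs s, abs_of_pos hs.1]
    exact (mul_le_of_le_one_left (norm_nonneg _) (pow_le_one₀ hs.1.le hs.2)).trans h2
  · exact intervalIntegrable_const
  · refine Eventually.of_forall fun s _ x _ => ?_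
    have h1 : HasDerivAt (fun x => s * x) s x := by simpa using (hasDerivAt_id' x).const_mul s
    exact (((hf (s * x)).comp x h1).const_mul (s ^ j)).congr_deriv (by ring)

/-- Differentiating under the integral sign `n` times. -/
lemma iteratedDeriv_G (n : ℕ) : ∀ {f : ℝ → ℝ} (j : ℕ), ContDiff ℝ n f →
    ContDiff ℝ n (G j f) ∧ iteratedDeriv n (G j f) = G (j + n) (iteratedDeriv n f) := by
  induction n with
  | zero =>
    intro f j hf
    have hc : Continuous f := hf.continuous
    refine ⟨?_, by simp⟩
    rw [Nat.cast_zero, contDiff_zero]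
    unfold G
    exact intervalIntegral.continuous_parametric_intervalIntegral_of_continuous'
      (by fun_prop) _ _
  | succ n ih =>
    intro f j hf
    rw [Nat.cast_succ, contDiff_succ_iff_deriv] at hf
    obtain ⟨hd, -, hf⟩ := hf
    have hD := hasDerivAt_G (fun x => (hd x).hasDerivAt) hf.continuous j
    have hE : deriv (G j f) = G (j + 1) (deriv f) := funext fun z => (hD z).deriv
    obtain ⟨h1, h2⟩ := ih (j + 1) hf
    refine ⟨?_, ?_⟩
    · rw [Nat.cast_succ, contDiff_succ_iff_deriv, hE]
      exact ⟨fun z => (hD z).differentiableAt, by simp, h1⟩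
    · rw [iteratedDeriv_succ', hE, h2, iteratedDeriv_succ']
      congr 1
      ring

lemma abs_G_le {f : ℝ → ℝ} {Z B : ℝ} (j : ℕ) (hB : ∀ y, |y| ≤ Z → |f y| ≤ B) {z : ℝ}
    (hz : |z| ≤ Z) : |G j f z| ≤ B := by
  have := intervalIntegral.norm_integral_le_of_norm_le_const (a := 0) (b := 1) (C := B)
    (f := fun s => s ^ j * f (s * z)) (fun s hs => by
      rw [Set.uIoc_of_le zero_le_one] at hs
      rw [norm_mul, norm_pow, Real.norm_eq_abs s, abs_of_pos hs.1]
      refine (mul_le_of_le_one_left (norm_nonneg _) (pow_le_one₀ hs.1.le hs.2)).trans (hB _ ?_)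
      rw [abs_mul, abs_of_pos hs.1]
      nlinarith [hs.2, abs_nonneg z])
  simpa [G] using this

/-- The sum produced by the Leibniz rule in the induction for the derivative bounds. The
truncated subtraction gives the first terms the value `1 / (j + 1)!`. -/
lemma sum_factorial_le (n : ℕ) : ∑ j ∈ Finset.range n,
    ((j + 1 - 4).factorial : ℝ) / (j + 1).factorial ≤ 4 := by
  have key : ∀ j : ℕ, ((j + 1 - 4).factorial : ℝ) / (j + 1).factorial
      ≤ 4 / (j + 1 : ℝ) - 4 / (j + 2 : ℝ) := by
    intro j
    have h2 : (0:ℝ) < (j + 1 : ℕ).factorial := by positivity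
    rw [div_le_iff₀ h2, div_sub_div _ _ (by positivity) (by positivity), div_mul_eq_mul_div,
      le_div_iff₀ (by positivity)]
    match j with
    | 0 => norm_num
    | 1 => norm_num
    | 2 => norm_num [Nat.factorial]
    | k + 3 =>
      simp only [show k + 3 + 1 - 4 = k by omega, Nat.factorial_succ]
      push_cast
      have : (0:ℝ) < k.factorial := by positivity
      have h3 : ((k:ℝ) + 3 + 1) * (k + 3 + 2) ≤ 4 * ((k + 3 + 1) * ((k + 2 + 1) * ((k + 1 + 1) * (k + 0 + 1)))) := by
        have : (0:ℝ) ≤ k := by positivity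
        nlinarith [mul_nonneg this this, pow_nonneg this 3, pow_nonneg this 4]
      nlinarith
  calc _ ≤ ∑ j ∈ Finset.range n, (4 / ((j:ℝ) + 1) - 4 / (j + 2 : ℝ)) :=
        Finset.sum_le_sum fun j _ => key j
    _ = ∑ j ∈ Finset.range n, (4 / ((j:ℝ) + 1) - 4 / ((j + 1 : ℕ) + 1 : ℝ)) :=
        Finset.sum_congr rfl fun j _ => by push_cast; ring
    _ = 4 - 4 / ((n:ℝ) + 1) := by
        rw [Finset.sum_range_sub' (fun j : ℕ => 4 / ((j:ℝ) + 1))]; simp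
    _ ≤ 4 := by have : 0 ≤ 4 / ((n:ℝ) + 1) := by positivity
                linarith

section profile
variable {w w1 w2 w3 : ℝ → ℝ} (h0 : ∀ x, HasDerivAt w (w1 x) x)
  (h1 : ∀ x, HasDerivAt w1 (w2 x) x) (h2 : ∀ x, HasDerivAt w2 (w3 x) x)
  (hK : ∀ x, 0 < G 0 w x) (h3 : ∀ x, HasDerivAt w3 (w x / (5 * G 0 w x)) x)
include h0 h1 h2 hK h3

lemma smooth_profile (n : ℕ) : ContDiff ℝ n w := by
  have step : ∀ {n : ℕ} {f f' : ℝ → ℝ}, (∀ x, HasDerivAt f (f' x) x) → ContDiff ℝ n f' →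
      ContDiff ℝ (n + 1 : ℕ) f := by
    intro n f f' hf hf'
    have : deriv f = f' := funext fun x => (hf x).deriv
    rw [Nat.cast_succ, contDiff_succ_iff_deriv, this]
    exact ⟨fun x => (hf x).differentiableAt, by simp, hf'⟩
  have down : ∀ {n : ℕ} {f : ℝ → ℝ}, ContDiff ℝ (n + 1 : ℕ) f → ContDiff ℝ n f :=
    fun h => h.of_le (by exact_mod_cast Nat.le_succ _)
  induction n with
  | zero =>
    rw [Nat.cast_zero, contDiff_zero]
    exact continuous_iff_continuousAt.2 fun z => (h0 z).continuousAt
  | succ n ih =>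
    have hk := (iteratedDeriv_G n 0 ih).1
    have e3 := step h3 (ih.div (contDiff_const.mul hk) fun x => by have := hK x; positivity)
    exact step h0 (down (step h1 (down (step h2 (down e3)))))

/-- The `n`-th derivative of `K w'''' = w / 5`, solved for the term with the highest derivative. -/
lemma iteratedDeriv_rec (n : ℕ) (z : ℝ) : G 0 w z * iteratedDeriv (n + 4) w z
    = iteratedDeriv n w z / 5 - ∑ j ∈ Finset.range n, (n.choose (j + 1) : ℝ) *
      G (j + 1) (iteratedDeriv (j + 1) w) z * iteratedDeriv (n - (j + 1) + 4) w z := by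
  have hsm := smooth_profile h0 h1 h2 hK h3
  have hk := fun m => (iteratedDeriv_G m 0 (hsm m))
  have d0 : deriv w = w1 := funext fun x => (h0 x).deriv
  have d1 : deriv w1 = w2 := funext fun x => (h1 x).deriv
  have d2 : deriv w2 = w3 := funext fun x => (h2 x).deriv
  have d3 : deriv w3 = fun x => w x / (5 * G 0 w x) := funext fun x => (h3 x).deriv
  have e4 : ∀ m, iteratedDeriv (m + 4) w = iteratedDeriv m (deriv w3) := by
    intro m
    rw [iteratedDeriv_succ', iteratedDeriv_succ', iteratedDeriv_succ', iteratedDeriv_succ',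
      d0, d1, d2]
  have hv : ContDiff ℝ n (deriv w3) := by
    rw [d3]
    exact (hsm n).div (contDiff_const.mul (hk n).1) fun x => by have := hK x; positivity
  have hmul : (G 0 w * deriv w3) = fun x => (1 / 5) * w x := by
    funext x
    have := hK x
    simp only [Pi.mul_apply, d3]
    field_simp
  have hL := iteratedDeriv_mul (x := z) (hk n).1.contDiffAt hv.contDiffAt
  rw [hmul, iteratedDeriv_const_mul_field, Finset.sum_range_succ'] at hL
  have hS : ∀ j ∈ Finset.range n, (n.choose (j + 1) : ℝ) * iteratedDeriv (j + 1) (G 0 w) z *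
      iteratedDeriv (n - (j + 1)) (deriv w3) z = (n.choose (j + 1) : ℝ) *
      G (j + 1) (iteratedDeriv (j + 1) w) z * iteratedDeriv (n - (j + 1) + 4) w z := by
    intro j _
    rw [(hk (j + 1)).2, e4, zero_add]
  rw [Finset.sum_congr rfl hS] at hL
  simp only [Nat.choose_zero_right, Nat.cast_one, one_mul, iteratedDeriv_zero, Nat.sub_zero] at hL
  rw [e4]
  linarith

/-- Factorial bounds for the derivatives on `[-Z, Z]`. The truncated subtraction `n - 4` covers
the first four derivatives by the constant `A`; the shift by `4` is what lets the constant
`C` absorb the Leibniz sum. -/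
lemma exists_bound (Z : ℝ) : ∃ A C : ℝ, 1 ≤ A ∧ 1 ≤ C ∧ ∀ (n : ℕ) (y : ℝ), |y| ≤ Z →
    |iteratedDeriv n w y| ≤ A * C ^ (n - 4) * (n - 4).factorial := by
  have hsm := smooth_profile h0 h1 h2 hK h3
  have hcI : ∀ n, Continuous (iteratedDeriv n w) := fun n =>
    (hsm n).continuous_iteratedDeriv n le_rfl
  have hb : ∀ n, ∃ B, ∀ y ∈ Set.Icc (-Z) Z, ‖iteratedDeriv n w y‖ ≤ B := fun n =>
    isCompact_Icc.exists_bound_of_continuousOn (hcI n).continuousOn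
  choose B hB using hb
  obtain ⟨A, hA1, hA⟩ : ∃ A, 1 ≤ A ∧ ∀ n, n ≤ 4 → B n ≤ A := by
    refine ⟨1 + ∑ n ∈ Finset.range 5, |B n|, ?_, fun n hn => ?_⟩
    · have : 0 ≤ ∑ n ∈ Finset.range 5, |B n| := Finset.sum_nonneg fun _ _ => abs_nonneg _
      linarith
    · have := Finset.single_le_sum (f := fun n => |B n|) (s := Finset.range 5)
        (fun _ _ => abs_nonneg _) (Finset.mem_range.2 (by omega : n < 5))
      have := le_abs_self (B n)
      linarith
  have hcG : Continuous (G 0 w) := (iteratedDeriv_G 0 0 (hsm 0)).1.continuous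
  obtain ⟨κ, hκ, hKκ⟩ : ∃ κ, 0 < κ ∧ ∀ y, |y| ≤ Z → κ ≤ G 0 w y := by
    rcases lt_or_ge Z 0 with hZ | hZ
    · exact ⟨1, one_pos, fun y hy => absurd ((abs_nonneg y).trans hy) (by linarith)⟩
    · obtain ⟨x, -, hx⟩ := isCompact_Icc.exists_isMinOn (s := Set.Icc (-Z) Z)
        ⟨0, by simpa using hZ⟩ hcG.continuousOn
      exact ⟨G 0 w x, hK x, fun y hy => hx (abs_le.1 hy)⟩
  have hA0 : 0 < A := by linarith
  set C := max 1 ((1 + 4 * A) / κ) with hC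
  have hC1 : 1 ≤ C := le_max_left _ _
  have hC0 : 0 < C := by linarith
  have hCκ : 1 + 4 * A ≤ κ * C := by
    have : (1 + 4 * A) / κ ≤ C := le_max_right _ _
    rwa [div_le_iff₀' hκ] at this
  refine ⟨A, C, hA1, hC1, fun n => ?_⟩
  induction n using Nat.strong_induction_on with
  | _ m ih =>
  intro y hy
  rcases le_or_gt m 4 with hm | hm
  · rw [Nat.sub_eq_zero_of_le hm]
    have := hB m y (abs_le.1 hy)
    simpa using this.trans (hA m hm)
  obtain ⟨n, rfl⟩ : ∃ n, m = n + 1 + 4 := ⟨m - 5, by omega⟩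
  have hrec := iteratedDeriv_rec h0 h1 h2 hK h3 (n + 1) y
  rw [show n + 1 + 4 - 4 = n + 1 by omega]
  have hpow : ∀ a : ℕ, a ≤ n → C ^ a ≤ C ^ n := fun a ha => pow_le_pow_right₀ hC1 ha
  have t1 : |iteratedDeriv (n + 1) w y / 5| ≤ A * C ^ n * (n + 1).factorial := by
    have := ih (n + 1) (by omega) y hy
    rw [abs_div, abs_of_pos (by norm_num : (0:ℝ) < 5)]
    have e1 : C ^ (n + 1 - 4) ≤ C ^ n := hpow _ (by omega)
    have e2 : ((n + 1 - 4).factorial : ℝ) ≤ (n + 1).factorial := by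
      exact_mod_cast Nat.factorial_le (by omega)
    have e3 : A * C ^ (n + 1 - 4) * ((n + 1 - 4).factorial : ℝ)
        ≤ A * C ^ n * (n + 1).factorial := by gcongr
    have := abs_nonneg (iteratedDeriv (n + 1) w y)
    linarith
  have t2 : ∀ j ∈ Finset.range (n + 1), |((n + 1).choose (j + 1) : ℝ) *
      G (j + 1) (iteratedDeriv (j + 1) w) y * iteratedDeriv (n + 1 - (j + 1) + 4) w y|
      ≤ A ^ 2 * C ^ n * (n + 1).factorial *
        (((j + 1 - 4).factorial : ℝ) / (j + 1).factorial) := by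
    intro j hj
    rw [Finset.mem_range] at hj
    have g1 := abs_G_le (j + 1) (ih (j + 1) (by omega)) hy
    have g2 := ih (n + 1 - (j + 1) + 4) (by omega) y hy
    rw [Nat.add_sub_cancel] at g2
    have hch : ((n + 1).choose (j + 1) : ℝ) * (n + 1 - (j + 1)).factorial
        = (n + 1).factorial / (j + 1).factorial := by
      rw [eq_div_iff (by positivity)]
      have := Nat.choose_mul_factorial_mul_factorial (by omega : j + 1 ≤ n + 1)
      rw [← this]
      push_cast
      ring
    have e1 : C ^ (j + 1 - 4) * C ^ (n + 1 - (j + 1)) ≤ C ^ n := by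
      rw [← pow_add]
      exact hpow _ (by omega)
    rw [abs_mul, abs_mul, Nat.abs_cast]
    calc _ ≤ ((n + 1).choose (j + 1) : ℝ) * (A * C ^ (j + 1 - 4) * (j + 1 - 4).factorial) *
          (A * C ^ (n + 1 - (j + 1)) * (n + 1 - (j + 1)).factorial) := by gcongr
      _ = A ^ 2 * (C ^ (j + 1 - 4) * C ^ (n + 1 - (j + 1))) * (((n + 1).choose (j + 1) : ℝ) *
          (n + 1 - (j + 1)).factorial) * (j + 1 - 4).factorial := by ring
      _ ≤ A ^ 2 * C ^ n * (((n + 1).choose (j + 1) : ℝ) *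
          (n + 1 - (j + 1)).factorial) * (j + 1 - 4).factorial := by gcongr
      _ = _ := by rw [hch]; ring
  have t3 : |∑ j ∈ Finset.range (n + 1), ((n + 1).choose (j + 1) : ℝ) *
      G (j + 1) (iteratedDeriv (j + 1) w) y * iteratedDeriv (n + 1 - (j + 1) + 4) w y|
      ≤ A ^ 2 * C ^ n * (n + 1).factorial * 4 := by
    refine (Finset.abs_sum_le_sum_abs _ _).trans ((Finset.sum_le_sum t2).trans ?_)
    rw [← Finset.mul_sum]
    gcongr
    exact sum_factorial_le _
  have t4 : κ * |iteratedDeriv (n + 1 + 4) w y| ≤ A * C ^ n * (n + 1).factorial +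
      A ^ 2 * C ^ n * (n + 1).factorial * 4 := by
    calc _ ≤ G 0 w y * |iteratedDeriv (n + 1 + 4) w y| := by gcongr; exact hKκ y hy
      _ = |G 0 w y * iteratedDeriv (n + 1 + 4) w y| := by rw [abs_mul, abs_of_pos (hK y)]
      _ ≤ _ := by
        rw [hrec]
        exact (abs_sub _ _).trans (add_le_add t1 t3)
  refine le_of_mul_le_mul_left (t4.trans ?_) hκ
  have e5 : 0 ≤ A * C ^ n * ((n + 1).factorial : ℝ) := by positivity
  calc _ = (A * C ^ n * ((n + 1).factorial : ℝ)) * (1 + 4 * A) := by ring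
    _ ≤ (A * C ^ n * ((n + 1).factorial : ℝ)) * (κ * C) := by gcongr
    _ = _ := by ring

theorem analytic_primitive {h : ℝ → ℝ} (hh : ∀ x, HasDerivAt h (w x) x) :
    AnalyticOnNhd ℝ h Set.univ := by
  have hsm := smooth_profile h0 h1 h2 hK h3
  have hd : deriv h = w := funext fun x => (hh x).deriv
  have hc : Continuous h := continuous_iff_continuousAt.2 fun z => (hh z).continuousAt
  have hhs : ∀ n : ℕ, ContDiff ℝ n h := by
    intro n
    refine ContDiff.of_le (n := (n + 1 : ℕ)) ?_ (by exact_mod_cast Nat.le_succ _)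
    rw [Nat.cast_succ, contDiff_succ_iff_deriv, hd]
    exact ⟨fun x => (hh x).differentiableAt, by simp, hsm n⟩
  intro x _
  obtain ⟨A, C, hA, hC, hb⟩ := exists_bound h0 h1 h2 hK h3 (|x| + 1)
  obtain ⟨B, hB⟩ := (isCompact_Icc (a := -(|x| + 1)) (b := |x| + 1)).exists_bound_of_continuousOn
    hc.continuousOn
  refine analyticAt_of_bound hhs (A := A + |B|) (C := C) one_pos (by linarith) fun n y hy => ?_
  have hy' : |y| ≤ |x| + 1 := by
    have := abs_sub_abs_le_abs_sub y x
    linarith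
  have hB0 := abs_nonneg B
  cases n with
  | zero =>
    have := hB y (abs_le.1 hy')
    have := le_abs_self B
    simp at *
    linarith
  | succ n =>
    rw [iteratedDeriv_succ', hd]
    refine (hb n y hy').trans ?_
    have e1 : C ^ (n - 4) ≤ C ^ (n + 1) := pow_le_pow_right₀ hC (by omega)
    have e2 : ((n - 4).factorial : ℝ) ≤ (n + 1).factorial := by
      exact_mod_cast Nat.factorial_le (by omega)
    have : A ≤ A + |B| := by linarith
    gcongr

end profile

/-! ### The profile -/

lemma G_zero_eq (β : ℝ) (u : ℝ → ℝ) : G 0 (W β u) = K β u := by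
  funext z
  simp [G, K]

/-- The analytic odd profile with its chain of derivatives, before the normalisation of its
limit. -/
theorem exists_profile : ∃ H W W1 W2 u K : ℝ → ℝ, AnalyticOnNhd ℝ H Set.univ ∧
    (∀ z, H (-z) = -H z) ∧ (∀ z, HasDerivAt H (W z) z) ∧ (∀ z, HasDerivAt W (W1 z) z) ∧
    (∀ z, HasDerivAt W1 (W2 z) z) ∧ (∀ z, HasDerivAt W2 (u z) z) ∧
    (∀ z, HasDerivAt u (W z / (5 * K z)) z) ∧ (∀ z, 0 < K z) ∧ (∀ z, z * K z = H z) ∧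
    ∃ c, 0 < c ∧ Tendsto H atTop (nhds c) := by
  obtain ⟨β, u, -, hβ, hs, ho, hA⟩ := exists_global
  have hu := (hs 0).cont
  have hKpos : ∀ z, 0 < K β u z := fun z => by
    rw [← K_abs ho]
    exact (hs |z|).Kpos _ (abs_nonneg z) le_rfl
  have hder : ∀ z, HasDerivAt u (W β u z / (5 * K β u z)) z := by
    intro z
    rcases le_total 0 z with h | h
    · exact (hs z).der z h le_rfl
    · have h1 := (hs (-z)).der (-z) (by linarith) le_rfl
      have h2 := (h1.comp z (hasDerivAt_neg z)).neg
      rw [W_even ho, K_even ho] at h2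
      refine (h2.congr_deriv (by ring)).congr_of_eventuallyEq (Eventually.of_forall fun x => ?_)
      simp [ho]
  refine ⟨H β u, W β u, W1 β u, W2 β u, u, K β u, ?_, H_odd ho, hasDerivAt_H hu,
    hasDerivAt_W hu, hasDerivAt_W1 hu, hasDerivAt_W2 hu, hder, hKpos, mul_K,
    exists_limit_H hs hA hβ⟩
  exact analytic_primitive (hasDerivAt_W hu) (hasDerivAt_W1 hu) (hasDerivAt_W2 hu)
    (by rwa [G_zero_eq]) (by rwa [G_zero_eq]) (hasDerivAt_H hu)

end
end ShockProfile

/-- There exists a real-analytic, odd function `g : ℝ → ℝ` satisfying the fifth-order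
blow-up similarity ODE `g·g⁽⁵⁾ = -(1/5)·z·g'` on all of `ℝ`, with `g → 1` at `-∞`
and `g → -1` at `+∞`. -/
theorem exists_shock_similarity_profile_NDE50 :
    ∃ g : ℝ → ℝ,
      AnalyticOnNhd ℝ g Set.univ ∧
      (∀ z : ℝ, g (-z) = -g z) ∧
      (∀ z : ℝ, g z * iteratedDeriv 5 g z = -(1/5) * z * deriv g z) ∧
      Tendsto g atBot (nhds 1) ∧
      Tendsto g atTop (nhds (-1)) := by
  obtain ⟨H, W, W1, W2, u, K, han, hodd, h0, h1, h2, h3, h4, hK, hzK, c, hc, hlim⟩ :=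
    ShockProfile.exists_profile
  -- rescaling `z ↦ l z` with `l ^ 5 = c` compensates the normalisation of the height
  obtain ⟨l, hl, hl5⟩ : ∃ l : ℝ, 0 < l ∧ l ^ 5 = c :=
    ⟨c ^ ((1:ℝ) / 5), by positivity, by
      rw [← Real.rpow_natCast, ← Real.rpow_mul hc.le]; norm_num⟩
  have hsc : ∀ {f f' : ℝ → ℝ} (a : ℝ), (∀ z, HasDerivAt f (f' z) z) →
      deriv (fun z => a * f (l * z)) = fun z => (a * l) * f' (l * z) := by
    intro f f' a hf
    funext z
    have hlz : HasDerivAt (fun z => l * z) l z := by simpa using (hasDerivAt_id' z).const_mul l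
    exact ((((hf (l * z)).comp z hlz).const_mul a).congr_deriv (by ring)).deriv
  have hodd' : ∀ z, (-c⁻¹) * H (l * -z) = -((-c⁻¹) * H (l * z)) := by
    intro z
    rw [mul_neg, hodd]
    ring
  have htop : Tendsto (fun z => (-c⁻¹) * H (l * z)) atTop (nhds (-1)) := by
    have := (hlim.comp (tendsto_id.const_mul_atTop hl)).const_mul (-c⁻¹)
    rwa [neg_mul, inv_mul_cancel₀ hc.ne'] at this
  refine ⟨fun z => (-c⁻¹) * H (l * z), ?_, hodd', ?_, ?_, htop⟩
  · intro z _
    exact analyticAt_const.mul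
      ((han (l * z) trivial).comp_of_eq (analyticAt_const.mul analyticAt_id) rfl)
  · intro z
    simp only [iteratedDeriv_succ', iteratedDeriv_zero]
    rw [hsc _ h0, hsc _ h1, hsc _ h2, hsc _ h3, hsc _ h4, ← hzK (l * z)]
    have hKz := hK (l * z)
    rw [show ((-c⁻¹) * l * l * l * l * l) = (-c⁻¹) * l ^ 5 by ring, hl5]
    field_simp
  · have := (htop.comp tendsto_neg_atBot_atTop).neg
    rw [neg_neg] at this
    refine this.congr fun z => ?_
    simp only [Function.comp]
    rw [hodd', neg_neg]
end

section
/- There exists a function g : ℝ → ℝ that is real-analytic on ℝ, odd, positive for z < 0, monotone decreasing, satisfies g(z) → 1 as z → -∞ and g(z) → -1 as z → +∞, and solves, for every z ∈ ℝ, the fifth-order ODE (g·g')⁽⁴⁾(z) = 120·z·g'(z) + 240·z²·g''(z) + 120·z³·g'''(z) + 20·z⁴·g⁽⁴⁾(z) + z⁵·g⁽⁵⁾(z). -/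
/-!
The right-hand side of the ODE is `(z⁵ g')⁽⁴⁾`, so it suffices to solve `(g - z⁵) g' = a z` for some
constant `a > 0`. Write `g = z⁵ - z k(z)` and take `a = 1`. Then `(z k)² = z² + 10 ∫₀ᶻ s⁵ k(s) ds`,
that is
`k(z)² = 1 + 10 z⁴ ∫₀¹ t⁵ k(t z) dt`,
which is regular at the singular point `z = 0` of the first-order ODE.

For fixed `z` the function `x(τ) = k(τ z)` on `[0, 1]` solves `x² = 1 + c M x` in the Banach algebra
`C([0, 1])`, where `c = 10 z⁴` and `(M x)(τ) = ∫₀¹ t⁵ τ⁴ x(t τ) dt` is linear and monotone.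
* Existence and uniqueness of a positive solution for every `c ≥ 0`: in the variable `φ = log x` the
  equation reads `φ = ½ log (1 + c M exp φ)`, whose right-hand side is a `½`-contraction of
  `C([0, 1])` (`contracting_logStep`).
* Uniqueness gives the scaling relation between solutions with different `z` (`sol_apply`), so they
  all come from a single function `k`.
* Analyticity of `k`: the linearization `v ↦ 2 x v - c M v` is invertible, because the weight `x`
  turns `(c / 2x) M` into an operator of norm at most `½` (`IsSol.isInvertible`). The analytic
  implicit function theorem shows that `x` depends analytically on `c`, and `k(z) = x(1)`.

The function `g₀ = z⁵ - z k` is odd and satisfies `g₀' = -1/k`, so it is strictly decreasing. As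
`k ≥ (1 + z²)/2`, it is bounded and has limits `∓ℓ` at `±∞`, with `ℓ > 0`. The profile
is `g(z) = g₀(μ z)/μ⁵` with `μ⁵ = ℓ`, for which `(g - z⁵) g' = μ⁻⁸ z`.
-/

open Filter MeasureTheory unitInterval Topology
open scoped ContDiff

namespace ShockProfile

/-! ### The averaging operator -/

lemma integrable_of_cont {f : I → ℝ} (hf : Continuous f) : Integrable f :=
  hf.integrable_of_hasCompactSupport (HasCompactSupport.of_compactSpace f)

/-- The function `τ ↦ ∫₀¹ t⁵ τ⁴ x(t τ) dt` on `[0, 1]`. -/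
noncomputable def averageFun (x : C(I, ℝ)) : C(I, ℝ) where
  toFun τ := ∫ t : I, (t : ℝ) ^ 5 * (τ : ℝ) ^ 4 * x (t * τ)
  continuous_toFun := by
    have h := continuous_parametric_integral_of_continuous (μ := (volume : Measure I))
      (f := fun (τ : I) (t : I) => (t : ℝ) ^ 5 * (τ : ℝ) ^ 4 * x (t * τ)) (s := Set.univ)
      (by dsimp [Function.uncurry_def]; fun_prop) isCompact_univ
    simpa using h

lemma averageFun_apply (x : C(I, ℝ)) (τ : I) :
    averageFun x τ = ∫ t : I, (t : ℝ) ^ 5 * (τ : ℝ) ^ 4 * x (t * τ) := rfl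

lemma integrable_kernel (x : C(I, ℝ)) (τ : I) :
    Integrable (fun t : I => (t : ℝ) ^ 5 * (τ : ℝ) ^ 4 * x (t * τ)) :=
  integrable_of_cont (by fun_prop)

lemma averageFun_norm_le (x : C(I, ℝ)) : ‖averageFun x‖ ≤ 1 * ‖x‖ := by
  rw [one_mul, ContinuousMap.norm_le _ (norm_nonneg _)]
  intro τ
  rw [averageFun_apply]
  have h := norm_integral_le_of_norm_le_const (μ := (volume : Measure I)) (C := ‖x‖)
    (f := fun t : I => (t : ℝ) ^ 5 * (τ : ℝ) ^ 4 * x (t * τ)) (ae_of_all _ fun t => by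
      rw [norm_mul, norm_mul, norm_pow, norm_pow, Real.norm_of_nonneg t.2.1,
        Real.norm_of_nonneg τ.2.1]
      have h1 : (t : ℝ) ^ 5 ≤ 1 := pow_le_one₀ t.2.1 t.2.2
      have h2 : (τ : ℝ) ^ 4 ≤ 1 := pow_le_one₀ τ.2.1 τ.2.2
      have h3 : (t : ℝ) ^ 5 * (τ : ℝ) ^ 4 ≤ 1 := mul_le_one₀ h1 (pow_nonneg τ.2.1 _) h2
      calc _ ≤ 1 * ‖x‖ := by
            gcongr
            exact x.norm_coe_le_norm _
        _ = ‖x‖ := one_mul _)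
  simpa using h

/-- The operator `M` with `(M x)(τ) = ∫₀¹ t⁵ τ⁴ x(t τ) dt`, as a continuous linear map on
`C([0, 1])`. -/
noncomputable def average : C(I, ℝ) →L[ℝ] C(I, ℝ) :=
  LinearMap.mkContinuous
    { toFun := averageFun
      map_add' := fun x y => by
        ext τ
        simp only [ContinuousMap.add_apply, averageFun_apply, mul_add]
        exact integral_add (integrable_kernel x τ) (integrable_kernel y τ)
      map_smul' := fun c x => by
        ext τ
        simp only [ContinuousMap.smul_apply, averageFun_apply, smul_eq_mul, RingHom.id_apply]
        rw [← integral_const_mul]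
        congr 1 with t
        ring } 1 averageFun_norm_le

lemma average_apply (x : C(I, ℝ)) (τ : I) :
    average x τ = ∫ t : I, (t : ℝ) ^ 5 * (τ : ℝ) ^ 4 * x (t * τ) := rfl

lemma average_mono {x y : C(I, ℝ)} (h : ∀ τ, x τ ≤ y τ) (τ : I) : average x τ ≤ average y τ := by
  rw [average_apply, average_apply]
  refine integral_mono (integrable_kernel x τ) (integrable_kernel y τ) fun t => ?_
  have := t.2.1
  have := τ.2.1
  have := h (t * τ)
  dsimp only
  gcongr

lemma average_nonneg {x : C(I, ℝ)} (h : ∀ τ, 0 ≤ x τ) (τ : I) : 0 ≤ average x τ := by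
  simpa using average_mono (x := 0) h τ

/-- `M` intertwines dilations: `r⁴ M (x(· r)) = (M x)(· r)`. -/
lemma average_scale (x : C(I, ℝ)) (r s : I) :
    (r : ℝ) ^ 4 * average (x.comp ⟨fun s => s * r, by fun_prop⟩) s = average x (s * r) := by
  rw [average_apply, average_apply, ← integral_const_mul]
  congr 1 with t
  simp [mul_assoc]
  ring

/-! ### The quadratic equation `x² = 1 + c M x` in `C([0, 1])` -/

/-- The map `φ ↦ ½ log (1 + c M exp φ)`, whose fixed points are the logarithms of the positive
solutions of `x² = 1 + c M x`. -/
noncomputable def logStep (c : ℝ) (hc : 0 ≤ c) (φ : C(I, ℝ)) : C(I, ℝ) where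
  toFun τ := (1 / 2) * Real.log (1 + c * average ((ContinuousMap.mk Real.exp).comp φ) τ)
  continuous_toFun := by
    refine continuous_const.mul (Continuous.log (by fun_prop) fun τ => ?_)
    have := average_nonneg (x := (ContinuousMap.mk Real.exp).comp φ)
      (fun τ => (Real.exp_pos _).le) τ
    positivity

lemma logStep_apply {c : ℝ} (hc : 0 ≤ c) (φ : C(I, ℝ)) (τ : I) : logStep c hc φ τ
    = (1 / 2) * Real.log (1 + c * average ((ContinuousMap.mk Real.exp).comp φ) τ) := rfl

/-- If `φ ≤ ψ + d` then `1 + c M exp φ ≤ e^d (1 + c M exp ψ)`; the factor `½` in front of the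
logarithm gives the contraction constant. -/
lemma logStep_le {c : ℝ} (hc : 0 ≤ c) (φ ψ : C(I, ℝ)) (τ : I) :
    logStep c hc φ τ - logStep c hc ψ τ ≤ (1 / 2) * dist φ ψ := by
  have key : ∀ x : C(I, ℝ), 0 < 1 + c * average ((ContinuousMap.mk Real.exp).comp x) τ := fun x => by
    have := average_nonneg (x := (ContinuousMap.mk Real.exp).comp x)
      (fun τ => (Real.exp_pos _).le) τ
    positivity
  have h1 : average ((ContinuousMap.mk Real.exp).comp φ) τ
      ≤ Real.exp (dist φ ψ) * average ((ContinuousMap.mk Real.exp).comp ψ) τ := by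
    have h := average_mono (x := (ContinuousMap.mk Real.exp).comp φ)
      (y := Real.exp (dist φ ψ) • (ContinuousMap.mk Real.exp).comp ψ) (fun s => by
        simp only [ContinuousMap.comp_apply, ContinuousMap.coe_mk, ContinuousMap.smul_apply,
          smul_eq_mul, ← Real.exp_add, Real.exp_le_exp]
        have := (le_abs_self _).trans ((Real.dist_eq (φ s) (ψ s)).symm.le.trans
          (ContinuousMap.dist_apply_le_dist s))
        linarith) τ
    simpa using h
  have h2 : 1 + c * average ((ContinuousMap.mk Real.exp).comp φ) τ
      ≤ Real.exp (dist φ ψ) * (1 + c * average ((ContinuousMap.mk Real.exp).comp ψ) τ) := by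
    have := mul_le_mul_of_nonneg_left h1 hc
    have := Real.one_le_exp (dist_nonneg (x := φ) (y := ψ))
    nlinarith
  have h3 := Real.log_le_log (key φ) h2
  rw [Real.log_mul (Real.exp_pos _).ne' (key ψ).ne', Real.log_exp] at h3
  rw [logStep_apply, logStep_apply]
  linarith

lemma contracting_logStep {c : ℝ} (hc : 0 ≤ c) : ContractingWith (1 / 2) (logStep c hc) := by
  refine ⟨by norm_num, LipschitzWith.of_dist_le_mul fun φ ψ => ?_⟩
  rw [ContinuousMap.dist_le (by positivity)]
  intro τ
  rw [Real.dist_eq, abs_le]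
  have h1 := logStep_le hc φ ψ τ
  have h2 := logStep_le hc ψ φ τ
  rw [dist_comm] at h2
  push_cast
  constructor <;> linarith

/-- `x` is a positive solution of `x² = 1 + c M x` in `C([0, 1])`. -/
def IsSol_s2 (c : ℝ) (x : C(I, ℝ)) : Prop :=
  (∀ τ, 0 < x τ) ∧ x * x = 1 + c • average x

lemma IsSol_s2.apply {c : ℝ} {x : C(I, ℝ)} (h : IsSol_s2 c x) (τ : I) :
    x τ * x τ = 1 + c * average x τ := by
  simpa using DFunLike.congr_fun h.2 τ

lemma exists_isSol {c : ℝ} (hc : 0 ≤ c) : ∃ x, IsSol_s2 c x := by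
  obtain ⟨φ, hφ⟩ : ∃ φ, logStep c hc φ = φ :=
    ⟨_, (contracting_logStep hc).fixedPoint_isFixedPt⟩
  refine ⟨(ContinuousMap.mk Real.exp).comp φ, fun τ => Real.exp_pos _, ?_⟩
  ext τ
  have h : (1 / 2) * Real.log (1 + c * average ((ContinuousMap.mk Real.exp).comp φ) τ) = φ τ :=
    DFunLike.congr_fun hφ τ
  have hpos : 0 < 1 + c * average ((ContinuousMap.mk Real.exp).comp φ) τ := by
    have := average_nonneg (x := (ContinuousMap.mk Real.exp).comp φ)
      (fun τ => (Real.exp_pos _).le) τ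
    positivity
  have h2 : Real.exp (φ τ) * Real.exp (φ τ)
      = 1 + c * average ((ContinuousMap.mk Real.exp).comp φ) τ := by
    rw [← Real.exp_add, ← h, ← add_mul, add_halves, one_mul, Real.exp_log hpos]
  simpa using h2

lemma IsSol_s2.unique {c : ℝ} (hc : 0 ≤ c) {x y : C(I, ℝ)} (hx : IsSol_s2 c x) (hy : IsSol_s2 c y) :
    x = y := by
  have key : ∀ x, IsSol_s2 c x → ∃ φ : C(I, ℝ), (∀ τ, x τ = Real.exp (φ τ)) ∧
      Function.IsFixedPt (logStep c hc) φ := by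
    intro x hx
    let φ : C(I, ℝ) := ⟨fun τ => Real.log (x τ), x.continuous.log fun τ => (hx.1 τ).ne'⟩
    have hφ : ∀ τ, x τ = Real.exp (φ τ) := fun τ => (Real.exp_log (hx.1 τ)).symm
    refine ⟨φ, hφ, ?_⟩
    have hxφ : (ContinuousMap.mk Real.exp).comp φ = x := by
      ext τ
      exact (hφ τ).symm
    ext τ
    change (1 / 2) * Real.log (1 + c * average ((ContinuousMap.mk Real.exp).comp φ) τ) = _
    rw [hxφ, ← hx.apply, Real.log_mul (hx.1 τ).ne' (hx.1 τ).ne']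
    change _ = Real.log (x τ)
    ring
  obtain ⟨φ, hφ, hφ'⟩ := key x hx
  obtain ⟨ψ, hψ, hψ'⟩ := key y hy
  ext τ
  rw [hφ, hψ, (contracting_logStep hc).fixedPoint_unique' hφ' hψ']

lemma IsSol_s2.one_le {c : ℝ} (hc : 0 ≤ c) {x : C(I, ℝ)} (hx : IsSol_s2 c x) (τ : I) : 1 ≤ x τ := by
  have h1 := hx.apply τ
  have h2 := mul_nonneg hc (average_nonneg (fun τ => (hx.1 τ).le) τ)
  nlinarith [hx.1 τ]

lemma IsSol_s2.scale {c : ℝ} {x : C(I, ℝ)} (hx : IsSol_s2 c x) (r : I) :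
    IsSol_s2 (c * r ^ 4) (x.comp ⟨fun s => s * r, by fun_prop⟩) := by
  refine ⟨fun τ => hx.1 _, ?_⟩
  ext s
  have h := hx.apply (s * r)
  rw [← average_scale] at h
  simpa [mul_assoc] using h

/-! ### Analytic dependence on the parameter -/

lemma isInvertible_mul {x y : C(I, ℝ)} (h : x * y = 1) :
    (ContinuousLinearMap.mul ℝ C(I, ℝ) x).IsInvertible := by
  refine ContinuousLinearMap.IsInvertible.of_inverse
    (g := ContinuousLinearMap.mul ℝ C(I, ℝ) y) ?_ ?_
  · ext1 v
    simp [← mul_assoc, h]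
  · ext1 v
    simp [← mul_assoc, mul_comm y x, h]

lemma isInvertible_one_sub {S : C(I, ℝ) →L[ℝ] C(I, ℝ)} (h : ‖S‖ < 1) :
    (1 - S).IsInvertible := by
  obtain ⟨u, hu⟩ : IsUnit (1 - S) := (Units.oneSub S h).isUnit
  rw [← hu]
  exact ContinuousLinearMap.IsInvertible.of_inverse (g := ↑u⁻¹) u.mul_inv u.inv_mul

/-- The linearization of `x² - c M x` at a positive solution is invertible. It factors as
`2x² · (1 - S) · x⁻¹` with `S v = (c / 2x²) M (x v)`, and `|S v| ≤ ‖v‖ c M x / (2x²)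
= ‖v‖ (x² - 1) / (2x²) ≤ ‖v‖ / 2`. -/
lemma IsSol_s2.isInvertible {c : ℝ} (hc : 0 ≤ c) {x : C(I, ℝ)} (hx : IsSol_s2 c x) :
    ((2 : ℝ) • ContinuousLinearMap.mul ℝ C(I, ℝ) x - c • average).IsInvertible := by
  let y : C(I, ℝ) := ⟨fun τ => (x τ)⁻¹, x.continuous.inv₀ fun τ => (hx.1 τ).ne'⟩
  have hxy : x * y = 1 := by
    ext τ
    exact mul_inv_cancel₀ (hx.1 τ).ne'
  let m := ContinuousLinearMap.mul ℝ C(I, ℝ)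
  let S : C(I, ℝ) →L[ℝ] C(I, ℝ) := (c / 2) • (m (y * y) ∘L average ∘L m x)
  have hS : ‖S‖ ≤ 1 / 2 := by
    refine ContinuousLinearMap.opNorm_le_bound _ (by norm_num) fun v => ?_
    rw [ContinuousMap.norm_le _ (by positivity)]
    intro τ
    have hle : |average (x * v) τ| ≤ ‖v‖ * average x τ := by
      have hv : ∀ s, |v s| ≤ ‖v‖ := fun s => v.norm_coe_le_norm s
      have h1 := average_mono (x := x * v) (y := ‖v‖ • x) (fun s => by
        have := (abs_le.1 (hv s)).2
        have := hx.1 s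
        simp only [ContinuousMap.mul_apply, ContinuousMap.smul_apply, smul_eq_mul]
        nlinarith) τ
      have h2 := average_mono (x := (-‖v‖) • x) (y := x * v) (fun s => by
        have := (abs_le.1 (hv s)).1
        have := hx.1 s
        simp only [ContinuousMap.mul_apply, ContinuousMap.smul_apply, smul_eq_mul]
        nlinarith) τ
      simp only [map_smul, ContinuousMap.smul_apply, smul_eq_mul] at h1 h2
      rw [abs_le]
      constructor <;> linarith
    have hval : S v τ = (c * average (x * v) τ) / (2 * (x τ * x τ)) := by
      change (c / 2) * ((x τ)⁻¹ * (x τ)⁻¹ * average (x * v) τ) = _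
      have := (hx.1 τ).ne'
      field_simp
    have hxp := hx.1 τ
    rw [hval, Real.norm_eq_abs, abs_div, abs_mul, abs_of_nonneg hc,
      abs_of_pos (a := 2 * (x τ * x τ)) (by positivity), div_le_iff₀ (by positivity), hx.apply]
    have := mul_le_mul_of_nonneg_left hle hc
    have := norm_nonneg v
    nlinarith
  have hfac : (2 : ℝ) • m x - c • average
      = m ((2 : ℝ) • (x * x)) ∘L (1 - S) ∘L m y := by
    ext v τ
    have := (hx.1 τ).ne'
    have hv : x * (y * v) = v := by rw [← mul_assoc, hxy, one_mul]
    change 2 * (x τ * v τ) - c * average v τ = (2 * (x τ * x τ)) * ((x τ)⁻¹ * v τ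
      - (c / 2) * ((x τ)⁻¹ * (x τ)⁻¹ * average (x * (y * v)) τ))
    rw [hv]
    field_simp
  rw [hfac]
  refine (isInvertible_mul (y := (1 / 2 : ℝ) • (y * y)) ?_).comp
    ((isInvertible_one_sub (hS.trans_lt (by norm_num))).comp
      (isInvertible_mul (y := x) (by rw [mul_comm, hxy])))
  rw [smul_mul_smul_comm, mul_mul_mul_comm, hxy]
  norm_num

/-- Near `c`, positive solutions can be chosen to depend analytically on the parameter. -/
lemma IsSol_s2.exists_analytic {c : ℝ} (hc : 0 ≤ c) {x : C(I, ℝ)} (hx : IsSol_s2 c x) :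
    ∃ ψ : ℝ → C(I, ℝ), ContDiffAt ℝ ω ψ c ∧ ∀ᶠ d in 𝓝 c, IsSol_s2 d (ψ d) := by
  let f : ℝ × C(I, ℝ) → C(I, ℝ) := fun p => p.2 * p.2 - p.1 • average p.2
  have hf : ContDiffAt ℝ ω f (c, x) := by
    apply ContDiff.contDiffAt
    exact (contDiff_snd.mul contDiff_snd).sub
      (contDiff_fst.smul (average.contDiff.comp contDiff_snd))
  have hd : fderiv ℝ f (c, x) ∘L .inr ℝ ℝ C(I, ℝ)
      = (2 : ℝ) • ContinuousLinearMap.mul ℝ C(I, ℝ) x - c • average := by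
    have h1 : HasFDerivAt f (fderiv ℝ f (c, x)) (c, x) :=
      (hf.differentiableAt (by simp)).hasFDerivAt
    have h2 : HasFDerivAt (fun v : C(I, ℝ) => (c, v)) (.inr ℝ ℝ C(I, ℝ)) x :=
      hasFDerivAt_prodMk_right c x
    have h3 : HasFDerivAt (fun v : C(I, ℝ) => v * v - c • average v)
        (fderiv ℝ f (c, x) ∘L .inr ℝ ℝ C(I, ℝ)) x := h1.comp x h2
    have h4 := ((hasFDerivAt_id (𝕜 := ℝ) x).mul (hasFDerivAt_id (𝕜 := ℝ) x)).sub
      ((average.hasFDerivAt (x := x)).const_smul c)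
    refine h3.unique (h4.congr_fderiv ?_)
    ext v τ
    simp
    ring
  have hinv := hx.isInvertible hc
  rw [← hd] at hinv
  have hω : (ω : WithTop ℕ∞) ≠ 0 := by simp
  refine ⟨hf.implicitFunction hω hinv, hf.contDiffAt_implicitFunction hω hinv, ?_⟩
  have hcont := (hf.contDiffAt_implicitFunction hω hinv).continuousAt
  have hself : hf.implicitFunction hω hinv c = x := hf.implicitFunction_apply_self hω hinv
  -- `x ≥ 1`, so everything within distance `1` of `x` is positive
  have hnear : ∀ᶠ d in 𝓝 c, dist (hf.implicitFunction hω hinv d) x < 1 := by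
    have := hcont.eventually (Metric.ball_mem_nhds _ one_pos)
    simp only [hself] at this
    exact this
  filter_upwards [hf.eventually_apply_implicitFunction hω hinv, hnear] with d h1 h2
  refine ⟨fun τ => ?_, ?_⟩
  · have h3 := (ContinuousMap.dist_apply_le_dist (f := hf.implicitFunction hω hinv d)
      (g := x) τ).trans_lt h2
    rw [Real.dist_eq, abs_lt] at h3
    linarith [hx.one_le hc τ]
  · have h4 : x * x - c • average x = 1 := by rw [hx.2]; abel
    change _ * _ - d • average _ = x * x - c • average x at h1
    rw [h4] at h1
    rw [← h1]
    abel

/-! ### The function `k` -/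

/-- The positive solution of `x² = 1 + 10 z⁴ M x`. -/
noncomputable def sol (z : ℝ) : C(I, ℝ) :=
  (exists_isSol (c := 10 * z ^ 4) (by positivity)).choose

lemma isSol_sol (z : ℝ) : IsSol_s2 (10 * z ^ 4) (sol z) :=
  (exists_isSol (c := 10 * z ^ 4) (by positivity)).choose_spec

/-- The solution of `k(z)² = 1 + 10 z⁴ ∫₀¹ t⁵ k(t z) dt`, obtained as the endpoint value of `sol z`. -/
noncomputable def k (z : ℝ) : ℝ := sol z 1

/-- Dilating `sol z` by `t` gives a solution for the parameter `t z`, so by uniqueness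
`sol z` is `k` restricted to the segment from `0` to `z`. -/
lemma sol_apply (z : ℝ) (t : I) : sol z t = k (t * z) := by
  have h1 := (isSol_sol z).scale t
  have h2 := isSol_sol (t * z)
  rw [show 10 * ((t : ℝ) * z) ^ 4 = 10 * z ^ 4 * t ^ 4 by ring] at h2
  have h := DFunLike.congr_fun (h1.unique (by positivity) h2) 1
  simpa [k] using h

lemma k_neg (z : ℝ) : k (-z) = k z := by
  have h := isSol_sol (-z)
  rw [show 10 * (-z) ^ 4 = 10 * z ^ 4 by ring] at h
  rw [k, k, h.unique (by positivity) (isSol_sol z)]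

lemma one_le_k (z : ℝ) : 1 ≤ k z := (isSol_sol z).one_le (by positivity) 1

lemma analyticAt_k (z : ℝ) : AnalyticAt ℝ k z := by
  obtain ⟨ψ, hψ, hev⟩ := (isSol_sol z).exists_analytic (by positivity)
  have hq : ContDiffAt ℝ ω (fun s : ℝ => 10 * s ^ 4) z := by fun_prop
  have h1 : ContDiffAt ℝ ω (fun s : ℝ => ψ (10 * s ^ 4)) z := ContDiffAt.comp z hψ hq
  have h2 : ContDiffAt ℝ ω (fun s : ℝ => ψ (10 * s ^ 4) 1) z :=
    (ContinuousMap.evalCLM (R := ℝ) (M := ℝ) (1 : I)).contDiff.contDiffAt.comp z h1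
  refine (h2.congr_of_eventuallyEq ?_).analyticAt
  filter_upwards [hq.continuousAt.eventually hev] with s hs
  rw [k, (isSol_sol s).unique (by positivity) hs]

lemma continuous_k : Continuous k :=
  continuous_iff_continuousAt.2 fun z => (analyticAt_k z).continuousAt

lemma integral_unitInterval (f : ℝ → ℝ) : ∫ t : I, f t = ∫ t in (0 : ℝ)..1, f t := by
  rw [intervalIntegral.integral_of_le zero_le_one, ← integral_Icc_eq_integral_Ioc]
  exact integral_subtype measurableSet_Icc f

lemma k_sq (z : ℝ) : k z * k z = 1 + 10 * z ^ 4 * ∫ t in (0 : ℝ)..1, t ^ 5 * k (t * z) := by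
  have h := (isSol_sol z).apply 1
  rw [average_apply] at h
  simp only [mul_one, Set.Icc.coe_one, one_pow, sol_apply, one_mul] at h
  rwa [integral_unitInterval (fun t => t ^ 5 * k (t * z))] at h

lemma sq_mul_k_sq (z : ℝ) :
    z ^ 2 * k z ^ 2 = z ^ 2 + 10 * ∫ s in (0 : ℝ)..z, s ^ 5 * k s := by
  have h := intervalIntegral.mul_integral_comp_mul_right (a := 0) (b := 1)
    (f := fun s => s ^ 5 * k s) z
  simp only [zero_mul, one_mul] at h
  have h2 : ∫ t in (0 : ℝ)..1, (t * z) ^ 5 * k (t * z)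
      = z ^ 5 * ∫ t in (0 : ℝ)..1, t ^ 5 * k (t * z) := by
    rw [← intervalIntegral.integral_const_mul]
    congr 1 with t
    ring
  rw [← h, h2, sq (k z), k_sq]
  ring

lemma k_zero : k 0 = 1 := by
  have h := k_sq 0
  have := one_le_k 0
  norm_num at h
  nlinarith

/-! ### The profile before normalization -/

/-- The solution of `(g - z⁵) g' = z` given by `g = z⁵ - z k`. -/
noncomputable def g₀ (z : ℝ) : ℝ := z ^ 5 - z * k z

/-- For `z ≠ 0` this follows by differentiating `z² k² = z² + 10 ∫₀ᶻ s⁵ k(s) ds` and dividing by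
`2z`; at `z = 0` both sides equal `-1`. -/
lemma hasDerivAt_g₀ (z : ℝ) : HasDerivAt g₀ (-(k z)⁻¹) z := by
  have hk : HasDerivAt k (deriv k z) z := (analyticAt_k z).differentiableAt.hasDerivAt
  have hg : HasDerivAt g₀ (5 * z ^ 4 - (k z + z * deriv k z)) z := by
    have h : HasDerivAt g₀ _ z := (hasDerivAt_pow 5 z).sub ((hasDerivAt_id z).mul hk)
    exact h.congr_deriv (by simp)
  have hpos : 0 < k z := zero_lt_one.trans_le (one_le_k z)
  convert hg using 1
  rcases eq_or_ne z 0 with rfl | hz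
  · simp [k_zero]
  · have hL : HasDerivAt (fun s => s ^ 2 * k s ^ 2)
        (2 * z * k z ^ 2 + z ^ 2 * (2 * k z * deriv k z)) z := by
      have h : HasDerivAt (fun s => s ^ 2 * k s ^ 2) _ z := (hasDerivAt_pow 2 z).mul (hk.pow 2)
      exact h.congr_deriv (by simp)
    have hcont : Continuous fun s : ℝ => s ^ 5 * k s := by
      have := continuous_k
      fun_prop
    have hR : HasDerivAt (fun s => s ^ 2 * k s ^ 2) (2 * z + 10 * (z ^ 5 * k z)) z := by
      have h : HasDerivAt (fun s => s ^ 2 + 10 * ∫ u in (0 : ℝ)..s, u ^ 5 * k u) _ z :=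
        (hasDerivAt_pow 2 z).add
          ((intervalIntegral.integral_hasDerivAt_right (hcont.intervalIntegrable 0 z)
            (hcont.stronglyMeasurableAtFilter _ _) hcont.continuousAt).const_mul 10)
      simp only [funext sq_mul_k_sq]
      exact h.congr_deriv (by simp)
    have h := hL.unique hR
    have h' : k z * (k z + z * deriv k z - 5 * z ^ 4) = 1 := by
      have hz2 : 2 * z ≠ 0 := by simpa using hz
      apply mul_left_cancel₀ hz2
      linear_combination h
    have : (k z)⁻¹ = k z + z * deriv k z - 5 * z ^ 4 := (eq_inv_of_mul_eq_one_right h').symm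
    rw [this]
    ring

lemma k_lower (z : ℝ) : (1 + z ^ 2) / 2 ≤ k z := by
  have hint : 1 / 6 ≤ ∫ t in (0 : ℝ)..1, t ^ 5 * k (t * z) := by
    have h : ∫ t in (0 : ℝ)..1, t ^ 5 ≤ ∫ t in (0 : ℝ)..1, t ^ 5 * k (t * z) := by
      have := continuous_k
      refine intervalIntegral.integral_mono_on zero_le_one
        (Continuous.intervalIntegrable (by fun_prop) _ _)
        (Continuous.intervalIntegrable (by fun_prop) _ _) fun t ht => ?_
      exact le_mul_of_one_le_right (pow_nonneg ht.1 5) (one_le_k _)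
    rw [integral_pow] at h
    norm_num at h ⊢
    exact h
  have h1 : 1 + z ^ 4 ≤ k z * k z := by
    rw [k_sq]
    have : 0 ≤ z ^ 4 := by positivity
    nlinarith
  refine (pow_le_pow_iff_left₀ (by positivity) (zero_le_one.trans (one_le_k z))
    two_ne_zero).1 ?_
  nlinarith [sq_nonneg (z ^ 2 - 1)]

lemma g₀_neg (z : ℝ) : g₀ (-z) = -g₀ z := by
  rw [g₀, g₀, k_neg]
  ring

lemma strictAnti_g₀ : StrictAnti g₀ := by
  apply strictAnti_of_deriv_neg
  intro z
  rw [(hasDerivAt_g₀ z).deriv]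
  have : 0 < k z := zero_lt_one.trans_le (one_le_k z)
  simpa using this

lemma g₀_zero : g₀ 0 = 0 := by simp [g₀]

/-- `g₀' = -1/k ≥ -2/(1 + z²)`, so `g₀ + 2 arctan` is monotone. -/
lemma g₀_lower (z : ℝ) : -Real.pi ≤ g₀ z := by
  have hmono : Monotone fun s => g₀ s + 2 * Real.arctan s := by
    have hd : ∀ s, HasDerivAt (fun s => g₀ s + 2 * Real.arctan s)
        (-(k s)⁻¹ + 2 * (1 / (1 + s ^ 2))) s := fun s =>
      (hasDerivAt_g₀ s).add ((Real.hasDerivAt_arctan s).const_mul 2)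
    refine monotone_of_deriv_nonneg (fun s => (hd s).differentiableAt) fun s => ?_
    rw [(hd s).deriv]
    have h := inv_anti₀ (by positivity) (k_lower s)
    rw [inv_div] at h
    have : 2 * (1 / (1 + s ^ 2)) = 2 / (1 + s ^ 2) := by ring
    linarith
  rcases le_total 0 z with hz | hz
  · have h := hmono hz
    simp only [g₀_zero, Real.arctan_zero] at h
    have := Real.arctan_lt_pi_div_two z
    linarith
  · have h := strictAnti_g₀.antitone hz
    rw [g₀_zero] at h
    linarith [Real.pi_pos]

lemma exists_limit : ∃ ℓ : ℝ, 0 < ℓ ∧ Tendsto g₀ atTop (𝓝 (-ℓ)) := by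
  have hbdd : BddBelow (Set.range g₀) := ⟨-Real.pi, by rintro _ ⟨z, rfl⟩; exact g₀_lower z⟩
  refine ⟨-⨅ z, g₀ z, ?_, ?_⟩
  · have h1 := ciInf_le hbdd 1
    have h2 := strictAnti_g₀ one_pos
    rw [g₀_zero] at h2
    linarith
  · rw [neg_neg]
    exact tendsto_atTop_ciInf strictAnti_g₀.antitone hbdd

lemma analyticAt_g₀ (z : ℝ) : AnalyticAt ℝ g₀ z :=
  (analyticAt_id.pow 5).sub (analyticAt_id.mul (analyticAt_k z))

/-! ### The fifth-order equation -/

/-- The fourth derivative of `(g - z⁵) g' = a z`, expanded by the Leibniz rule. -/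
lemma ode_of_first_integral {g : ℝ → ℝ} (hg : AnalyticOnNhd ℝ g Set.univ) {a : ℝ}
    (h : ∀ s, g s * deriv g s = s ^ 5 * deriv g s + a * s) (z : ℝ) :
    iteratedDeriv 4 (fun s => g s * deriv g s) z
      = 120 * z * deriv g z + 240 * z^2 * iteratedDeriv 2 g z
        + 120 * z^3 * iteratedDeriv 3 g z + 20 * z^4 * iteratedDeriv 4 g z
        + z^5 * iteratedDeriv 5 g z := by
  have hd : ContDiffAt ℝ 4 (deriv g) z := (hg.deriv z trivial).contDiffAt
  have hp : ContDiffAt ℝ 4 (fun s : ℝ => s ^ 5) z := by fun_prop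
  rw [funext h, iteratedDeriv_fun_add (hp.mul hd) (by fun_prop), iteratedDeriv_fun_mul hp hd,
    iteratedDeriv_const_mul_field]
  have hid : iteratedDeriv 4 (fun s : ℝ => s) z = 0 := by simp [iteratedDeriv_fun_id]
  simp only [hid, Finset.sum_range_succ, Finset.sum_range_zero, iteratedDeriv_pow,
    ← iteratedDeriv_succ', Nat.reduceSub, Nat.reduceAdd]
  simp [Nat.descFactorial, Nat.choose]
  ring

end ShockProfile

open ShockProfile in
/-- There exists a real-analytic, odd function `g : ℝ → ℝ`, positive for `z < 0`,
monotone decreasing, with `g → 1` at `-∞` and `g → -1` at `+∞`, solving the fifth-order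
blow-up similarity ODE of the equation `u_ttttt = (u·u_x)_xxxx`:
`(g·g')⁽⁴⁾ = 120·z·g' + 240·z²·g'' + 120·z³·g''' + 20·z⁴·g⁽⁴⁾ + z⁵·g⁽⁵⁾`. -/
theorem exists_shock_profile_fifth_order_in_time :
    ∃ g : ℝ → ℝ,
      AnalyticOnNhd ℝ g Set.univ ∧
      (∀ z : ℝ, g (-z) = -g z) ∧
      (∀ z : ℝ, z < 0 → 0 < g z) ∧
      Antitone g ∧
      Tendsto g atBot (nhds 1) ∧
      Tendsto g atTop (nhds (-1)) ∧
      (∀ z : ℝ,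
        iteratedDeriv 4 (fun s => g s * deriv g s) z
          = 120 * z * deriv g z + 240 * z^2 * iteratedDeriv 2 g z
            + 120 * z^3 * iteratedDeriv 3 g z + 20 * z^4 * iteratedDeriv 4 g z
            + z^5 * iteratedDeriv 5 g z) := by
  obtain ⟨ℓ, hℓ, hlim⟩ := exists_limit
  let μ : ℝ := ℓ ^ (1 / 5 : ℝ)
  have hμ : 0 < μ := Real.rpow_pos_of_pos hℓ _
  have hμ5 : μ ^ 5 = ℓ := by
    rw [← Real.rpow_natCast, ← Real.rpow_mul hℓ.le]
    norm_num
  have hg : AnalyticOnNhd ℝ (fun z => g₀ (μ * z) / μ ^ 5) Set.univ := fun z _ =>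
    ((analyticAt_g₀ (μ * z)).fun_comp (analyticAt_const.mul analyticAt_id)).div_const
  have hodd : ∀ z, g₀ (μ * -z) / μ ^ 5 = -(g₀ (μ * z) / μ ^ 5) := fun z => by
    rw [mul_neg, g₀_neg, neg_div]
  have htop : Tendsto (fun z => g₀ (μ * z) / μ ^ 5) atTop (nhds (-1)) := by
    have h := (hlim.comp (tendsto_id.const_mul_atTop hμ)).div_const (μ ^ 5)
    rwa [hμ5, neg_div, div_self hℓ.ne', ← hμ5] at h
  refine ⟨fun z => g₀ (μ * z) / μ ^ 5, hg, hodd, fun z hz => ?_, fun x y hxy => ?_, ?_, htop, ?_⟩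
  · have h := strictAnti_g₀ (mul_neg_of_pos_of_neg hμ hz)
    rw [g₀_zero] at h
    positivity
  · have h := strictAnti_g₀.antitone (mul_le_mul_of_nonneg_left hxy hμ.le)
    dsimp only
    gcongr
  · have h := (htop.comp tendsto_neg_atBot_atTop).neg
    rw [neg_neg] at h
    refine h.congr fun z => ?_
    simp only [Function.comp_apply, hodd, neg_neg]
  · refine ode_of_first_integral hg (a := (μ ^ 8)⁻¹) fun s => ?_
    have hd : HasDerivAt (fun z => g₀ (μ * z) / μ ^ 5) (-(k (μ * s))⁻¹ * μ / μ ^ 5) s := by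
      have h1 : HasDerivAt (fun z => μ * z) μ s := by simpa using (hasDerivAt_id s).const_mul μ
      exact ((hasDerivAt_g₀ (μ * s)).comp s h1).div_const _
    have hk : k (μ * s) ≠ 0 := (zero_lt_one.trans_le (one_le_k _)).ne'
    rw [hd.deriv]
    simp only [g₀]
    field_simp
    ring
end
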